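/- GF-interpolant existence is decidable: given GF-formulas φ(x) and ψ(x), it is decidable whether there exists a GF-formula θ(x) with sig(θ) ⊆ sig(φ) ∩ sig(ψ), φ ⊨ θ, and θ ⊨ ψ; moreover the problem is in 3-EXPTIME, and in 2-EXPTIME if the maximal arity of relation symbols in the input is bounded by a constant. -/

import Mathlib

/-- A relational signature: relation symbols with arities, no function or
constant symbols. -/
structure Sig : Type 1 where
  Rel : Type
  arity : Rel → ℕ

/-- A relational structure for a signature. -/
structure Str (σ : Sig) : Type 1 where
  dom : Type
  interp : (R : σ.Rel) → (Fin (σ.arity R) → dom) → Prop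

/-- Update an assignment on all variables occurring in the list `ys`. -/
def updOn {D : Type} (v : ℕ → D) (ys : List ℕ) (w : ℕ → D) : ℕ → D :=
  fun n => if n ∈ ys then w n else v n

/-- `a ↦ b` is a partial `τ`-isomorphism between the tuples `a` (in `A`) and
`b` (in `B`). -/
def PartialIso {σ : Sig} (τ : Set σ.Rel) (A B : Str σ) {n : ℕ}
    (a : Fin n → A.dom) (b : Fin n → B.dom) : Prop :=
  (∀ i j : Fin n, a i = a j ↔ b i = b j) ∧
  ∀ R ∈ τ, ∀ t : Fin (σ.arity R) → Fin n, A.interp R (a ∘ t) ↔ B.interp R (b ∘ t)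

/-- Atomic formulas over named variables. -/
inductive Atomic (σ : Sig) : Type
  | eq : ℕ → ℕ → Atomic σ
  | rel : (R : σ.Rel) → (Fin (σ.arity R) → ℕ) → Atomic σ

namespace Atomic

def Sat {σ : Sig} (A : Str σ) : Atomic σ → (ℕ → A.dom) → Prop
  | .eq i j, v => v i = v j
  | .rel R t, v => A.interp R (fun k => v (t k))

def vars {σ : Sig} : Atomic σ → Finset ℕ
  | .eq i j => {i, j}
  | .rel _ t => Finset.image t Finset.univ

def sig {σ : Sig} : Atomic σ → Set σ.Rel
  | .eq _ _ => ∅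
  | .rel R _ => {R}

end Atomic

/-- Syntax of the guarded fragment: Boolean connectives and guarded
quantifiers `∃ ys (α ∧ φ)` and `∀ ys (α → φ)`. -/
inductive GF (σ : Sig) : Type
  | atom : Atomic σ → GF σ
  | not : GF σ → GF σ
  | and : GF σ → GF σ → GF σ
  | or : GF σ → GF σ → GF σ
  | gex : List ℕ → Atomic σ → GF σ → GF σ
  | gall : List ℕ → Atomic σ → GF σ → GF σ

namespace GF

def Sat {σ : Sig} (A : Str σ) : GF σ → (ℕ → A.dom) → Prop
  | .atom α, v => α.Sat A v
  | .not φ, v => ¬ Sat A φ v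
  | .and φ ψ, v => Sat A φ v ∧ Sat A ψ v
  | .or φ ψ, v => Sat A φ v ∨ Sat A ψ v
  | .gex ys α φ, v => ∃ w, α.Sat A (updOn v ys w) ∧ Sat A φ (updOn v ys w)
  | .gall ys α φ, v => ∀ w, α.Sat A (updOn v ys w) → Sat A φ (updOn v ys w)

/-- Free variables. -/
def fv {σ : Sig} : GF σ → Finset ℕ
  | .atom α => α.vars
  | .not φ => fv φ
  | .and φ ψ => fv φ ∪ fv ψ
  | .or φ ψ => fv φ ∪ fv ψ
  | .gex ys α φ => (α.vars ∪ fv φ).filter (fun m => m ∉ ys)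
  | .gall ys α φ => (α.vars ∪ fv φ).filter (fun m => m ∉ ys)

/-- The signature (set of relation symbols) of a formula. -/
def sig {σ : Sig} : GF σ → Set σ.Rel
  | .atom α => α.sig
  | .not φ => sig φ
  | .and φ ψ => sig φ ∪ sig ψ
  | .or φ ψ => sig φ ∪ sig ψ
  | .gex _ α φ => α.sig ∪ sig φ
  | .gall _ α φ => α.sig ∪ sig φ

/-- The guard of each quantifier contains all free variables of the formula in
its scope. -/
def WellGuarded {σ : Sig} : GF σ → Prop
  | .atom _ => True
  | .not φ => WellGuarded φ
  | .and φ ψ => WellGuarded φ ∧ WellGuarded ψ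
  | .or φ ψ => WellGuarded φ ∧ WellGuarded ψ
  | .gex _ α φ => fv φ ⊆ α.vars ∧ WellGuarded φ
  | .gall _ α φ => fv φ ⊆ α.vars ∧ WellGuarded φ

end GF

/-- A `τ`-guarded set: a singleton or the set of components of a tuple in the
interpretation of some `R ∈ τ`. -/
def GuardedSet {σ : Sig} (τ : Set σ.Rel) (A : Str σ) (G : Set A.dom) : Prop :=
  (∃ a, G = {a}) ∨ ∃ R ∈ τ, ∃ t : Fin (σ.arity R) → A.dom, A.interp R t ∧ G = Set.range t

/-- A `τ`-guarded tuple: all components lie in some `τ`-guarded set. -/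
def GuardedTuple {σ : Sig} (τ : Set σ.Rel) (A : Str σ) {n : ℕ} (a : Fin n → A.dom) : Prop :=
  ∃ G, GuardedSet τ A G ∧ ∀ i, a i ∈ G

/-- A pair of tuples of the same length in `A` and `B`, representing the
partial map sending the first tuple to the second. -/
def TuplePair {σ : Sig} (A B : Str σ) : Type :=
  Σ n : ℕ, (Fin n → A.dom) × (Fin n → B.dom)

/-- The back-and-forth conditions for the pair `a ↦ b` relative to a set `I`
of tuple pairs. -/
def ForthBack {σ : Sig} (τ : Set σ.Rel) (A B : Str σ) (I : Set (TuplePair A B))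
    {n : ℕ} (a : Fin n → A.dom) (b : Fin n → B.dom) : Prop :=
  (∀ (m : ℕ) (a' : Fin m → A.dom), GuardedTuple τ A a' →
    ∃ b' : Fin m → B.dom, (⟨m, a', b'⟩ : TuplePair A B) ∈ I ∧
      ∀ i j, a i = a' j → b i = b' j) ∧
  (∀ (m : ℕ) (b' : Fin m → B.dom), GuardedTuple τ B b' →
    ∃ a' : Fin m → A.dom, (⟨m, a', b'⟩ : TuplePair A B) ∈ I ∧
      ∀ i j, b i = b' j → a i = a' j)

/-- `I` is a GF(τ)-bisimulation between `A` and `B`. -/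
def IsGFBisim {σ : Sig} (τ : Set σ.Rel) (A B : Str σ) (I : Set (TuplePair A B)) : Prop :=
  ∀ p ∈ I, GuardedTuple τ A p.2.1 ∧ GuardedTuple τ B p.2.2 ∧
    PartialIso τ A B p.2.1 p.2.2 ∧ ForthBack τ A B I p.2.1 p.2.2

/-- `(A, a) ∼_{GF,τ} (B, b)`. -/
def GFBisimilar {σ : Sig} (τ : Set σ.Rel) (A B : Str σ) {n : ℕ}
    (a : Fin n → A.dom) (b : Fin n → B.dom) : Prop :=
  ∃ I, IsGFBisim τ A B I ∧ PartialIso τ A B a b ∧ ForthBack τ A B I a b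

/-- The pointed structure `(A, a)` satisfies `φ` (the tuple `a` is assigned to
the variables `0, …, n-1`). -/
def SatTupleGF {σ : Sig} (A : Str σ) (φ : GF σ) {n : ℕ} (a : Fin n → A.dom) : Prop :=
  ∀ v : ℕ → A.dom, (∀ i : Fin n, v i = a i) → φ.Sat A v

/-- `(A, a)` and `(B, b)` satisfy exactly the same GF(τ)-formulas. -/
def GFEquiv {σ : Sig} (τ : Set σ.Rel) (A B : Str σ) {n : ℕ}
    (a : Fin n → A.dom) (b : Fin n → B.dom) : Prop :=
  ∀ φ : GF σ, φ.WellGuarded → φ.sig ⊆ τ → φ.fv ⊆ Finset.range n →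
    (SatTupleGF A φ a ↔ SatTupleGF B φ b)

/-- Semantic entailment for GF formulas. -/
def GFEnt {σ : Sig} (φ ψ : GF σ) : Prop :=
  ∀ (A : Str σ) (v : ℕ → A.dom), φ.Sat A v → ψ.Sat A v

/-- Joint GF(τ)-consistency of two formulas with free variables among
`0, …, n-1`. -/
def JointGFCon {σ : Sig} (τ : Set σ.Rel) (n : ℕ) (φ ψ : GF σ) : Prop :=
  ∃ (A B : Str σ) (a : Fin n → A.dom) (b : Fin n → B.dom),
    SatTupleGF A φ a ∧ SatTupleGF B ψ b ∧ GFBisimilar τ A B a b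

/-- Existence of a GF-interpolant for `φ, ψ` (free variables among
`0, …, n-1`). -/
def HasGFInterpolant {σ : Sig} (n : ℕ) (φ ψ : GF σ) : Prop :=
  ∃ θ : GF σ, θ.WellGuarded ∧ θ.sig ⊆ φ.sig ∩ ψ.sig ∧
    θ.fv ⊆ Finset.range n ∧ GFEnt φ θ ∧ GFEnt θ ψ

/-- A Gödel numbering of atoms over the signature `⟨ℕ, ar⟩`. -/
def encAtom {ar : ℕ → ℕ} : Atomic ⟨ℕ, ar⟩ → ℕ
  | .eq i j => Nat.pair 0 (Nat.pair i j)
  | .rel R t => Nat.pair 1 (Nat.pair R (Encodable.encode (List.ofFn t)))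

/-- A Gödel numbering of GF formulas over the signature `⟨ℕ, ar⟩`. -/
def encGF {ar : ℕ → ℕ} : GF ⟨ℕ, ar⟩ → ℕ
  | .atom α => Nat.pair 0 (encAtom α)
  | .not φ => Nat.pair 1 (encGF φ)
  | .and φ ψ => Nat.pair 2 (Nat.pair (encGF φ) (encGF ψ))
  | .or φ ψ => Nat.pair 3 (Nat.pair (encGF φ) (encGF ψ))
  | .gex ys α φ =>
      Nat.pair 4 (Nat.pair (Encodable.encode ys) (Nat.pair (encAtom α) (encGF φ)))
  | .gall ys α φ =>
      Nat.pair 5 (Nat.pair (Encodable.encode ys) (Nat.pair (encAtom α) (encGF φ)))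


namespace GFI

variable {σ : Sig}

theorem atomic_congr (A : Str σ) (α : Atomic σ) (v v' : ℕ → A.dom)
    (h : ∀ x ∈ α.vars, v x = v' x) : α.Sat A v ↔ α.Sat A v' := by
  cases α with
  | eq i j =>
    simp only [Atomic.Sat]
    rw [h i (by simp [Atomic.vars]), h j (by simp [Atomic.vars])]
  | rel R t =>
    simp only [Atomic.Sat]
    have : (fun k => v (t k)) = fun k => v' (t k) := by
      funext k; exact h _ (by simp [Atomic.vars])
    rw [this]

theorem sat_congr (A : Str σ) (χ : GF σ) : ∀ (v v' : ℕ → A.dom)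
    (_ : ∀ x ∈ χ.fv, v x = v' x), χ.Sat A v ↔ χ.Sat A v' := by
  have key : ∀ (v v' : ℕ → A.dom) (ys : List ℕ) (α : Atomic σ) (F : Finset ℕ)
      (_ : ∀ x ∈ (α.vars ∪ F).filter (fun m => m ∉ ys), v x = v' x) (w : ℕ → A.dom),
      ∀ x ∈ α.vars ∪ F, updOn v ys w x = updOn v' ys w x := by
    intro v v' ys α F h w x hx
    simp only [updOn]
    split
    · rfl
    · exact h x (by simp only [Finset.mem_filter]; exact ⟨hx, by assumption⟩)
  induction χ with
  | atom α => intro v v' h; exact atomic_congr A α v v' h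
  | not χ ih => intro v v' h; simp only [GF.Sat]; rw [ih v v' h]
  | and χ ξ ih1 ih2 =>
    intro v v' h; simp only [GF.Sat]
    rw [ih1 v v' (fun x hx => h x (Finset.mem_union_left _ hx)),
      ih2 v v' (fun x hx => h x (Finset.mem_union_right _ hx))]
  | or χ ξ ih1 ih2 =>
    intro v v' h; simp only [GF.Sat]
    rw [ih1 v v' (fun x hx => h x (Finset.mem_union_left _ hx)),
      ih2 v v' (fun x hx => h x (Finset.mem_union_right _ hx))]
  | gex ys α χ ih =>
    intro v v' h; simp only [GF.Sat]
    refine exists_congr fun w => ?_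
    have k := key v v' ys α χ.fv h w
    rw [ih _ _ (fun x hx => k x (Finset.mem_union_right _ hx)),
      atomic_congr A α _ _ (fun x hx => k x (Finset.mem_union_left _ hx))]
  | gall ys α χ ih =>
    intro v v' h; simp only [GF.Sat]
    refine forall_congr' fun w => ?_
    have k := key v v' ys α χ.fv h w
    rw [ih _ _ (fun x hx => k x (Finset.mem_union_right _ hx)),
      atomic_congr A α _ _ (fun x hx => k x (Finset.mem_union_left _ hx))]

def isBase : GF σ → Prop
  | .atom _ => True
  | .gex _ _ _ => True
  | .gall _ _ _ => True
  | _ => False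

/-- closure of a set of formulas under subformulas and guards -/
structure ClosedL (L : Set (GF σ)) (w : ℕ) : Prop where
  eq01 : GF.atom (.eq 0 1) ∈ L
  wg : ∀ χ ∈ L, χ.WellGuarded
  not' : ∀ χ, GF.not χ ∈ L → χ ∈ L
  and' : ∀ χ ξ, GF.and χ ξ ∈ L → χ ∈ L ∧ ξ ∈ L
  or' : ∀ χ ξ, GF.or χ ξ ∈ L → χ ∈ L ∧ ξ ∈ L
  gex' : ∀ ys α χ, GF.gex ys α χ ∈ L → GF.atom α ∈ L ∧ χ ∈ L
  gall' : ∀ ys α χ, GF.gall ys α χ ∈ L → GF.atom α ∈ L ∧ χ ∈ L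
  fvw : ∀ χ ∈ L, ∀ x ∈ χ.fv, x < w

universe u

structure CData (σ : Sig) (w : ℕ) (Γ : Type u) (κ : Type) where
  val : Γ → GF σ ⊕ κ → (ℕ → Fin w) → Prop
  L : Set (GF σ)
  τ : Set σ.Rel

namespace CData
variable {w : ℕ} [NeZero w] {Γ : Type u} {κ : Type} (C : CData σ w Γ κ)

def two (i j : Fin w) : ℕ → Fin w := fun x => if x = 0 then i else j

def EqV (T : Γ) (i j : Fin w) : Prop := C.val T (.inl (.atom (.eq 0 1))) (two i j)

def supp : GF σ ⊕ κ → Set ℕ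
  | .inl χ => {x | x ∈ χ.fv}
  | .inr _ => {x | x < w}

def feat : Set (GF σ ⊕ κ) := fun f => match f with
  | .inl χ => χ ∈ C.L ∧ isBase χ
  | .inr _ => True

def Compat (T : Γ) (O : Fin w → Fin w → Prop) (T' : Γ) : Prop :=
  ∀ f ∈ C.feat, ∀ l l' : ℕ → Fin w, (∀ x ∈ supp (w := w) f, O (l x) (l' x)) →
    (C.val T f l ↔ C.val T' f l')

def cmp (ρ l : ℕ → Fin w) : ℕ → Fin w := fun x => ρ (l x)

def idA : ℕ → Fin w := fun x => Fin.ofNat w x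

def col (T : Γ) (k : κ) (ρ : ℕ → Fin w) : Prop := C.val T (.inr k) ρ

structure Sim (T : Γ) (ρ : ℕ → Fin w) (T' : Γ) (ρ' : ℕ → Fin w) : Prop where
  col : ∀ k l, C.col T k (cmp ρ l) ↔ C.col T' k (cmp ρ' l)
  eq : ∀ i j : Fin w, C.EqV T (ρ i) (ρ j) ↔ C.EqV T' (ρ' i) (ρ' j)
  rel : ∀ R ∈ C.τ, ∀ ℓ, GF.atom (.rel R ℓ) ∈ C.L → ∀ l,
    C.val T (.inl (.atom (.rel R ℓ))) (cmp ρ l) ↔ C.val T' (.inl (.atom (.rel R ℓ))) (cmp ρ' l)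

structure Cert : Prop where
  cl : ClosedL C.L w
  refl : ∀ T i, C.EqV T i i
  eqa : ∀ T x y l, GF.atom (.eq x y) ∈ C.L →
    (C.val T (.inl (.atom (.eq x y))) l ↔ C.EqV T (l x) (l y))
  cong : ∀ T, C.Compat T (C.EqV T) T
  rel : ∀ T R ℓ ℓ' l l', GF.atom (.rel R ℓ) ∈ C.L → GF.atom (.rel R ℓ') ∈ C.L →
    (∀ k, C.EqV T (l (ℓ k)) (l' (ℓ' k))) → C.val T (.inl (.atom (.rel R ℓ))) l →
    C.val T (.inl (.atom (.rel R ℓ'))) l'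
  not' : ∀ T χ l, GF.not χ ∈ C.L → (C.val T (.inl χ.not) l ↔ ¬ C.val T (.inl χ) l)
  and' : ∀ T χ ξ l, GF.and χ ξ ∈ C.L →
    (C.val T (.inl (χ.and ξ)) l ↔ (C.val T (.inl χ) l ∧ C.val T (.inl ξ) l))
  or' : ∀ T χ ξ l, GF.or χ ξ ∈ C.L →
    (C.val T (.inl (χ.or ξ)) l ↔ (C.val T (.inl χ) l ∨ C.val T (.inl ξ) l))
  gexi : ∀ T ys α χ l, GF.gex ys α χ ∈ C.L → C.val T (.inl (.atom α)) l →
    C.val T (.inl χ) l → C.val T (.inl (.gex ys α χ)) l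
  galle : ∀ T ys α χ l, GF.gall ys α χ ∈ C.L → C.val T (.inl (.gall ys α χ)) l →
    C.val T (.inl (.atom α)) l → C.val T (.inl χ) l
  gexw : ∀ T ys α χ l, GF.gex ys α χ ∈ C.L → C.val T (.inl (.gex ys α χ)) l →
    ∃ T' O l', C.Compat T O T' ∧ (∀ x ∈ α.vars, x ∉ ys → O (l x) (l' x)) ∧
      C.val T' (.inl (.atom α)) l' ∧ C.val T' (.inl χ) l'
  gallw : ∀ T ys α χ l, GF.gall ys α χ ∈ C.L → ¬ C.val T (.inl (.gall ys α χ)) l →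
    ∃ T' O l', C.Compat T O T' ∧ (∀ x ∈ α.vars, x ∉ ys → O (l x) (l' x)) ∧
      C.val T' (.inl (.atom α)) l' ∧ ¬ C.val T' (.inl χ) l'
  grel : ∀ T, ∀ R ∈ C.τ, ∀ ℓ l (ρ : ℕ → Fin w), GF.atom (.rel R ℓ) ∈ C.L →
    C.val T (.inl (.atom (.rel R ℓ))) l → (∀ m < w, ∃ k, ρ m = l (ℓ k)) → ∃ k, C.col T k ρ
  gconst : ∀ T j, ∃ k, C.col T k (fun _ => j)
  gsub : ∀ T k ρ, C.col T k ρ → ∀ l, ∃ k', C.col T k' (cmp ρ l)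
  sim : ∀ T T' k ρ ρ', C.col T k ρ → C.col T' k ρ' → C.Sim T ρ T' ρ'
  ext : ∀ T T1 k1 k0 ρ ρ' l, C.col T k1 ρ → C.col T1 k1 (cmp ρ' l) → C.col T1 k0 ρ' →
    ∃ T2 O, C.Compat T O T2 ∧ (∀ m < w, O (ρ m) (l m)) ∧ C.col T2 k0 idA
  glob : ∀ T T1 k0 ρ', C.col T1 k0 ρ' → ∃ T2 O, C.Compat T O T2 ∧ C.col T2 k0 idA

end CData
end GFI


namespace GFI
namespace CData
variable {σ : Sig} {w : ℕ} [NeZero w] {Γ : Type} {κ : Type} {C : CData σ w Γ κ}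

theorem supp_eq01 : supp (w := w) (κ := κ) (.inl (GF.atom (σ := σ) (.eq 0 1))) = {x | x = 0 ∨ x = 1} := by
  ext x; simp [supp, GF.fv, Atomic.vars]

theorem Compat.eqv (hC : C.Cert) {T T' : Γ} {O} (h : C.Compat T O T') {i j i' j' : Fin w}
    (hi : O i i') (hj : O j j') : C.EqV T i j ↔ C.EqV T' i' j' := by
  apply h (.inl (GF.atom (.eq 0 1))) ⟨hC.cl.eq01, trivial⟩
  rw [supp_eq01]
  rintro x (rfl | rfl) <;> simp [two, hi, hj]

theorem Cert.symm (hC : C.Cert) {T : Γ} {i j : Fin w} (h : C.EqV T i j) : C.EqV T j i :=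
  ((hC.cong T).eqv hC h (hC.refl T i)).1 (hC.refl T i)

theorem Cert.trans (hC : C.Cert) {T : Γ} {i j k : Fin w} (h : C.EqV T i j) (h' : C.EqV T j k) :
    C.EqV T i k :=
  ((hC.cong T).eqv hC (hC.symm h) (hC.refl T k)).1 h'

abbrev Node (w : ℕ) (Γ : Type) := List (Γ × (Fin w → Fin w → Prop))

def lab (T0 : Γ) : Node w Γ → Γ
  | [] => T0
  | (T, _) :: _ => T

variable (C) in
def Valid (T0 : Γ) : Node w Γ → Prop
  | [] => True
  | (T, O) :: p => Valid T0 p ∧ C.Compat (lab T0 p) O T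

variable (C) in
noncomputable def rep (T : Γ) (j : Fin w) : Fin w := Classical.epsilon (C.EqV T j)

theorem rep_eqv (hC : C.Cert) (T : Γ) (j : Fin w) : C.EqV T j (C.rep T j) :=
  Classical.epsilon_spec (p := C.EqV T j) ⟨j, hC.refl T j⟩

theorem rep_iff (hC : C.Cert) (T : Γ) (i j : Fin w) : C.rep T i = C.rep T j ↔ C.EqV T i j := by
  constructor
  · intro h
    have h1 := rep_eqv hC T i
    rw [h] at h1
    exact hC.trans h1 (hC.symm (rep_eqv hC T j))
  · intro h
    have : C.EqV T i = C.EqV T j := by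
      funext k
      exact propext ⟨fun h' => hC.trans (hC.symm h) h', fun h' => hC.trans h h'⟩
    simp only [rep, this]

open Classical in
variable (C) in
noncomputable def el (T0 : Γ) : Node w Γ → Fin w → Node w Γ × Fin w
  | [], j => ([], C.rep T0 j)
  | (T, O) :: p, j => if h : ∃ q : Fin w × Fin w, O q.1 q.2 ∧ C.EqV T j q.2 then
      el T0 p (Classical.choose h).1 else ((T, O) :: p, C.rep T j)

theorem el_suffix (T0 : Γ) (ν : Node w Γ) (j) : (C.el T0 ν j).1 <:+ ν := by
  induction ν generalizing j with
  | nil => simp [el]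
  | cons a p ih =>
    obtain ⟨T, O⟩ := a
    simp only [el]
    split
    · exact (ih _).trans (List.suffix_cons _ _)
    · exact List.suffix_refl _

theorem el_pos (T0 T : Γ) (O) (p : Node w Γ) (j) (h : ∃ i j', O i j' ∧ C.EqV T j j') :
    ∃ i j', O i j' ∧ C.EqV T j j' ∧ C.el T0 ((T, O) :: p) j = C.el T0 p i := by
  have h' : ∃ q : Fin w × Fin w, O q.1 q.2 ∧ C.EqV T j q.2 := by
    obtain ⟨i, j', h⟩ := h; exact ⟨(i, j'), h⟩
  refine ⟨(Classical.choose h').1, (Classical.choose h').2, (Classical.choose_spec h').1,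
    (Classical.choose_spec h').2, ?_⟩
  simp only [el, dif_pos h']

theorem el_neg (T0 T : Γ) (O) (p : Node w Γ) (j) (h : ¬ ∃ i j', O i j' ∧ C.EqV T j j') :
    C.el T0 ((T, O) :: p) j = ((T, O) :: p, C.rep T j) := by
  have h' : ¬ ∃ q : Fin w × Fin w, O q.1 q.2 ∧ C.EqV T j q.2 := by
    rintro ⟨q, hq⟩; exact h ⟨_, _, hq⟩
  simp only [el, dif_neg h']

theorem el_ne (T0 : Γ) (a) (p : Node w Γ) (i) (r : Fin w) : C.el T0 p i ≠ (a :: p, r) := by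
  intro h
  have := (el_suffix (C := C) T0 p i).length_le
  rw [h] at this; simp at this

theorem el_iff (hC : C.Cert) (T0 : Γ) (ν : Node w Γ) (hν : C.Valid T0 ν) (i j) :
    C.el T0 ν i = C.el T0 ν j ↔ C.EqV (lab T0 ν) i j := by
  induction ν generalizing i j with
  | nil => simp [el, lab, rep_iff hC]
  | cons a p ih =>
    obtain ⟨T, O⟩ := a
    obtain ⟨hp, hO⟩ := hν
    show _ ↔ C.EqV T i j
    by_cases hi : ∃ i1 j', O i1 j' ∧ C.EqV T i j' <;> by_cases hj : ∃ i1 j', O i1 j' ∧ C.EqV T j j'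
    · obtain ⟨i1, i2, h1, h2, h3⟩ := el_pos (C := C) T0 T O p i hi
      obtain ⟨j1, j2, g1, g2, g3⟩ := el_pos (C := C) T0 T O p j hj
      rw [h3, g3, ih hp, hO.eqv hC h1 g1]
      exact ⟨fun h => hC.trans (hC.trans h2 h) (hC.symm g2),
        fun h => hC.trans (hC.trans (hC.symm h2) h) g2⟩
    · obtain ⟨i1, i2, h1, h2, h3⟩ := el_pos (C := C) T0 T O p i hi
      rw [h3, el_neg _ _ _ _ _ hj]
      refine ⟨fun h => absurd h (el_ne _ _ _ _ _), fun h => absurd ⟨i1, i2, h1, ?_⟩ hj⟩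
      exact hC.trans (hC.symm h) h2
    · obtain ⟨i1, i2, h1, h2, h3⟩ := el_pos (C := C) T0 T O p j hj
      rw [h3, el_neg _ _ _ _ _ hi]
      refine ⟨fun h => absurd h.symm (el_ne _ _ _ _ _), fun h => absurd ⟨i1, i2, h1, ?_⟩ hi⟩
      exact hC.trans h h2
    · rw [el_neg _ _ _ _ _ hi, el_neg _ _ _ _ _ hj, Prod.mk.injEq, rep_iff hC]
      simp

theorem el_child (hC : C.Cert) (T0 T : Γ) (O) (p : Node w Γ) (hν : C.Valid T0 ((T, O) :: p))
    {i j} (h : O i j) : C.el T0 ((T, O) :: p) j = C.el T0 p i := by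
  obtain ⟨i1, i2, h1, h2, h3⟩ := el_pos (C := C) T0 T O p j ⟨i, j, h, hC.refl _ _⟩
  rw [h3, el_iff hC _ _ hν.1, hν.2.eqv hC h1 h]
  exact hC.symm h2

theorem transport_up (hC : C.Cert) (T0 T : Γ) (O) (p : Node w Γ)
    (hν : C.Valid T0 ((T, O) :: p)) (f) (hf : f ∈ C.feat) (l : ℕ → Fin w)
    (hl : ∀ x ∈ supp (w := w) f, (C.el T0 ((T, O) :: p) (l x)).1 ≠ (T, O) :: p) :
    ∃ i : ℕ → Fin w, (∀ x ∈ supp (w := w) f, C.el T0 ((T, O) :: p) (l x) = C.el T0 p (i x)) ∧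
      (C.val T f l ↔ C.val (lab T0 p) f i) := by
  have : ∀ x, ∃ q : Fin w × Fin w, x ∈ supp (w := w) f → O q.1 q.2 ∧ C.EqV T (l x) q.2 ∧
      C.el T0 ((T, O) :: p) (l x) = C.el T0 p q.1 := by
    intro x
    by_cases hx : x ∈ supp (w := w) f
    · by_cases h : ∃ i1 j', O i1 j' ∧ C.EqV T (l x) j'
      · obtain ⟨i, j, h⟩ := el_pos (C := C) T0 T O p (l x) h
        exact ⟨(i, j), fun _ => h⟩
      · exact absurd (by rw [el_neg _ _ _ _ _ h]) (hl x hx)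
    · exact ⟨(0, 0), fun h => absurd h hx⟩
  choose q hq using this
  refine ⟨fun x => (q x).1, fun x hx => (hq x hx).2.2, ?_⟩
  rw [hC.cong T f hf l (fun x => (q x).2) (fun x hx => (hq x hx).2.1)]
  exact (hν.2 f hf _ _ (fun x hx => (hq x hx).1)).symm

theorem transport (hC : C.Cert) (T0 : Γ) (n : ℕ) : ∀ (ν ν' : Node w Γ), ν.length + ν'.length ≤ n →
    C.Valid T0 ν → C.Valid T0 ν' → ∀ f ∈ C.feat, ∀ l l' : ℕ → Fin w,
    (∀ x ∈ supp (w := w) f, C.el T0 ν (l x) = C.el T0 ν' (l' x)) →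
    (C.val (lab T0 ν) f l ↔ C.val (lab T0 ν') f l') := by
  have main : ∀ (n : ℕ), (∀ (ν ν' : Node w Γ), ν.length + ν'.length < n →
    C.Valid T0 ν → C.Valid T0 ν' → ∀ f ∈ C.feat, ∀ l l' : ℕ → Fin w,
    (∀ x ∈ supp (w := w) f, C.el T0 ν (l x) = C.el T0 ν' (l' x)) →
    (C.val (lab T0 ν) f l ↔ C.val (lab T0 ν') f l')) → ∀ (ν ν' : Node w Γ), 
      ν.length + ν'.length ≤ n → ν'.length ≤ ν.length →
    C.Valid T0 ν → C.Valid T0 ν' → ∀ f ∈ C.feat, ∀ l l' : ℕ → Fin w,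
    (∀ x ∈ supp (w := w) f, C.el T0 ν (l x) = C.el T0 ν' (l' x)) →
    (C.val (lab T0 ν) f l ↔ C.val (lab T0 ν') f l') := by
    intro n ih ν ν' hn hle hν hν' f hf l l' h
    by_cases hEq : ν = ν'
    · subst hEq
      exact hC.cong _ f hf l l' (fun x hx => (el_iff hC _ _ hν _ _).1 (h x hx))
    · cases ν with
      | nil =>
        have : ν' = [] := by simpa using hle
        exact absurd this.symm hEq
      | cons a p =>
        obtain ⟨T, O⟩ := a
        obtain ⟨i, hi, hv⟩ := transport_up hC T0 T O p hν f hf l (by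
          intro x hx h1
          rw [h x hx] at h1
          have h2 := el_suffix (C := C) T0 ν' (l' x)
          rw [h1] at h2
          exact hEq (h2.eq_of_length_le hle))
        show C.val T f l ↔ _
        rw [hv]
        refine ih p ν' ?_ hν.1 hν' f hf i l' (fun x hx => by rw [← hi x hx, h x hx])
        simp at hn; omega
  induction n with
  | zero =>
    intro ν ν' hn
    exact main 0 (by simp) ν ν' hn (by omega)
  | succ n ih =>
    intro ν ν' hn hν hν' f hf l l' h
    have ih' : ∀ (ν ν' : Node w Γ), ν.length + ν'.length < n + 1 →
      C.Valid T0 ν → C.Valid T0 ν' → ∀ f ∈ C.feat, ∀ l l' : ℕ → Fin w,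
      (∀ x ∈ supp (w := w) f, C.el T0 ν (l x) = C.el T0 ν' (l' x)) →
      (C.val (lab T0 ν) f l ↔ C.val (lab T0 ν') f l') := 
      fun ν ν' h => ih ν ν' (by omega)
    rcases Nat.le_total ν'.length ν.length with hle | hle
    · exact main (n+1) ih' ν ν' hn hle hν hν' f hf l l' h
    · exact (main (n+1) ih' ν' ν (by omega) hle hν' hν f hf l' l (fun x hx => (h x hx).symm)).symm

variable (C) in
def VNode (T0 : Γ) := {ν : Node w Γ // C.Valid T0 ν}

variable (C) in
def nl (T0 : Γ) (ν : C.VNode T0) : Γ := lab T0 ν.1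

variable (C) in
def Dom (T0 : Γ) := {e : Node w Γ × Fin w // ∃ (ν : C.VNode T0) (j : Fin w), C.el T0 ν.1 j = e}

noncomputable def VNode.e {T0 : Γ} (ν : C.VNode T0) (j : Fin w) : C.Dom T0 := ⟨C.el T0 ν.1 j, ν, j, rfl⟩

theorem dom_ex {T0 : Γ} (d : C.Dom T0) : ∃ (ν : C.VNode T0) (j : Fin w), d = ν.e j := by
  obtain ⟨e, ν, j, h⟩ := d
  exact ⟨ν, j, Subtype.ext h.symm⟩

theorem e_iff (hC : C.Cert) {T0 : Γ} (ν : C.VNode T0) (i j : Fin w) :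
    ν.e i = ν.e j ↔ C.EqV (C.nl T0 ν) i j := by
  refine Iff.trans ?_ (el_iff hC T0 ν.1 ν.2 i j)
  exact Subtype.ext_iff

theorem e_transport (hC : C.Cert) {T0 : Γ} (ν ν' : C.VNode T0) (f) (hf : f ∈ C.feat)
    (l l' : ℕ → Fin w) (h : ∀ x ∈ supp (w := w) f, ν.e (l x) = ν'.e (l' x)) :
    C.val (C.nl T0 ν) f l ↔ C.val (C.nl T0 ν') f l' :=
  transport hC T0 _ ν.1 ν'.1 le_rfl ν.2 ν'.2 f hf l l' (fun x hx => congrArg Subtype.val (h x hx))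

def VNode.child {T0 : Γ} (ν : C.VNode T0) (T : Γ) (O) (h : C.Compat (C.nl T0 ν) O T) : C.VNode T0 :=
  ⟨(T, O) :: ν.1, ν.2, h⟩

theorem e_child (hC : C.Cert) {T0 : Γ} (ν : C.VNode T0) (T : Γ) (O) (h : C.Compat (C.nl T0 ν) O T)
    {i j} (hO : O i j) : (ν.child T O h).e j = ν.e i :=
  Subtype.ext (el_child hC T0 T O ν.1 ⟨ν.2, h⟩ hO)

theorem nl_child {T0 : Γ} (ν : C.VNode T0) (T : Γ) (O) (h : C.Compat (C.nl T0 ν) O T) :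
    C.nl T0 (ν.child T O h) = T := rfl

variable (C) in
def M (T0 : Γ) : Str σ where
  dom := C.Dom T0
  interp R r := ∃ (ν : C.VNode T0) (ℓ : Fin (σ.arity R) → ℕ) (l : ℕ → Fin w),
    GF.atom (.rel R ℓ) ∈ C.L ∧ C.val (C.nl T0 ν) (.inl (.atom (.rel R ℓ))) l ∧
      ∀ k, r k = ν.e (l (ℓ k))

/-- choose an assignment lifting -/
theorem lift_assign {ι : Type} {D : Type} {W : Type} (hW : W) (ℓ : ι → ℕ) (g : ι → W) (F : W → D)
    (h : ∀ k k', ℓ k = ℓ k' → F (g k) = F (g k')) :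
    ∃ l : ℕ → W, (∀ k, F (l (ℓ k)) = F (g k)) ∧ ∀ k, ∃ k', l (ℓ k) = g k' := by
  classical
  refine ⟨fun x => if hx : ∃ k, ℓ k = x then g hx.choose else hW, fun k => ?_, fun k => ?_⟩
  · have hx : ∃ k', ℓ k' = ℓ k := ⟨k, rfl⟩
    simp only [dif_pos hx]
    exact h _ _ hx.choose_spec
  · have hx : ∃ k', ℓ k' = ℓ k := ⟨k, rfl⟩
    simp only [dif_pos hx]
    exact ⟨_, rfl⟩

/-- locating a satisfied relation in a node that covers the tuple -/
theorem rel_at (hC : C.Cert) {T0 : Γ} (ν : C.VNode T0) (R : σ.Rel) (ℓ : Fin (σ.arity R) → ℕ)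
    (hℓ : GF.atom (.rel R ℓ) ∈ C.L) (l : ℕ → Fin w) (ν' : C.VNode T0)
    (l' : ℕ → Fin w) (hv : C.val (C.nl T0 ν') (.inl (.atom (.rel R ℓ))) l')
    (h : ∀ k, ν.e (l (ℓ k)) = ν'.e (l' (ℓ k))) :
    C.val (C.nl T0 ν) (.inl (.atom (.rel R ℓ))) l := by
  refine (e_transport hC ν ν' (.inl (.atom (.rel R ℓ))) ⟨hℓ, trivial⟩ l l' ?_).2 hv
  intro x hx
  simp only [supp, GF.fv, Atomic.vars, Finset.mem_image, Finset.mem_univ, true_and,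
    Set.mem_ofPred_eq] at hx
  obtain ⟨k, rfl⟩ := hx
  exact h k

theorem atom_truth (hC : C.Cert) {T0 : Γ} (α : Atomic σ) (hα : GF.atom α ∈ C.L) (ν : C.VNode T0)
    (l : ℕ → Fin w) :
    α.Sat (C.M T0) (fun x => ν.e (l x)) ↔ C.val (C.nl T0 ν) (.inl (.atom α)) l := by
  cases α with
  | eq x y => 
    rw [hC.eqa _ _ _ _ hα, ← e_iff hC]
    rfl
  | rel R ℓ =>
    constructor
    · rintro ⟨ν', ℓ', l', hℓ', hv, h⟩
      obtain ⟨l2, h2, -⟩ := lift_assign (0 : Fin w) ℓ' (fun k => l (ℓ k)) (fun j => ν.e j) (by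
        intro k k' hk
        show ν.e (l (ℓ k)) = ν.e (l (ℓ k'))
        exact (h k).trans (by rw [hk]; exact (h k').symm))
      have := rel_at hC ν R ℓ' hℓ' l2 ν' l' hv (fun k => (h2 k).trans (h k))
      exact hC.rel _ R ℓ' ℓ l2 l hℓ' hα (fun k => (e_iff hC ν _ _).1 (h2 k)) this
    · intro hv
      exact ⟨ν, ℓ, l, hα, hv, fun _ => rfl⟩

theorem locate (hC : C.Cert) {T0 : Γ} (α : Atomic σ) (hα : GF.atom α ∈ C.L)
    (v : ℕ → (C.M T0).dom) (hv : α.Sat (C.M T0) v) :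
    ∃ (ν : C.VNode T0) (l : ℕ → Fin w), (∀ x ∈ α.vars, v x = ν.e (l x)) ∧
      C.val (C.nl T0 ν) (.inl (.atom α)) l := by
  suffices h : ∃ (ν : C.VNode T0) (l : ℕ → Fin w), (∀ x ∈ α.vars, v x = ν.e (l x)) by
    obtain ⟨ν, l, h⟩ := h
    exact ⟨ν, l, h, (atom_truth hC α hα ν l).1 ((atomic_congr _ _ _ _ h).1 hv)⟩
  cases α with
  | eq x y =>
    obtain ⟨ν, j, h⟩ := dom_ex (v x)
    refine ⟨ν, fun _ => j, fun z hz => ?_⟩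
    simp only [Atomic.vars, Finset.mem_insert, Finset.mem_singleton] at hz
    rcases hz with rfl | rfl
    · exact h
    · exact (Eq.symm hv).trans h
  | rel R ℓ =>
    obtain ⟨ν', ℓ', l', hℓ', hv, h⟩ := hv
    obtain ⟨l2, h2, -⟩ := lift_assign (0 : Fin w) ℓ (fun k => l' (ℓ' k)) (fun j => ν'.e j) (by
        intro k k' hk
        show ν'.e (l' (ℓ' k)) = ν'.e (l' (ℓ' k'))
        have a1 : v (ℓ k) = _ := h k
        have a2 : v (ℓ k') = _ := h k'
        rw [← a1, ← a2, hk])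
    refine ⟨ν', l2, fun x hx => ?_⟩
    simp only [Atomic.vars, Finset.mem_image, Finset.mem_univ, true_and] at hx
    obtain ⟨k, rfl⟩ := hx
    exact (h k).trans (h2 k).symm

theorem truth (hC : C.Cert) {T0 : Γ} (χ : GF σ) : χ ∈ C.L → ∀ (ν : C.VNode T0)
    (l : ℕ → Fin w),
    (χ.Sat (C.M T0) (fun x => ν.e (l x)) ↔ C.val (C.nl T0 ν) (.inl χ) l) := by
  induction χ with
  | atom α => exact fun h => atom_truth hC α h
  | not χ ih => intro h ν l; rw [hC.not' _ _ _ h, ← ih (hC.cl.not' _ h)]; rfl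
  | and χ ξ ih1 ih2 =>
    intro h ν l
    rw [hC.and' _ _ _ _ h, ← ih1 (hC.cl.and' _ _ h).1, ← ih2 (hC.cl.and' _ _ h).2]; rfl
  | or χ ξ ih1 ih2 =>
    intro h ν l
    rw [hC.or' _ _ _ _ h, ← ih1 (hC.cl.or' _ _ h).1, ← ih2 (hC.cl.or' _ _ h).2]; rfl
  | gex ys α χ ih =>
    intro h ν l
    obtain ⟨hα, hχ⟩ := hC.cl.gex' _ _ _ h
    obtain ⟨hfv, -⟩ := hC.cl.wg _ h
    constructor
    · rintro ⟨w', h1, h2⟩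
      obtain ⟨ν', l', hl, hv⟩ := locate hC α hα _ h1
      have h3 := (ih hχ ν' l').1 ((sat_congr _ χ _ _ (fun x hx => hl x (hfv hx))).1 h2)
      refine (e_transport hC ν ν' (.inl (.gex ys α χ)) ⟨h, trivial⟩ l l' ?_).2
        (hC.gexi _ _ _ _ _ h hv h3)
      intro x hx
      simp only [supp, GF.fv, Finset.mem_filter, Finset.mem_union, Set.mem_ofPred_eq] at hx
      rw [← hl x (hx.1.elim id (fun h => hfv h))]
      simp [updOn, hx.2]
    · intro hv
      obtain ⟨T', O, l', hO, hl, h1, h2⟩ := hC.gexw _ _ _ _ _ h hv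
      have hcong : ∀ x ∈ α.vars, updOn (fun x => ν.e (l x)) ys (fun x => (ν.child T' O hO).e (l' x)) x
          = (ν.child T' O hO).e (l' x) := by
        intro x hx
        simp only [updOn]
        split
        · rfl
        · exact (e_child hC ν T' O hO (hl x hx (by assumption))).symm
      refine ⟨fun x => (ν.child T' O hO).e (l' x), ?_, ?_⟩
      · exact (atomic_congr _ _ _ _ hcong).2 ((atom_truth hC α hα (ν.child T' O hO) l').2 h1)
      · exact (sat_congr _ χ _ _ (fun x hx => hcong x (hfv hx))).2 ((ih hχ (ν.child T' O hO) l').2 h2)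
  | gall ys α χ ih =>
    intro h ν l
    obtain ⟨hα, hχ⟩ := hC.cl.gall' _ _ _ h
    obtain ⟨hfv, -⟩ := hC.cl.wg _ h
    constructor
    · intro hs
      by_contra hv
      obtain ⟨T', O, l', hO, hl, h1, h2⟩ := hC.gallw _ _ _ _ _ h hv
      have hcong : ∀ x ∈ α.vars, updOn (fun x => ν.e (l x)) ys (fun x => (ν.child T' O hO).e (l' x)) x
          = (ν.child T' O hO).e (l' x) := by
        intro x hx
        simp only [updOn]
        split
        · rfl
        · exact (e_child hC ν T' O hO (hl x hx (by assumption))).symm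
      refine h2 ((ih hχ (ν.child T' O hO) l').1 ((sat_congr _ χ _ _ (fun x hx => hcong x (hfv hx))).1
        (hs (fun x => (ν.child T' O hO).e (l' x)) ?_)))
      exact (atomic_congr _ _ _ _ hcong).2 ((atom_truth hC α hα (ν.child T' O hO) l').2 h1)
    · intro hv w' h1
      obtain ⟨ν', l', hl, hv'⟩ := locate hC α hα _ h1
      refine (sat_congr _ χ _ _ (fun x hx => hl x (hfv hx))).2 ((ih hχ ν' l').2 ?_)
      refine hC.galle _ ys α _ _ h ?_ hv'
      refine (e_transport hC ν ν' (.inl (.gall ys α χ)) ⟨h, trivial⟩ l l' ?_).1 hv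
      intro x hx
      simp only [supp, GF.fv, Finset.mem_filter, Finset.mem_union, Set.mem_ofPred_eq] at hx
      rw [← hl x (hx.1.elim id (fun h => hfv h))]
      simp [updOn, hx.2]

theorem Sim.symm {T T' : Γ} {ρ ρ' : ℕ → Fin w} (h : C.Sim T ρ T' ρ') : C.Sim T' ρ' T ρ :=
  ⟨fun k l => (h.col k l).symm, fun i j => (h.eq i j).symm, fun R hR ℓ hℓ l => (h.rel R hR ℓ hℓ l).symm⟩

theorem idA_fin (i : Fin w) : (idA (i : ℕ) : Fin w) = i := by simp [idA]

theorem forth (hC : C.Cert) {T0 T1 : Γ} (ν ν' : C.VNode T0) (μ : C.VNode T1) (ρ ρ' s : ℕ → Fin w)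
    (hS : C.Sim (C.nl T0 ν) ρ (C.nl T1 μ) s) (k0) (hk : C.col (C.nl T0 ν') k0 ρ') :
    ∃ μ' : C.VNode T1, C.Sim (C.nl T0 ν') ρ' (C.nl T1 μ') idA ∧
      ∀ i i' : Fin w, ν.e (ρ i) = ν'.e (ρ' i') → μ.e (s i) = μ'.e i' := by
  classical
  by_cases hov : ∃ i i' : Fin w, ν.e (ρ i) = ν'.e (ρ' i')
  · obtain ⟨i0, i0', h0⟩ := hov
    have : ∀ m : ℕ, ∃ q : Fin w × Fin w, ν.e (ρ q.1) = ν'.e (ρ' q.2) ∧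
        ∀ i' : Fin w, (i' : ℕ) = m → (∃ i : Fin w, ν.e (ρ i) = ν'.e (ρ' i')) → q.2 = i' := by
      intro m
      by_cases h : ∃ i' : Fin w, (i' : ℕ) = m ∧ ∃ i : Fin w, ν.e (ρ i) = ν'.e (ρ' i')
      · obtain ⟨i', hm, i, h⟩ := h
        exact ⟨(i, i'), h, fun i2 h2 _ => Fin.ext (hm.trans h2.symm)⟩
      · exact ⟨(i0, i0'), h0, fun i2 h2 h3 => absurd ⟨i2, h2, h3⟩ h⟩
    choose q hq1 hq2 using this
    obtain ⟨k1, hk1⟩ := hC.gsub _ _ _ hk (fun m => (q m).2)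
    have hk2 : C.col (C.nl T0 ν) k1 (cmp ρ (fun m => (q m).1)) :=
      (e_transport hC ν ν' (.inr k1) trivial _ _ (fun x _ => hq1 x)).2 hk1
    have hk3 := (hS.col _ _).1 hk2
    obtain ⟨T2, O, hO, hm, hc⟩ := hC.ext _ _ k1 k0 _ _ _ hk3 hk1 hk
    refine ⟨μ.child T2 O hO, hC.sim _ _ k0 _ _ hk hc, fun i i' h => ?_⟩
    have e1 := hm i' i'.2
    rw [hq2 i' i' rfl ⟨i, h⟩] at e1
    rw [e_child hC μ T2 O hO e1]
    simp only [cmp]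
    rw [e_iff hC, ← hS.eq, ← e_iff hC, h, hq1, hq2 i' i' rfl ⟨i, h⟩]
  · obtain ⟨T2, O, hO, hc⟩ := hC.glob (C.nl T1 μ) _ k0 _ hk
    exact ⟨μ.child T2 O hO, hC.sim _ _ k0 _ _ hk hc, fun i i' h => absurd ⟨i, i', h⟩ hov⟩

theorem locate_col (hC : C.Cert) {T0 : Γ} (α : Atomic σ) (hα : α.sig ⊆ C.τ)
    (v : ℕ → (C.M T0).dom) (hv : α.Sat (C.M T0) v) :
    ∃ (ν : C.VNode T0) (ρ l : ℕ → Fin w) (k : κ), (∀ x ∈ α.vars, v x = ν.e (ρ (l x))) ∧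
      C.col (C.nl T0 ν) k ρ := by
  classical
  cases α with
  | eq x y =>
    obtain ⟨ν, j, h⟩ := dom_ex (v x)
    obtain ⟨k, hk⟩ := hC.gconst (C.nl T0 ν) j
    refine ⟨ν, fun _ => j, fun _ => j, k, fun z hz => ?_, hk⟩
    simp only [Atomic.vars, Finset.mem_insert, Finset.mem_singleton] at hz
    rcases hz with rfl | rfl
    · exact h
    · exact (Eq.symm hv).trans h
  | rel R ℓ =>
    have hR : R ∈ C.τ := hα rfl
    obtain ⟨ν', ℓ', l', hℓ', hv, h⟩ := hv
    by_cases hne : Nonempty (Fin (σ.arity R))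
    · obtain ⟨k0⟩ := hne
      obtain ⟨l2, h2, h3⟩ := lift_assign (0 : Fin w) ℓ (fun k => l' (ℓ' k)) (fun j => ν'.e j) (by
          intro k k' hk
          show ν'.e (l' (ℓ' k)) = ν'.e (l' (ℓ' k'))
          have a1 : v (ℓ k) = _ := h k
          have a2 : v (ℓ k') = _ := h k'
          rw [← a1, ← a2, hk])
      obtain ⟨k, hk⟩ := hC.grel _ R hR ℓ' l' (fun m => if ∃ k, l' (ℓ' k) = idA m then idA m else l' (ℓ' k0))
        hℓ' hv (by
          intro m _
          show ∃ k, (if ∃ k, l' (ℓ' k) = idA m then idA m else l' (ℓ' k0)) = _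
          by_cases hm : ∃ k, l' (ℓ' k) = idA m
          · obtain ⟨k, hk⟩ := hm
            exact ⟨k, by rw [if_pos ⟨k, hk⟩]; exact hk.symm⟩
          · exact ⟨k0, by rw [if_neg hm]⟩)
      refine ⟨ν', _, l2, k, fun x hx => ?_, hk⟩
      simp only [Atomic.vars, Finset.mem_image, Finset.mem_univ, true_and] at hx
      obtain ⟨k, rfl⟩ := hx
      obtain ⟨k', hk'⟩ := h3 k
      have : ∃ k'', l' (ℓ' k'') = l2 (ℓ k) := ⟨k', hk'.symm⟩
      simp only [idA_fin, if_pos this]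
      exact (h k).trans (h2 k).symm
    · obtain ⟨k, hk⟩ := hC.gconst (C.nl T0 ν') 0
      refine ⟨ν', fun _ => 0, fun _ => 0, k, fun x hx => ?_, hk⟩
      simp only [Atomic.vars, Finset.mem_image, Finset.mem_univ, true_and] at hx
      obtain ⟨k, rfl⟩ := hx
      exact absurd ⟨k⟩ hne

theorem bis_atom (hC : C.Cert) {T0 T1 : Γ} (α : Atomic σ) (hα : α.sig ⊆ C.τ)
    (ν : C.VNode T0) (μ : C.VNode T1) (ρ s : ℕ → Fin w)
    (hS : C.Sim (C.nl T0 ν) ρ (C.nl T1 μ) s) (l : ℕ → Fin w)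
    (h : α.Sat (C.M T0) (fun x => ν.e (ρ (l x)))) : α.Sat (C.M T1) (fun x => μ.e (s (l x))) := by
  cases α with
  | eq x y =>
    have h' : ν.e (ρ (l x)) = ν.e (ρ (l y)) := h
    show μ.e (s (l x)) = μ.e (s (l y))
    rw [e_iff hC] at h' ⊢
    exact (hS.eq _ _).1 h'
  | rel R ℓ =>
    obtain ⟨ν', ℓ', l', hℓ', hv, h⟩ := h
    have h : ∀ k, ν.e (ρ (l (ℓ k))) = ν'.e (l' (ℓ' k)) := h
    obtain ⟨l2, h2, -⟩ := lift_assign (0 : Fin w) ℓ' (fun k => l (ℓ k)) (fun j => ν.e (ρ j)) (by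
        intro k k' hk
        show ν.e (ρ (l (ℓ k))) = ν.e (ρ (l (ℓ k')))
        rw [h, h, hk])
    have := rel_at hC ν R ℓ' hℓ' (cmp ρ l2) ν' l' hv (fun k => (h2 k).trans (h k))
    have := (hS.rel R (hα rfl) ℓ' hℓ' l2).1 this
    refine ⟨μ, ℓ', cmp s l2, hℓ', this, fun k => ?_⟩
    show μ.e (s (l (ℓ k))) = μ.e (s (l2 (ℓ' k)))
    have h3 : ν.e (ρ (l2 (ℓ' k))) = ν.e (ρ (l (ℓ k))) := h2 k
    rw [e_iff hC] at h3 ⊢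
    exact (hS.eq _ _).1 (hC.symm h3)

variable (C) in
def Bis (θ : GF σ) : Prop := ∀ {T0 T1 : Γ} (ν : C.VNode T0) (μ : C.VNode T1) (ρ s : ℕ → Fin w)
    (_ : C.Sim (C.nl T0 ν) ρ (C.nl T1 μ) s) (l : ℕ → Fin w)
    (_ : θ.Sat (C.M T0) (fun x => ν.e (ρ (l x)))), θ.Sat (C.M T1) (fun x => μ.e (s (l x)))

theorem bis_not {θ : GF σ} (h : C.Bis θ) : C.Bis θ.not :=
  fun ν μ ρ s hS l hs hs' => hs (h μ ν s ρ hS.symm l hs')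

theorem bis_gex (hC : C.Cert) (ys : List ℕ) (α : Atomic σ) (θ : GF σ) (hα : α.sig ⊆ C.τ)
    (hfv : θ.fv ⊆ α.vars) (ih : C.Bis θ) : C.Bis (.gex ys α θ) := by
  rintro T0 T1 ν μ ρ s hS l ⟨w', h1, h2⟩
  obtain ⟨ν', ρ', l', k, hl, hk⟩ := locate_col hC α hα _ h1
  obtain ⟨μ', hS', hov⟩ := forth hC ν ν' μ ρ ρ' s hS k hk
  have h1' := bis_atom hC α hα ν' μ' ρ' idA hS' l' ((atomic_congr _ _ _ _ hl).1 h1)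
  have h2' := ih ν' μ' ρ' idA hS' l' ((sat_congr _ _ _ _ (fun x hx => hl x (hfv hx))).1 h2)
  have hcong : ∀ x ∈ α.vars, updOn (fun x => μ.e (s (l x))) ys (fun x => μ'.e (idA (l' x))) x
          = μ'.e (idA (l' x)) := by
    intro x hx
    simp only [updOn]
    split
    · rfl
    · rename_i hy
      rw [idA_fin]
      refine hov _ _ ?_
      rw [← hl x hx]; simp [updOn, hy]
  exact ⟨fun x => μ'.e (idA (l' x)), (atomic_congr _ _ _ _ hcong).2 h1',
    (sat_congr _ _ _ _ (fun x hx => hcong x (hfv hx))).2 h2'⟩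

theorem bis_main (hC : C.Cert) (θ : GF σ) : θ.WellGuarded → θ.sig ⊆ C.τ → C.Bis θ := by
  induction θ with
  | atom α => intro _ hs T0 T1 ν μ ρ s hS l h; exact bis_atom hC α hs ν μ ρ s hS l h
  | not θ ih => exact fun h hs => bis_not (ih h hs)
  | and χ ξ ih1 ih2 =>
    intro h hs T0 T1 ν μ ρ s hS l hh
    exact ⟨ih1 h.1 (fun _ hx => hs (Or.inl hx)) ν μ ρ s hS l hh.1,
      ih2 h.2 (fun _ hx => hs (Or.inr hx)) ν μ ρ s hS l hh.2⟩
  | or χ ξ ih1 ih2 =>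
    intro h hs T0 T1 ν μ ρ s hS l hh
    exact hh.imp (ih1 h.1 (fun _ hx => hs (Or.inl hx)) ν μ ρ s hS l)
      (ih2 h.2 (fun _ hx => hs (Or.inr hx)) ν μ ρ s hS l)
  | gex ys α θ ih =>
    intro h hs
    exact bis_gex hC ys α θ (fun _ hx => hs (Or.inl hx)) h.1 (ih h.2 (fun _ hx => hs (Or.inr hx)))
  | gall ys α θ ih =>
    intro h hs T0 T1 ν μ ρ s hS l hh w' h1
    by_contra h2
    obtain ⟨w2, h3, h4⟩ := bis_gex hC ys α θ.not (fun _ hx => hs (Or.inl hx)) h.1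
      (bis_not (ih h.2 (fun _ hx => hs (Or.inr hx)))) μ ν s ρ hS.symm l ⟨w', h1, h2⟩
    exact h4 (hh w2 h3)

theorem no_interpolant (hC : C.Cert) (TA TB : Γ) (hS : C.Sim TA idA TB idA) (φ ψ : GF σ)
    (hφ : φ ∈ C.L) (hψ : ψ ∈ C.L) (hA : C.val TA (.inl φ) idA) (hB : ¬ C.val TB (.inl ψ) idA)
    (hτ : φ.sig ∩ ψ.sig ⊆ C.τ) (n : ℕ) : ¬ HasGFInterpolant n φ ψ := by
  rintro ⟨θ, hwg, hsig, -, h1, h2⟩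
  let ν : C.VNode TA := ⟨[], trivial⟩
  let μ : C.VNode TB := ⟨[], trivial⟩
  have e1 := h1 _ _ ((truth hC φ hφ ν idA).2 hA)
  have key := bis_main hC θ hwg (hsig.trans hτ) ν μ idA idA hS idA
  simp only [idA_fin] at key
  exact hB ((truth hC ψ hψ μ idA).1 (h2 _ _ (key e1)))

end CData
end GFI


namespace GFI
variable {σ : Sig}

def aren (ζ : ℕ → ℕ) : Atomic σ → Atomic σ
  | .eq x y => .eq (ζ x) (ζ y)
  | .rel R ℓ => .rel R (fun k => ζ (ℓ k))

theorem aren_vars (ζ : ℕ → ℕ) (α : Atomic σ) : (aren ζ α).vars = α.vars.image ζ := by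
  cases α with
  | eq x y => simp [aren, Atomic.vars, Finset.image_insert]
  | rel R ℓ => simp only [aren, Atomic.vars, Finset.image_image]; rfl

theorem aren_sig (ζ : ℕ → ℕ) (α : Atomic σ) : (aren ζ α).sig = α.sig := by
  cases α <;> rfl

theorem aren_sat (ζ : ℕ → ℕ) (α : Atomic σ) (A : Str σ) (v : ℕ → A.dom) :
    (aren ζ α).Sat A v ↔ α.Sat A (fun x => v (ζ x)) := by
  cases α <;> rfl

def Ren (θ : GF σ) : Prop := θ.WellGuarded → ∀ ζ : ℕ → ℕ, ∃ θ' : GF σ, θ'.WellGuarded ∧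
  θ'.sig ⊆ θ.sig ∧ θ'.fv ⊆ θ.fv.image ζ ∧
  ∀ (A : Str σ) (v : ℕ → A.dom), θ'.Sat A v ↔ θ.Sat A (fun x => v (ζ x))

theorem ren_not {θ : GF σ} (h : Ren θ) : Ren θ.not := by
  intro hw ζ
  obtain ⟨θ', h1, h2, h3, h4⟩ := h hw ζ
  exact ⟨θ'.not, h1, h2, h3, fun A v => not_congr (h4 A v)⟩

theorem ren_gex {χ : GF σ} (ys : List ℕ) (α : Atomic σ) (h : Ren χ) : Ren (.gex ys α χ) := by
  rintro ⟨hfv, hw⟩ ζ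
  obtain ⟨B, hB⟩ : ∃ B, ∀ x ∈ α.vars, ζ x < B :=
    ⟨α.vars.sup ζ + 1, fun x hx => Nat.lt_succ_of_le (Finset.le_sup hx)⟩
  obtain ⟨χ', h1, h2, h3, h4⟩ := h hw (fun x => if x ∈ ys then B + x else ζ x)
  refine ⟨.gex (ys.map (B + ·)) (aren (fun x => if x ∈ ys then B + x else ζ x) α) χ', ⟨?_, h1⟩,
    ?_, ?_, ?_⟩
  · rw [aren_vars]; exact h3.trans (Finset.image_subset_image hfv)
  · simp only [GF.sig]
    rw [aren_sig]; exact Set.union_subset_union_right _ h2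
  · intro y hy
    simp only [GF.fv, Finset.mem_filter, Finset.mem_union, aren_vars, List.mem_map] at hy
    obtain ⟨hy, hn⟩ := hy
    have : ∃ x ∈ α.vars, (if x ∈ ys then B + x else ζ x) = y := by
      rcases hy with hy | hy
      · simpa using hy
      · have := h3 hy
        simp only [Finset.mem_image] at this
        obtain ⟨x, hx, e⟩ := this
        exact ⟨x, hfv hx, e⟩
    obtain ⟨x, hx, e⟩ := this
    by_cases hxy : x ∈ ys
    · rw [if_pos hxy] at e; exact absurd ⟨x, hxy, e⟩ hn
    · rw [if_neg hxy] at e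
      simp only [GF.fv, Finset.mem_image, Finset.mem_filter, Finset.mem_union]
      exact ⟨x, ⟨Or.inl hx, hxy⟩, e⟩
  · intro A v
    have key : ∀ (w w' : ℕ → A.dom), (∀ x, w' (B + x) = w x) → ∀ x ∈ α.vars,
        updOn v (ys.map (B + ·)) w' (if x ∈ ys then B + x else ζ x)
          = updOn (fun x => v (ζ x)) ys w x := by
      intro w w' hww x hx
      by_cases hxy : x ∈ ys
      · simp [updOn, hxy, hww]
      · rw [if_neg hxy]
        have : ¬ ζ x ∈ ys.map (B + ·) := by
          simp only [List.mem_map, not_exists, not_and]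
          intro z _ hz
          have := hB x hx; omega
        simp only [updOn, if_neg hxy, if_neg this]
    simp only [GF.Sat]
    constructor
    · rintro ⟨w', a1, a2⟩
      have k := key (fun x => w' (B + x)) w' (fun _ => rfl)
      rw [aren_sat] at a1
      rw [h4] at a2
      exact ⟨fun x => w' (B + x), (atomic_congr _ _ _ _ k).1 a1,
        (sat_congr _ _ _ _ (fun x hx => k x (hfv hx))).1 a2⟩
    · rintro ⟨w, a1, a2⟩
      have k := key w (fun y => w (y - B)) (fun x => by simp)
      refine ⟨fun y => w (y - B), ?_, ?_⟩
      · rw [aren_sat]; exact (atomic_congr _ _ _ _ k).2 a1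
      · rw [h4]; exact (sat_congr _ _ _ _ (fun x hx => k x (hfv hx))).2 a2

theorem ren (θ : GF σ) : Ren θ := by
  induction θ with
  | atom α =>
    intro _ ζ
    refine ⟨.atom (aren ζ α), trivial, ?_, ?_, fun A v => aren_sat ζ α A v⟩
    · simp only [GF.sig]; rw [aren_sig]
    · simp only [GF.fv]; rw [aren_vars]
  | not θ ih => exact ren_not ih
  | and χ ξ ih1 ih2 =>
    intro hw ζ
    obtain ⟨θ', h1, h2, h3, h4⟩ := ih1 hw.1 ζ
    obtain ⟨θ2, g1, g2, g3, g4⟩ := ih2 hw.2 ζ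
    refine ⟨θ'.and θ2, ⟨h1, g1⟩, Set.union_subset_union h2 g2, ?_, fun A v => and_congr (h4 A v) (g4 A v)⟩
    simp only [GF.fv]; rw [Finset.image_union]; exact Finset.union_subset_union h3 g3
  | or χ ξ ih1 ih2 =>
    intro hw ζ
    obtain ⟨θ', h1, h2, h3, h4⟩ := ih1 hw.1 ζ
    obtain ⟨θ2, g1, g2, g3, g4⟩ := ih2 hw.2 ζ
    refine ⟨θ'.or θ2, ⟨h1, g1⟩, Set.union_subset_union h2 g2, ?_, fun A v => or_congr (h4 A v) (g4 A v)⟩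
    simp only [GF.fv]; rw [Finset.image_union]; exact Finset.union_subset_union h3 g3
  | gex ys α χ ih => exact ren_gex ys α ih
  | gall ys α χ ih =>
    intro hw ζ
    obtain ⟨θ', h1, h2, h3, h4⟩ := ren_not (ren_gex ys α (ren_not ih)) hw ζ
    refine ⟨θ', h1, h2, h3, fun A v => ?_⟩
    rw [h4]
    simp only [GF.Sat, not_exists, not_and, not_not]

/-- a valid closed formula -/
def topF : GF σ := .gex [0] (.eq 0 0) (.atom (.eq 0 0))

theorem topF_wg : (topF : GF σ).WellGuarded := ⟨fun _ h => h, trivial⟩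
theorem topF_sig : (topF : GF σ).sig = ∅ := by simp [topF, GF.sig, Atomic.sig]
theorem topF_fv : (topF : GF σ).fv = ∅ := by
  simp [topF, GF.fv, Atomic.vars]
theorem topF_sat (A : Str σ) (v : ℕ → A.dom) : (topF : GF σ).Sat A v := ⟨v, rfl, rfl⟩

structure Good (τ : Set σ.Rel) (n : ℕ) (θ : GF σ) : Prop where
  wg : θ.WellGuarded
  sig : θ.sig ⊆ τ
  fv : θ.fv ⊆ Finset.range n

theorem fin_interp (τ : Set σ.Rel) (n : ℕ) (fs : List (GF σ)) : (∀ f ∈ fs, Good τ n f) →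
    ∀ (P Q : ∀ A : Str σ, (ℕ → A.dom) → Prop),
    (∀ A v B v', (∀ f ∈ fs, f.Sat A v ↔ f.Sat B v') → P A v → Q B v') →
    ∃ θ, Good τ n θ ∧ (∀ A v, P A v → θ.Sat A v) ∧ (∀ A v, θ.Sat A v → Q A v) := by
  induction fs with
  | nil =>
    intro _ P Q h
    have gt : Good τ n topF := ⟨topF_wg, by simp [topF_sig], by simp [topF_fv]⟩
    by_cases hP : ∃ A v, P A v
    · obtain ⟨A, v, hP⟩ := hP
      exact ⟨topF, gt, fun A v _ => topF_sat A v, fun B v' _ => h A v B v' (by simp) hP⟩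
    · exact ⟨topF.not, ⟨gt.1, gt.2, gt.3⟩, fun A v h => absurd ⟨A, v, h⟩ hP,
        fun A v h => absurd (topF_sat A v) h⟩
  | cons f fs ih =>
    intro hg P Q h
    have hf := hg f (by simp)
    have hfs : ∀ f ∈ fs, Good τ n f := fun g hg' => hg g (by simp [hg'])
    obtain ⟨θ1, g1, a1, b1⟩ := ih hfs (fun A v => P A v ∧ f.Sat A v) (fun A v => f.Sat A v → Q A v) (by
      intro A v B v' hag hP hB
      refine h A v B v' ?_ hP.1
      intro g hg'
      rcases List.mem_cons.1 hg' with rfl | hg'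
      · exact ⟨fun _ => hB, fun _ => hP.2⟩
      · exact hag g hg')
    obtain ⟨θ2, g2, a2, b2⟩ := ih hfs (fun A v => P A v ∧ ¬ f.Sat A v) (fun A v => ¬ f.Sat A v → Q A v) (by
      intro A v B v' hag hP hB
      refine h A v B v' ?_ hP.1
      intro g hg'
      rcases List.mem_cons.1 hg' with rfl | hg'
      · exact ⟨fun h => absurd h hP.2, fun h => absurd h hB⟩
      · exact hag g hg')
    refine ⟨(f.and θ1).or (f.not.and θ2), ⟨⟨⟨hf.1, g1.1⟩, ⟨hf.1, g2.1⟩⟩, ?_, ?_⟩, ?_, ?_⟩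
    · exact Set.union_subset (Set.union_subset hf.2 g1.2) (Set.union_subset hf.2 g2.2)
    · exact Finset.union_subset (Finset.union_subset hf.3 g1.3) (Finset.union_subset hf.3 g2.3)
    · intro A v hP
      by_cases hv : f.Sat A v
      · exact Or.inl ⟨hv, a1 A v ⟨hP, hv⟩⟩
      · exact Or.inr ⟨hv, a2 A v ⟨hP, hv⟩⟩
    · rintro A v (⟨h1, h2⟩ | ⟨h1, h2⟩)
      · exact b1 A v h2 h1
      · exact b2 A v h2 h1

theorem diag {X : ℕ → Type} [hX : ∀ n, Nonempty (X n)] (U : Filter ℕ) (hU : U ≤ Filter.cofinite)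
    (Q : ℕ → ∀ n, X n → Prop) (hQ : ∀ k n x, Q (k+1) n x → Q k n x)
    (h : ∀ k, ∀ᶠ n in U, ∃ x, Q k n x) :
    ∃ x : ∀ n, X n, ∀ k, ∀ᶠ n in U, Q k n (x n) := by
  classical
  have hmono : ∀ n x k k', k ≤ k' → Q k' n x → Q k n x := by
    intro n x k k' hk
    induction hk with
    | refl => exact id
    | step _ ih => exact fun h => ih (hQ _ _ _ h)
  let g : ℕ → ℕ := fun n => Nat.findGreatest (fun k => ∃ x, Q k n x) n
  have : ∀ n, ∃ y : X n, (∃ x, Q (g n) n x) → Q (g n) n y := by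
    intro n
    by_cases hx : ∃ x, Q (g n) n x
    · obtain ⟨x, hx⟩ := hx; exact ⟨x, fun _ => hx⟩
    · exact ⟨(hX n).some, fun h => absurd h hx⟩
  choose y hy using this
  refine ⟨y, fun k => ?_⟩
  have hlarge : ∀ᶠ n in U, k ≤ n := by
    apply hU
    rw [Nat.cofinite_eq_atTop]
    exact Filter.eventually_ge_atTop k
  filter_upwards [h k, hlarge] with n h1 h2
  have h3 : k ≤ g n := Nat.le_findGreatest h2 h1
  have h4 : ∃ x, Q (g n) n x := Nat.findGreatest_spec (P := fun k => ∃ x, Q k n x) h2 h1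
  exact hmono n _ _ _ h3 (hy n h4)

end GFI


namespace GFI
namespace Sem
open CData
variable {σ : Sig} {w : ℕ} [NeZero w]

noncomputable abbrev U : Ultrafilter ℕ := Filter.hyperfilter ℕ

abbrev Tup (S : Bool → ℕ → Str σ) (w : ℕ) : Type := Σ s : Bool, ∀ n, Fin w → (S s n).dom

variable {S : Bool → ℕ → Str σ}

def sv (T : Tup S w) (χ : GF σ) (l : ℕ → Fin w) : Prop :=
  ∀ᶠ n in U, χ.Sat (S T.1 n) (fun x => T.2 n (l x))

def sub (T : Tup S w) (ρ : ℕ → Fin w) : Tup S w := ⟨T.1, fun n m => T.2 n (ρ m)⟩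

def Eqv (τ : Set σ.Rel) (T T' : Tup S w) : Prop :=
  ∀ θ : GF σ, θ.WellGuarded → θ.sig ⊆ τ → (sv T θ idA ↔ sv T' θ idA)

def Gd (τ : Set σ.Rel) (T : Tup S w) : Prop :=
  ∃ (α : Atomic σ) (π : Fin w → ℕ), α.sig ⊆ τ ∧ (∀ m, π m ∈ α.vars) ∧
    ∀ᶠ n in U, ∃ v : ℕ → (S T.1 n).dom, α.Sat _ v ∧ ∀ m, T.2 n m = v (π m)

variable {τ : Set σ.Rel}

theorem Eqv.symm {T T' : Tup S w} (h : Eqv τ T T') : Eqv τ T' T := fun θ a b => (h θ a b).symm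
theorem Eqv.trans {T T' T'' : Tup S w} (h : Eqv τ T T') (h' : Eqv τ T' T'') : Eqv τ T T'' :=
  fun θ a b => (h θ a b).trans (h' θ a b)
theorem Eqv.rfl' {T : Tup S w} : Eqv τ T T := fun _ _ _ => Iff.rfl

theorem Eqv.all {T T' : Tup S w} (h : Eqv τ T T') (θ : GF σ) (hw : θ.WellGuarded) (hs : θ.sig ⊆ τ)
    (l : ℕ → Fin w) : sv T θ l ↔ sv T' θ l := by
  obtain ⟨θ', h1, h2, -, h4⟩ := ren θ hw (fun x => (l x : ℕ))
  have := h θ' h1 (h2.trans hs)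
  simpa only [sv, h4, idA_fin] using this

theorem Eqv.sub {T T' : Tup S w} (h : Eqv τ T T') (ρ : ℕ → Fin w) : Eqv τ (sub T ρ) (sub T' ρ) :=
  fun θ hw hs => h.all θ hw hs (cmp ρ idA)

theorem sv_not (T : Tup S w) (χ : GF σ) (l) : sv T χ.not l ↔ ¬ sv T χ l :=
  Ultrafilter.eventually_not

theorem sv_ev {s : Bool} {c c' : ∀ n, Fin w → (S s n).dom} (χ : GF σ) (l l' : ℕ → Fin w)
    (h : ∀ x ∈ χ.fv, ∀ᶠ n in U, c n (l x) = c' n (l' x)) :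
    sv (S := S) ⟨s, c⟩ χ l ↔ sv (S := S) ⟨s, c'⟩ χ l' := by
  apply Filter.eventually_congr
  filter_upwards [(Finset.eventually_all _).2 h] with n hn
  exact sat_congr _ χ _ _ hn

theorem sv_congr (T : Tup S w) (χ : GF σ) (l l' : ℕ → Fin w) (h : ∀ x ∈ χ.fv, l x = l' x) :
    sv T χ l ↔ sv T χ l' := by
  obtain ⟨s, c⟩ := T
  exact sv_ev χ l l' (fun x hx => by rw [h x hx]; exact Filter.Eventually.of_forall fun _ => rfl)

theorem eqv_of_ev {s : Bool} {c c' : ∀ n, Fin w → (S s n).dom}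
    (h : ∀ m, ∀ᶠ n in U, c n m = c' n m) : Eqv τ (S := S) ⟨s, c⟩ ⟨s, c'⟩ :=
  fun θ _ _ => sv_ev θ _ _ (fun x _ => h _)

theorem gd_of_ev {s : Bool} {c c' : ∀ n, Fin w → (S s n).dom}
    (h : ∀ m, ∀ᶠ n in U, c n m = c' n m) (hg : Gd τ (S := S) ⟨s, c⟩) : Gd τ (S := S) ⟨s, c'⟩ := by
  obtain ⟨α, π, h1, h2, h3⟩ := hg
  refine ⟨α, π, h1, h2, ?_⟩
  filter_upwards [h3, Filter.eventually_all.2 h] with n ⟨v, a1, a2⟩ hn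
  exact ⟨v, a1, fun m => by rw [← a2 m]; exact (hn m).symm⟩

theorem gd_sub {T : Tup S w} (ρ : ℕ → Fin w) (hg : Gd τ T) : Gd τ (sub T ρ) := by
  obtain ⟨α, π, h1, h2, h3⟩ := hg
  refine ⟨α, fun m => π (ρ m), h1, fun m => h2 _, ?_⟩
  filter_upwards [h3] with n ⟨v, a1, a2⟩
  exact ⟨v, a1, fun m => a2 _⟩

def conj (E : ℕ → GF σ) : ℕ → GF σ
  | 0 => topF
  | k + 1 => .and (conj E k) (E k)

theorem conj_wg (E : ℕ → GF σ) (h : ∀ j, (E j).WellGuarded) (k) : (conj E k).WellGuarded := by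
  induction k with
  | zero => exact topF_wg
  | succ k ih => exact ⟨ih, h k⟩

theorem conj_sig (E : ℕ → GF σ) (h : ∀ j, (E j).sig ⊆ τ) (k) : (conj E k).sig ⊆ τ := by
  induction k with
  | zero => simp [conj, topF_sig]
  | succ k ih => exact Set.union_subset ih (h k)

theorem conj_sat (E : ℕ → GF σ) (k) (A : Str σ) (v : ℕ → A.dom) :
    (conj E k).Sat A v ↔ ∀ j < k, (E j).Sat A v := by
  induction k with
  | zero => simp [conj, topF_sat]
  | succ k ih =>
    simp only [conj, GF.Sat, ih]
    constructor
    · rintro ⟨h1, h2⟩ j hj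
      rcases Nat.lt_succ_iff_lt_or_eq.1 hj with h | rfl
      · exact h1 j h
      · exact h2
    · exact fun h => ⟨fun j hj => h j (by omega), h k (by omega)⟩

theorem forth_step {s s' : Bool} {c : ∀ n, Fin w → (S s n).dom}
    {d0 d : ∀ n, Fin w → (S s' n).dom} (h : Eqv τ (S := S) ⟨s, c⟩ ⟨s', d0⟩)
    (α : Atomic σ) (π : Fin w → ℕ) (hα : α.sig ⊆ τ) (hπ : ∀ m, π m ∈ α.vars)
    (hg : ∀ᶠ n in U, ∃ v : ℕ → (S s' n).dom, α.Sat _ v ∧ ∀ m, d n m = v (π m))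
    (P : Fin w → Fin w → Prop) (hP : ∀ i j, P i j → ∀ᶠ n in U, d0 n i = d n j)
    (χ : GF σ) (hχ : χ.WellGuarded) (hχs : χ.sig ⊆ τ) (hd : sv (S := S) ⟨s', d⟩ χ idA) :
    ∀ᶠ n in U, ∃ v : ℕ → (S s n).dom, α.Sat _ v ∧ (∀ i j, P i j → c n i = v (π j)) ∧
      χ.Sat _ (fun x => v (π (idA x))) := by
  classical
  have hP' : ∀ᶠ n in U, ∀ i j, P i j → d0 n i = d n j := by
    simpa only [Filter.eventually_all] using hP
  have hcons : ∀ᶠ n in U, ∀ i j i' j', P i j → P i' j' → π j = π j' → c n i = c n i' := by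
    simp only [Filter.eventually_all]
    intro i j i' j' h1 h2 h3
    have := (h.all (.atom (.eq 0 1)) trivial (by simp [GF.sig, Atomic.sig]) (two i i')).2 (by
      filter_upwards [hP', hg] with n a ⟨v, _, b⟩
      show d0 n (two i i' 0) = d0 n (two i i' 1)
      simp only [two, if_true, one_ne_zero, if_false]
      rw [a i j h1, a i' j' h2, b, b, h3])
    exact this
  have hz : ∀ x : ℕ, ∃ y : ℕ, (∃ i j, P i j ∧ π j = x ∧ y = (i : Fin w)) ∨
      ((¬ ∃ i j, P i j ∧ π j = x) ∧ y = x + w) := by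
    intro x
    by_cases hx : ∃ i j, P i j ∧ π j = x
    · obtain ⟨i, j, h1, h2⟩ := hx
      exact ⟨i, Or.inl ⟨i, j, h1, h2, rfl⟩⟩
    · exact ⟨x + w, Or.inr ⟨hx, rfl⟩⟩
  choose z hz using hz
  obtain ⟨χ', h1, h2, h3, h4⟩ := ren χ hχ (fun x => z (π (idA x)))
  have hΘ := (h (.gex ((α.vars.image (· + w)).toList) (aren z α) χ') ⟨?_, h1⟩ ?_).2 ?_
  · filter_upwards [hΘ, hcons] with n ⟨w', a1, a2⟩ hc
    rw [aren_sat] at a1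
    rw [h4] at a2
    refine ⟨_, a1, fun i j hij => ?_, a2⟩
    rcases hz (π j) with ⟨i', j', e1, e2, e3⟩ | ⟨e1, e2⟩
    · show c n i = updOn _ _ w' (z (π j))
      rw [e3]
      have : ¬ (i' : ℕ) ∈ (α.vars.image (· + w)).toList := by
        simp only [Finset.mem_toList, Finset.mem_image, not_exists, not_and]
        intro y _ hy
        have := i'.2; omega
      simp only [updOn, if_neg this, idA_fin]
      exact hc i j i' j' hij e1 e2.symm
    · exact absurd ⟨i, j, hij, rfl⟩ e1
  · rw [aren_vars]
    intro y hy
    have := h3 hy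
    simp only [Finset.mem_image] at this ⊢
    obtain ⟨x, hx, e⟩ := this
    exact ⟨_, hπ _, e⟩
  · simp only [GF.sig]
    rw [aren_sig]
    exact Set.union_subset hα (h2.trans hχs)
  · filter_upwards [hg, hP', hd] with n ⟨v, a1, a2⟩ a3 a4
    have key : ∀ x ∈ α.vars, updOn (fun x => d0 n (idA x)) ((α.vars.image (· + w)).toList)
        (fun y => v (y - w)) (z x) = v x := by
      intro x hx
      rcases hz x with ⟨i', j', e1, e2, e3⟩ | ⟨e1, e2⟩
      · rw [e3]
        have : ¬ (i' : ℕ) ∈ (α.vars.image (· + w)).toList := by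
          simp only [Finset.mem_toList, Finset.mem_image, not_exists, not_and]
          intro y _ hy
          have := i'.2; omega
        simp only [updOn, if_neg this, idA_fin]
        rw [a3 _ _ e1, a2, e2]
      · rw [e2]
        have : x + w ∈ (α.vars.image (· + w)).toList := by
          simp only [Finset.mem_toList, Finset.mem_image]
          exact ⟨x, hx, rfl⟩
        simp only [updOn, if_pos this, Nat.add_sub_cancel]
    refine ⟨fun y => v (y - w), ?_, ?_⟩
    · rw [aren_sat]; exact (atomic_congr _ _ _ _ key).2 a1
    · rw [h4]
      refine (sat_congr _ _ _ _ (fun x _ => ?_)).1 a4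
      show d n (idA x) = updOn _ _ _ (z (π (idA x)))
      rw [key _ (hπ _), a2]

theorem forth [Countable (GF σ)] {s s' : Bool} {c : ∀ n, Fin w → (S s n).dom}
    {d0 d : ∀ n, Fin w → (S s' n).dom} (h : Eqv τ (S := S) ⟨s, c⟩ ⟨s', d0⟩)
    (hg : Gd τ (S := S) ⟨s', d⟩)
    (P : Fin w → Fin w → Prop) (hP : ∀ i j, P i j → ∀ᶠ n in U, d0 n i = d n j) :
    ∃ c2 : ∀ n, Fin w → (S s n).dom, Gd τ (S := S) ⟨s, c2⟩ ∧ Eqv τ (S := S) ⟨s, c2⟩ ⟨s', d⟩ ∧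
      ∀ i j, P i j → ∀ᶠ n in U, c n i = c2 n j := by
  classical
  obtain ⟨α, π, hα, hπ, hg⟩ := hg
  haveI : Nonempty {θ : GF σ // θ.WellGuarded ∧ θ.sig ⊆ τ} := ⟨⟨topF, topF_wg, by simp [topF_sig]⟩⟩
  obtain ⟨e, he⟩ := exists_surjective_nat {θ : GF σ // θ.WellGuarded ∧ θ.sig ⊆ τ}
  let E : ℕ → GF σ := fun j => if sv (S := S) ⟨s', d⟩ (e j).1 idA then (e j).1 else (e j).1.not
  have E1 : ∀ j, (E j).WellGuarded ∧ (E j).sig ⊆ τ ∧ sv (S := S) ⟨s', d⟩ (E j) idA := by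
    intro j
    by_cases hj : sv (S := S) ⟨s', d⟩ (e j).1 idA
    · simp only [E, if_pos hj]; exact ⟨(e j).2.1, (e j).2.2, hj⟩
    · simp only [E, if_neg hj]; exact ⟨(e j).2.1, (e j).2.2, (sv_not _ _ _).2 hj⟩
  let Q : ℕ → ∀ n, (ℕ → (S s n).dom) → Prop := fun k n v =>
    α.Sat _ v ∧ (∀ i j, P i j → c n i = v (π j)) ∧ ∀ j < k, (E j).Sat _ (fun x => v (π (idA x)))
  haveI : ∀ n, Nonempty (ℕ → (S s n).dom) := fun n => ⟨fun _ => c n 0⟩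
  obtain ⟨v, hv⟩ := diag (X := fun n => ℕ → (S s n).dom) (U : Filter ℕ)
    (Filter.hyperfilter_le_cofinite) Q
    (fun k n x hq => ⟨hq.1, hq.2.1, fun j hj => hq.2.2 j (by omega)⟩) (by
      intro k
      have := forth_step h α π hα hπ hg P hP (conj E k) (conj_wg E (fun j => (E1 j).1) k)
        (conj_sig E (fun j => (E1 j).2.1) k) (by
          have : ∀ᶠ n in U, ∀ j ∈ Finset.range k, (E j).Sat (S s' n) (fun x => d n (idA x)) :=
            (Finset.eventually_all _).2 (fun j _ => (E1 j).2.2)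
          filter_upwards [this] with n hn
          exact (conj_sat _ _ _ _).2 (fun j hj => hn j (by simpa using hj)))
      filter_upwards [this] with n ⟨v, a1, a2, a3⟩
      exact ⟨v, a1, a2, (conj_sat _ _ _ _).1 a3⟩)
  refine ⟨fun n m => v n (π m), ⟨α, π, hα, hπ, ?_⟩, ?_, ?_⟩
  · filter_upwards [hv 0] with n hn
    exact ⟨v n, hn.1, fun _ => rfl⟩
  · intro θ hw hs
    obtain ⟨j, hj⟩ := he ⟨θ, hw, hs⟩
    have hE : sv (S := S) ⟨s, fun n m => v n (π m)⟩ (E j) idA := by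
      filter_upwards [hv (j+1)] with n hn
      exact hn.2.2 j (by omega)
    by_cases hd : sv (S := S) ⟨s', d⟩ (e j).1 idA
    · simp only [E, if_pos hd] at hE
      rw [hj] at hE hd
      exact ⟨fun _ => hd, fun _ => hE⟩
    · simp only [E, if_neg hd] at hE
      rw [hj] at hE hd
      exact ⟨fun h => absurd h ((sv_not _ _ _).1 hE), fun h => absurd h hd⟩
  · intro i j hij
    filter_upwards [hv 0] with n hn
    exact hn.2.1 i j hij

end Sem
end GFI


namespace GFI
namespace Sem
open CData
variable {σ : Sig} {w : ℕ} [NeZero w] {S : Bool → ℕ → Str σ} {τ : Set σ.Rel} {L : Set (GF σ)}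

abbrev TTp (L : Set (GF σ)) (w : ℕ) : Type := Set (L × (Fin w → Fin w))

def tp (L : Set (GF σ)) (T : Tup S w) : TTp L w := {p | sv T p.1.1 (fun x => p.2 (idA x))}

def Psi (L : Set (GF σ)) (τ : Set σ.Rel) (T : Tup S w) : Set (TTp L w) :=
  {t | ∃ T' : Tup S w, Eqv τ T' T ∧ tp L T' = t}

theorem tp_sv (hL : ClosedL L w) {T T' : Tup S w} (h : tp L T = tp L T') (χ : GF σ) (hχ : χ ∈ L)
    (l : ℕ → Fin w) : sv T χ l ↔ sv T' χ l := by
  have key : ∀ T : Tup S w, sv T χ l ↔ (⟨⟨χ, hχ⟩, fun m => l m⟩ : L × (Fin w → Fin w)) ∈ tp L T := by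
    intro T
    refine (sv_congr T χ l _ (fun x hx => ?_)).trans Iff.rfl
    show l x = l ((idA x : Fin w) : ℕ)
    have : ((idA x : Fin w) : ℕ) = x := by
      simp [idA, Nat.mod_eq_of_lt (hL.fvw χ hχ x hx)]
    rw [this]
  rw [key, key, h]

theorem Psi_eqv {T T' : Tup S w} (h : Eqv τ T T') : Psi L τ T = Psi L τ T' := by
  ext t
  exact ⟨fun ⟨T1, a, b⟩ => ⟨T1, a.trans h, b⟩, fun ⟨T1, a, b⟩ => ⟨T1, a.trans h.symm, b⟩⟩

theorem Psi_sub_aux [Countable (GF σ)] (hL : ClosedL L w) {T T' : Tup S w} (hg : Gd τ T)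
    (h : Psi L τ T = Psi L τ T') (ρ : ℕ → Fin w) : Psi L τ (sub T ρ) ⊆ Psi L τ (sub T' ρ) := by
  rintro t ⟨⟨s, c⟩, h1, rfl⟩
  obtain ⟨s', d⟩ := T
  obtain ⟨c2, -, h3, h4⟩ := forth h1 hg (fun i j => j = ρ i) (by
    rintro i j rfl; exact Filter.Eventually.of_forall fun _ => rfl)
  have : tp L (S := S) ⟨s, c2⟩ ∈ Psi L τ T' := by rw [← h]; exact ⟨_, h3, rfl⟩
  obtain ⟨S', a1, a2⟩ := this
  refine ⟨sub S' ρ, a1.sub ρ, ?_⟩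
  ext ⟨⟨χ, hχ⟩, l⟩
  show sv S' χ (cmp ρ (fun x => l (idA x))) ↔ sv (S := S) ⟨s, c⟩ χ (fun x => l (idA x))
  rw [tp_sv hL a2 χ hχ]
  apply sv_ev
  intro x _
  filter_upwards [h4 (l (idA x)) _ rfl] with n hn
  exact hn.symm

theorem Psi_sub [Countable (GF σ)] (hL : ClosedL L w) {T T' : Tup S w} (hg : Gd τ T) (hg' : Gd τ T')
    (h : Psi L τ T = Psi L τ T') (ρ : ℕ → Fin w) : Psi L τ (sub T ρ) = Psi L τ (sub T' ρ) :=
  Set.Subset.antisymm (Psi_sub_aux hL hg h ρ) (Psi_sub_aux hL hg' h.symm ρ)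

theorem gd_eqv [Countable (GF σ)] {T T' : Tup S w} (h : Eqv τ T T') (hg : Gd τ T) : Gd τ T' := by
  obtain ⟨s, c⟩ := T
  obtain ⟨s', c'⟩ := T'
  obtain ⟨c2, h2, h3, h4⟩ := forth h.symm hg (fun i j => i = j) (by
    rintro i j rfl; exact Filter.Eventually.of_forall fun _ => rfl)
  refine gd_of_ev (fun m => ?_) h2
  filter_upwards [h4 m m rfl] with n hn using hn.symm

variable (S w τ L) in
def semC : CData σ w (Tup S w) (Set (TTp L w)) where
  val T f l := match f with
    | .inl χ => sv T χ l
    | .inr k => Gd τ (sub T l) ∧ Psi L τ (sub T l) = k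
  L := L
  τ := τ

theorem semC_col (T : Tup S w) (k) (l : ℕ → Fin w) :
    (semC w S τ L).col T k l ↔ (Gd τ (sub T l) ∧ Psi L τ (sub T l) = k) := Iff.rfl

theorem semC_eqv (T : Tup S w) (i j : Fin w) :
    (semC w S τ L).EqV T i j ↔ ∀ᶠ n in U, T.2 n i = T.2 n j := Iff.rfl

theorem col_congr (T : Tup S w) (k) (l l' : ℕ → Fin w) (h : ∀ x < w, l x = l' x) :
    (semC w S τ L).col T k l ↔ (semC w S τ L).col T k l' := by
  have : sub T l = sub T l' := by
    simp only [sub]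
    congr 1
    funext n m
    rw [h m m.2]
  rw [semC_col, semC_col, this]

theorem compat_of_ev {s : Bool} {c c' : ∀ n, Fin w → (S s n).dom} (O : Fin w → Fin w → Prop)
    (hO : ∀ i j, O i j → ∀ᶠ n in U, c n i = c' n j) :
    (semC w S τ L).Compat (⟨s, c⟩ : Tup S w) O (⟨s, c'⟩ : Tup S w) := by
  rintro (χ | k) _ l l' h
  · exact sv_ev χ l l' (fun x hx => hO _ _ (h x hx))
  · have hev : ∀ m : Fin w, ∀ᶠ n in U, c n (l m) = c' n (l' m) := fun m => hO _ _ (h m m.2)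
    have hev' : ∀ m : Fin w, ∀ᶠ n in U, c' n (l' m) = c n (l m) := fun m => by
      filter_upwards [hev m] with n hn using hn.symm
    have e1 : Psi L τ (sub (⟨s, c⟩ : Tup S w) l) = Psi L τ (sub (⟨s, c'⟩ : Tup S w) l') :=
      Psi_eqv (eqv_of_ev hev)
    show (Gd τ (sub (⟨s, c⟩ : Tup S w) l) ∧ _ = k) ↔ (Gd τ (sub (⟨s, c'⟩ : Tup S w) l') ∧ _ = k)
    rw [e1]
    exact and_congr_left fun _ => ⟨gd_of_ev hev, gd_of_ev hev'⟩

theorem updOn_self {D : Type} (v : ℕ → D) (ys : List ℕ) : updOn v ys v = v := by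
  funext x; simp [updOn]

theorem atoms_of_eqv {T T' : Tup S w} (hL : ClosedL L w)
    (h : tp L T ∈ Psi L τ T') (α : Atomic σ) (hα : GF.atom α ∈ L) (hs : α.sig ⊆ τ) (l : ℕ → Fin w) :
    sv T (.atom α) l ↔ sv T' (.atom α) l := by
  obtain ⟨T1, a, b⟩ := h
  rw [← tp_sv hL b _ hα]
  exact a.all (.atom α) trivial hs l

theorem mem_Psi (T : Tup S w) : tp L T ∈ Psi L τ T := ⟨T, Eqv.rfl', rfl⟩

theorem wit (hL : ClosedL L w) (T : Tup S w) (ys : List ℕ) (α : Atomic σ) (χ : GF σ) (l : ℕ → Fin w)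
    (hα : GF.atom α ∈ L) (hfv : χ.fv ⊆ α.vars)
    (h : ∀ᶠ n in U, ∃ w' : ℕ → (S T.1 n).dom, α.Sat _ (updOn (fun x => T.2 n (l x)) ys w') ∧
      χ.Sat _ (updOn (fun x => T.2 n (l x)) ys w')) :
    ∃ (T' : Tup S w) (O : Fin w → Fin w → Prop) (l' : ℕ → Fin w), (semC w S τ L).Compat T O T' ∧
      (∀ x ∈ α.vars, x ∉ ys → O (l x) (l' x)) ∧ sv T' (.atom α) l' ∧ sv T' χ l' := by
  obtain ⟨s, c⟩ := T
  have : ∀ n, ∃ w' : ℕ → (S s n).dom, (∃ w' : ℕ → (S s n).dom, α.Sat _ (updOn (fun x => c n (l x)) ys w') ∧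
      χ.Sat _ (updOn (fun x => c n (l x)) ys w')) → (α.Sat _ (updOn (fun x => c n (l x)) ys w') ∧
      χ.Sat _ (updOn (fun x => c n (l x)) ys w')) := by
    intro n
    by_cases hh : ∃ w' : ℕ → (S s n).dom, α.Sat _ (updOn (fun x => c n (l x)) ys w') ∧
      χ.Sat _ (updOn (fun x => c n (l x)) ys w')
    · obtain ⟨w', hw⟩ := hh; exact ⟨w', fun _ => hw⟩
    · exact ⟨fun _ => c n 0, fun h => absurd h hh⟩
  choose w' hw' using this
  have hid : ∀ x ∈ α.vars, ((idA x : Fin w) : ℕ) = x := by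
    intro x hx
    simp [idA, Nat.mod_eq_of_lt (hL.fvw _ hα x hx)]
  refine ⟨⟨s, fun n m => updOn (fun x => c n (l x)) ys (w' n) m⟩, fun i j => ∀ᶠ n in U, c n i =
    updOn (fun x => c n (l x)) ys (w' n) j, idA, compat_of_ev _ (fun i j h => h), ?_, ?_, ?_⟩
  · intro x hx hy
    refine Filter.Eventually.of_forall fun n => ?_
    rw [hid x hx]; simp [updOn, hy]
  · filter_upwards [h] with n hn
    refine (atomic_congr _ _ _ _ (fun x hx => ?_)).1 (hw' n hn).1
    rw [hid x hx]
  · filter_upwards [h] with n hn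
    refine (sat_congr _ _ _ _ (fun x hx => ?_)).1 (hw' n hn).2
    show _ = updOn _ _ _ ((idA x : Fin w) : ℕ)
    rw [hid x (hfv hx)]

theorem semC_sim [Countable (GF σ)] (hL : ClosedL L w) {T T' : Tup S w} {ρ ρ' : ℕ → Fin w}
    (hg : ∀ l, Gd τ (sub T (cmp ρ l)) ↔ Gd τ (sub T' (cmp ρ' l)))
    (hP : ∀ l, Gd τ (sub T (cmp ρ l)) → Psi L τ (sub T (cmp ρ l)) = Psi L τ (sub T' (cmp ρ' l)))
    (h : Psi L τ (sub T ρ) = Psi L τ (sub T' ρ')) : (semC w S τ L).Sim T ρ T' ρ' := by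
  have hm : tp L (sub T ρ) ∈ Psi L τ (sub T' ρ') := h ▸ mem_Psi _
  refine ⟨fun k l => ?_, fun i j => ?_, fun R hR ℓ hℓ l => ?_⟩
  · rw [semC_col, semC_col]
    constructor
    · rintro ⟨a, b⟩; exact ⟨(hg l).1 a, by rw [← hP l a]; exact b⟩
    · rintro ⟨a, b⟩; exact ⟨(hg l).2 a, by rw [hP l ((hg l).2 a)]; exact b⟩
  · exact atoms_of_eqv hL hm (.eq 0 1) hL.eq01 (by simp [Atomic.sig]) (two i j)
  · have hR : R ∈ τ := hR
    exact atoms_of_eqv hL hm (.rel R ℓ) hℓ (by simpa [Atomic.sig] using hR) l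

theorem semC_cert [Countable (GF σ)] (hL : ClosedL L w) (root : ∀ s n, Fin w → (S s n).dom)
    (hroot : ∀ s s', Eqv τ (S := S) ⟨s, root s⟩ ⟨s', root s'⟩) : (semC w S τ L).Cert := by
  constructor
  case cl => exact hL
  case refl => exact fun T i => Filter.Eventually.of_forall fun _ => rfl
  case eqa => exact fun T x y l _ => Iff.rfl
  case cong =>
    rintro ⟨s, c⟩
    exact compat_of_ev _ (fun i j h => h)
  case rel =>
    intro T R ℓ ℓ' l l' _ _ h hv
    have h' : ∀ᶠ n in U, ∀ k, T.2 n (l (ℓ k)) = T.2 n (l' (ℓ' k)) := Filter.eventually_all.2 h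
    have hv : sv T _ _ := hv
    show sv T _ _
    filter_upwards [h', hv] with n a b
    simp only [GF.Sat, Atomic.Sat] at b ⊢
    have : (fun k => T.2 n (l' (ℓ' k))) = fun k => T.2 n (l (ℓ k)) := by funext k; exact (a k).symm
    rw [this]; exact b
  case not' => exact fun T χ l _ => sv_not T χ l
  case and' => exact fun T χ ξ l _ => Filter.eventually_and
  case or' => exact fun T χ ξ l _ => Ultrafilter.eventually_or
  case gexi =>
    intro T ys α χ l _ h1 h2
    have h1 : sv T _ _ := h1
    have h2 : sv T _ _ := h2
    show sv T _ _
    filter_upwards [h1, h2] with n a b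
    exact ⟨fun x => T.2 n (l x), by rw [updOn_self]; exact a, by rw [updOn_self]; exact b⟩
  case galle =>
    intro T ys α χ l _ h1 h2
    have h1 : sv T _ _ := h1
    have h2 : sv T _ _ := h2
    show sv T _ _
    filter_upwards [h1, h2] with n a b
    have := a (fun x => T.2 n (l x))
    rw [updOn_self] at this
    exact this b
  case gexw =>
    intro T ys α χ l h h1
    exact wit hL T ys α χ l (hL.gex' _ _ _ h).1 (hL.wg _ h).1 h1
  case gallw =>
    intro T ys α χ l h h1
    obtain ⟨T', O, l', a, b, c, d⟩ := wit (τ := τ) hL T ys α χ.not l (hL.gall' _ _ _ h).1 (hL.wg _ h).1 (by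
      have := (sv_not T _ l).2 h1
      filter_upwards [this] with n hn
      simpa only [GF.Sat, not_forall, exists_prop] using hn)
    exact ⟨T', O, l', a, b, c, (sv_not _ _ _).1 d⟩
  case grel =>
    intro T R hR ℓ l ρ _ hv hρ
    have hv : sv T _ _ := hv
    have hR : R ∈ τ := hR
    refine ⟨_, (semC_col _ _ _).2 ⟨?_, rfl⟩⟩
    have hρ' : ∀ m : Fin w, ∃ k, ρ m = l (ℓ k) := fun m => hρ m m.2
    choose κ hκ using hρ'
    refine ⟨.rel R (fun k => (k : ℕ)), fun m => (κ m : ℕ), by simpa [Atomic.sig] using hR,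
      fun m => by simp [Atomic.vars], ?_⟩
    filter_upwards [hv] with n hn
    classical
    refine ⟨fun x => if hx : x < σ.arity R then T.2 n (l (ℓ ⟨x, hx⟩)) else T.2 n 0, ?_, fun m => ?_⟩
    · have e : (fun k : Fin (σ.arity R) => if hx : (k : ℕ) < σ.arity R then
          T.2 n (l (ℓ ⟨k, hx⟩)) else T.2 n 0) = fun k => T.2 n (l (ℓ k)) := by
        funext k; exact dif_pos k.2
      show (S T.1 n).interp R (fun k : Fin (σ.arity R) => if hx : (k : ℕ) < σ.arity R then
          T.2 n (l (ℓ ⟨k, hx⟩)) else T.2 n 0)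
      rw [e]
      exact hn
    · have e : (if hx : (κ m : ℕ) < σ.arity R then
          T.2 n (l (ℓ ⟨κ m, hx⟩)) else T.2 n 0) = T.2 n (l (ℓ (κ m))) := dif_pos (κ m).2
      show T.2 n (ρ m) = (if hx : (κ m : ℕ) < σ.arity R then
          T.2 n (l (ℓ ⟨κ m, hx⟩)) else T.2 n 0)
      rw [e, hκ]
  case gconst =>
    intro T j
    refine ⟨_, (semC_col _ _ _).2 ⟨?_, rfl⟩⟩
    refine ⟨.eq 0 0, fun _ => 0, by simp [Atomic.sig], by simp [Atomic.vars], ?_⟩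
    exact Filter.Eventually.of_forall fun n => ⟨fun _ => T.2 n j, rfl, fun _ => rfl⟩
  case gsub =>
    intro T k ρ h l
    exact ⟨_, (semC_col _ _ _).2 ⟨gd_sub l ((semC_col _ _ _).1 h).1, rfl⟩⟩
  case sim =>
    intro T T' k ρ ρ' h h'
    rw [semC_col] at h h'
    have e := h.2.trans h'.2.symm
    exact semC_sim hL (fun l => ⟨fun _ => gd_sub l h'.1, fun _ => gd_sub l h.1⟩)
      (fun l _ => Psi_sub hL h.1 h'.1 e l) e
  case ext =>
    intro T T1 k1 k0 ρ ρ' l h1 h2 h3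
    rw [semC_col] at h1 h2 h3
    have e := h1.2.trans h2.2.symm
    have hm : tp L (sub T ρ) ∈ Psi L τ (sub T1 (cmp ρ' l)) := e ▸ mem_Psi _
    obtain ⟨⟨s, c⟩, a1, a2⟩ := hm
    obtain ⟨s1, d⟩ := T1
    obtain ⟨c2, b1, b2, b3⟩ := forth a1 h3.1 (fun i j => j = l i) (by
      rintro i j rfl; exact Filter.Eventually.of_forall fun _ => rfl)
    have hev : ∀ m : Fin w, ∀ᶠ n in U, c n m = c2 n (l m) := fun m => b3 m _ rfl
    have hsub : sub (S := S) ⟨s, c2⟩ idA = ⟨s, c2⟩ := by simp [sub, idA_fin]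
    refine ⟨⟨s, c2⟩, fun i j => ∃ m < w, i = ρ m ∧ j = l m, ?_, fun m hm => ⟨m, hm, rfl, rfl⟩, ?_⟩
    · have lift : ∀ (X : Set ℕ) (f f' : ℕ → Fin w), (∀ x ∈ X, ∃ m < w, f x = ρ m ∧ f' x = l m) →
          ∃ g : ℕ → Fin w, ∀ x ∈ X, f x = ρ (g x) ∧ f' x = l (g x) := by
        intro X f f' h
        have : ∀ x, ∃ m : Fin w, x ∈ X → f x = ρ m ∧ f' x = l m := by
          intro x
          by_cases hx : x ∈ X
          · obtain ⟨m, hm, h1⟩ := h x hx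
            exact ⟨⟨m, hm⟩, fun _ => h1⟩
          · exact ⟨0, fun h => absurd h hx⟩
        choose g hg using this
        exact ⟨g, hg⟩
      rintro (χ | k) hf f f' hff
      · obtain ⟨g, hg⟩ := lift _ f f' hff
        show sv T χ f ↔ sv (S := S) ⟨s, c2⟩ χ f'
        rw [sv_congr T χ f (cmp ρ g) (fun x hx => (hg x hx).1),
          sv_congr _ χ f' (cmp l g) (fun x hx => (hg x hx).2)]
        have := tp_sv hL a2 χ hf.1 g
        refine this.symm.trans (sv_ev _ _ _ (fun x _ => hev _))
      · obtain ⟨g, hg⟩ := lift _ f f' hff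
        show (semC w S τ L).col T k f ↔ (semC w S τ L).col ⟨s, c2⟩ k f'
        rw [col_congr T k f (cmp ρ g) (fun x hx => (hg x hx).1),
          col_congr _ k f' (cmp l g) (fun x hx => (hg x hx).2)]
        rw [semC_col, semC_col]
        have p1 : Psi L τ (sub T (cmp ρ g)) = Psi L τ (sub (⟨s1, d⟩ : Tup S w) (cmp (cmp ρ' l) g)) :=
          Psi_sub hL h1.1 h2.1 e g
        have p2 : Psi L τ (sub (⟨s1, d⟩ : Tup S w) (cmp (cmp ρ' l) g)) = Psi L τ (sub (⟨s, c2⟩ : Tup S w) (cmp l g)) :=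
          (Psi_eqv (b2.sub (cmp l g))).symm
        rw [p1, p2]
        exact and_congr_left fun _ => ⟨fun _ => gd_sub _ b1, fun _ => gd_sub g h1.1⟩
    · rw [semC_col, hsub]
      exact ⟨b1, (Psi_eqv b2).trans h3.2⟩
  case glob =>
    intro T T1 k0 ρ' h
    rw [semC_col] at h
    obtain ⟨s, c⟩ := T
    obtain ⟨s1, d⟩ := T1
    obtain ⟨c2, b1, b2, -⟩ := forth (hroot s s1) h.1 (fun i j => False) (by simp)
    have hsub : sub (S := S) ⟨s, c2⟩ idA = ⟨s, c2⟩ := by simp [sub, idA_fin]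
    refine ⟨⟨s, c2⟩, fun i j => False, compat_of_ev _ (by simp), ?_⟩
    rw [semC_col, hsub]
    exact ⟨b1, (Psi_eqv b2).trans h.2⟩

theorem root_sim [Countable (GF σ)] (hL : ClosedL L w) {T T' : Tup S w} (h : Eqv τ T T') :
    (semC w S τ L).Sim T idA T' idA :=
  semC_sim hL (fun l => ⟨gd_eqv (h.sub _), gd_eqv (h.symm.sub _)⟩) (fun l _ => Psi_eqv (h.sub _))
    (Psi_eqv (h.sub _))

end Sem
end GFI


namespace GFI
namespace Sem
open CData
variable {σ : Sig} {w : ℕ} [NeZero w] {L : Set (GF σ)}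

theorem not_interp_one (n : ℕ) (φ ψ : GF σ) (hφ : φ.fv ⊆ Finset.range n) (hψ : ψ.fv ⊆ Finset.range n)
    (h : ¬ HasGFInterpolant n φ ψ) : ¬ HasGFInterpolant (max n 1) φ ψ := by
  rintro ⟨θ, h1, h2, h3, h4, h5⟩
  rcases Nat.eq_zero_or_pos n with rfl | hn
  · apply h
    have hφ' : ∀ x, x ∉ φ.fv := fun x hx => by simpa using hφ hx
    have hψ' : ∀ x, x ∉ ψ.fv := fun x hx => by simpa using hψ hx
    have h3' : ∀ x ∈ θ.fv, x = 0 := fun x hx => by simpa using h3 hx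
    refine ⟨.gex [0] (.eq 0 0) θ, ⟨?_, h1⟩, ?_, ?_, ?_, ?_⟩
    · intro x hx; simp [Atomic.vars, h3' x hx]
    · simpa [GF.sig, Atomic.sig] using h2
    · intro x hx
      simp only [GF.fv, Finset.mem_filter, Finset.mem_union, Atomic.vars] at hx
      rcases hx with ⟨hx | hx, hx'⟩
      · simp at hx; simp [hx] at hx'
      · simp [h3' x hx] at hx'
    · intro A v hv
      refine ⟨v, rfl, ?_⟩
      refine h4 A _ ((sat_congr A φ _ _ (fun x hx => absurd hx (hφ' x))).1 hv)
    · rintro A v ⟨u, -, hu⟩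
      exact (sat_congr A ψ _ _ (fun x hx => absurd hx (hψ' x))).1 (h5 A _ hu)
  · rw [max_eq_left hn] at h3
    exact h ⟨θ, h1, h2, h3, h4, h5⟩

theorem root_exists [Countable (GF σ)] (n : ℕ) (φ ψ : GF σ) (hφ : φ.fv ⊆ Finset.range n)
    (hψ : ψ.fv ⊆ Finset.range n) (hL : ClosedL L w) (hφL : φ ∈ L) (hψL : ψ ∈ L)
    (h : ¬ HasGFInterpolant n φ ψ) :
    ∃ (S : Bool → ℕ → Str σ) (TA TB : Tup S w), (semC w S (φ.sig ∩ ψ.sig) L).Cert ∧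
      (semC w S (φ.sig ∩ ψ.sig) L).Sim TA idA TB idA ∧
      (semC w S (φ.sig ∩ ψ.sig) L).val TA (.inl φ) idA ∧
      ¬ (semC w S (φ.sig ∩ ψ.sig) L).val TB (.inl ψ) idA := by
  have h' := not_interp_one n φ ψ hφ hψ h
  set n' := max n 1 with hn'
  have hnpos : 0 < n' := by omega
  have hnn : n ≤ n' := by omega
  set τ := φ.sig ∩ ψ.sig with hτ
  let u : ℕ → ℕ := fun x => min x (n' - 1)
  let ζ : ℕ → ℕ := fun x => u ((idA x : Fin w) : ℕ)
  have hren : ∀ θ : {θ : GF σ // θ.WellGuarded ∧ θ.sig ⊆ τ}, ∃ θ' : GF σ, Good τ n' θ' ∧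
      ∀ (A : Str σ) (v : ℕ → A.dom), θ'.Sat A v ↔ θ.1.Sat A (fun x => v (ζ x)) := by
    rintro ⟨θ, a, b⟩
    obtain ⟨θ', h1, h2, h3, h4⟩ := ren θ a ζ
    refine ⟨θ', ⟨h1, h2.trans b, fun x hx => ?_⟩, h4⟩
    obtain ⟨y, -, rfl⟩ := Finset.mem_image.1 (h3 hx)
    rw [Finset.mem_range]
    show min _ (n' - 1) < n'
    omega
  choose r hr1 hr2 using hren
  haveI : Nonempty {θ : GF σ // θ.WellGuarded ∧ θ.sig ⊆ τ} := ⟨⟨topF, topF_wg, by simp [topF_sig]⟩⟩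
  obtain ⟨e, he⟩ := exists_surjective_nat {θ : GF σ // θ.WellGuarded ∧ θ.sig ⊆ τ}
  have hk : ∀ k : ℕ, ∃ (A : Str σ) (v : ℕ → A.dom) (B : Str σ) (v' : ℕ → B.dom),
      (∀ j < k, (r (e j)).Sat A v ↔ (r (e j)).Sat B v') ∧ φ.Sat A v ∧ ¬ ψ.Sat B v' := by
    intro k
    by_contra hcon
    apply h'
    obtain ⟨θ, g, a, b⟩ := fin_interp τ n' ((List.range k).map fun j => r (e j)) (by
      intro f hf
      obtain ⟨j, -, rfl⟩ := List.mem_map.1 hf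
      exact hr1 _) (fun A v => φ.Sat A v) (fun A v => ψ.Sat A v) (by
      intro A v B v' hag hA
      by_contra hB
      exact hcon ⟨A, v, B, v', fun j hj => hag _ (List.mem_map.2 ⟨j, List.mem_range.2 hj, rfl⟩), hA, hB⟩)
    exact ⟨θ, g.wg, g.sig, g.fv, a, b⟩
  choose A v B v' hag hA hB using hk
  let S : Bool → ℕ → Str σ := fun s k => match s with | true => A k | false => B k
  let root : ∀ s n, Fin w → (S s n).dom := fun s k m => match s with
    | true => v k (u m)
    | false => v' k (u m)
  have hAB : Eqv τ (S := S) ⟨true, root true⟩ ⟨false, root false⟩ := by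
    intro θ hw hs
    obtain ⟨j, hj⟩ := he ⟨θ, hw, hs⟩
    apply Filter.eventually_congr
    have : ∀ᶠ k in (U : Filter ℕ), j < k := by
      apply Filter.hyperfilter_le_cofinite
      rw [Nat.cofinite_eq_atTop]
      exact Filter.eventually_gt_atTop j
    filter_upwards [this] with k hjk
    have := hag k j hjk
    rw [hr2, hr2, hj] at this
    exact this
  have hroot : ∀ s s', Eqv τ (S := S) ⟨s, root s⟩ ⟨s', root s'⟩ := by
    intro s s'
    cases s <;> cases s'
    · exact Eqv.rfl'
    · exact hAB.symm
    · exact hAB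
    · exact Eqv.rfl'
  have huid : ∀ x, x < n → x < w → u ((idA x : Fin w) : ℕ) = x := by
    intro x hx hxw
    have : ((idA x : Fin w) : ℕ) = x := by simp [idA, Nat.mod_eq_of_lt hxw]
    show min _ (n' - 1) = x
    rw [this]; omega
  refine ⟨S, ⟨true, root true⟩, ⟨false, root false⟩, semC_cert hL root hroot, root_sim hL hAB, ?_, ?_⟩
  · refine Filter.Eventually.of_forall fun k => ?_
    refine (sat_congr (A k) φ _ _ (fun x hx => ?_)).1 (hA k)
    show v k x = v k (u _)
    rw [huid x (by simpa using hφ hx) (hL.fvw _ hφL x hx)]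
  · rw [show (semC w S τ L).val ⟨false, root false⟩ (.inl ψ) idA = sv (S := S) ⟨false, root false⟩ ψ idA from rfl, ← sv_not]
    refine Filter.Eventually.of_forall fun k => ?_
    intro hc
    apply hB k
    refine (sat_congr (B k) ψ _ _ (fun x hx => ?_)).2 hc
    show v' k x = v' k (u _)
    rw [huid x (by simpa using hψ hx) (hL.fvw _ hψL x hx)]

end Sem
end GFI


namespace GFI
namespace Num

def bit (P i : ℕ) : Prop := P / 2 ^ i % 2 = 1

theorem bit_real (M : ℕ) (p : ℕ → Prop) : ∃ P < 2 ^ M, ∀ i < M, (bit P i ↔ p i) := by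
  classical
  refine ⟨Nat.ofBits (fun i : Fin M => decide (p i)), Nat.ofBits_lt_two_pow _, fun i hi => ?_⟩
  have h := Nat.testBit_ofBits_lt (fun i : Fin M => decide (p i)) i hi
  rw [Nat.testBit_eq_decide_div_mod_eq] at h
  simpa [bit] using h

def dg (N r x : ℕ) : ℕ := r / N ^ x % N

section
variable {w : ℕ} [NeZero w]

theorem dg_lt (r x : ℕ) : dg w r x < w := Nat.mod_lt _ (Nat.pos_of_ne_zero (NeZero.ne w))

/-- assignment with index r -/
def la (w : ℕ) [NeZero w] (r : ℕ) : ℕ → Fin w := fun x => ⟨dg w r x, dg_lt r x⟩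

def idx (l : ℕ → Fin w) : ℕ := (finFunctionFinEquiv (fun i : Fin w => l i) : Fin (w ^ w))

theorem idx_lt (l : ℕ → Fin w) : idx l < w ^ w := (finFunctionFinEquiv (fun i : Fin w => l i)).2

theorem dg_idx (l : ℕ → Fin w) (x : ℕ) (hx : x < w) : dg w (idx l) x = l x := by
  have h : finFunctionFinEquiv.symm (finFunctionFinEquiv (fun i : Fin w => l i)) ⟨x, hx⟩ = l x := by
    rw [Equiv.symm_apply_apply]
  rw [← h]
  rfl

theorem la_idx (l : ℕ → Fin w) (x : ℕ) (hx : x < w) : la w (idx l) x = l x :=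
  Fin.ext (dg_idx l x hx)

theorem dg_inj {r r' : ℕ} (h : r < w ^ w) (h' : r' < w ^ w) (e : ∀ x < w, dg w r x = dg w r' x) :
    r = r' := by
  have : finFunctionFinEquiv.symm (⟨r, h⟩ : Fin (w ^ w)) = finFunctionFinEquiv.symm ⟨r', h'⟩ := by
    funext x
    exact Fin.ext (e x x.2)
  simpa using this

theorem idx_la {r : ℕ} (h : r < w ^ w) : idx (la w r) = r :=
  dg_inj (idx_lt _) h fun x hx => by rw [dg_idx _ _ hx]; rfl

end

def f1 (c : ℕ) : ℕ := (Nat.unpair c).1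
def f2 (c : ℕ) : ℕ := (Nat.unpair c).2
@[simp] theorem f1_pair (a b : ℕ) : f1 (Nat.pair a b) = a := by simp [f1]
@[simp] theorem f2_pair (a b : ℕ) : f2 (Nat.pair a b) = b := by simp [f2]
def lst (m : ℕ) : List ℕ := Denumerable.ofNat (List ℕ) m
def llen (m : ℕ) : ℕ := (lst m).length
def lget (m k : ℕ) : ℕ := (lst m).getD k 0
def lmem (x m : ℕ) : Prop := ∃ k < llen m, lget m k = x

theorem lst_enc (l : List ℕ) : lst (Encodable.encode l) = l := Denumerable.ofNat_encode l

theorem lmem_iff (x m : ℕ) : lmem x m ↔ x ∈ lst m := by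
  unfold lmem llen lget
  rw [List.mem_iff_getElem]
  constructor
  · rintro ⟨k, h, e⟩; exact ⟨k, h, by rw [← e]; simp [h]⟩
  · rintro ⟨k, h, e⟩; exact ⟨k, h, by rw [← e]; simp [h]⟩

def avar (x A : ℕ) : Prop :=
  (f1 A = 0 ∧ (x = f1 (f2 A) ∨ x = f2 (f2 A))) ∨ (f1 A ≠ 0 ∧ lmem x (f2 (f2 A)))

variable {ar : ℕ → ℕ}

theorem llen_ofFn {n} (t : Fin n → ℕ) : llen (Encodable.encode (List.ofFn t)) = n := by
  simp [llen, lst_enc]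
theorem lget_ofFn {n} (t : Fin n → ℕ) (k : ℕ) (hk : k < n) :
    lget (Encodable.encode (List.ofFn t)) k = t ⟨k, hk⟩ := by
  simp [lget, lst_enc, hk]

theorem avar_iff (x : ℕ) (α : Atomic ⟨ℕ, ar⟩) : avar x (encAtom α) ↔ x ∈ α.vars := by
  cases α with
  | eq i j => simp [avar, encAtom, Atomic.vars]
  | rel R t => simp [avar, encAtom, Atomic.vars, lmem_iff, lst_enc, List.mem_ofFn]

theorem mem_le_encode (l : List ℕ) : ∀ x ∈ l, x ≤ Encodable.encode l := by
  induction l with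
  | nil => simp
  | cons y l ih =>
    intro x hx
    rw [Encodable.encode_list_cons]
    rcases List.mem_cons.1 hx with rfl | hx
    · have := Nat.left_le_pair x (Encodable.encode l)
      simp only [Encodable.encode_nat]; omega
    · have := Nat.right_le_pair y (Encodable.encode l)
      have := ih x hx
      simp only [Encodable.encode_nat]; omega

theorem le_p1 (a b : ℕ) : a ≤ Nat.pair a b := Nat.left_le_pair a b
theorem le_p2 (a b : ℕ) : b ≤ Nat.pair a b := Nat.right_le_pair a b

theorem vars_le (α : Atomic ⟨ℕ, ar⟩) (x) (hx : x ∈ α.vars) : x ≤ encAtom α := by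
  cases α with
  | eq i j =>
    simp [Atomic.vars] at hx
    rcases hx with rfl | rfl
    · exact ((le_p1 _ _).trans (le_p2 _ _))
    · exact ((le_p2 _ _).trans (le_p2 _ _))
  | rel R t =>
    have : x ∈ List.ofFn t := by simpa [Atomic.vars, List.mem_ofFn] using hx
    exact (mem_le_encode _ x this).trans ((le_p2 _ _).trans (le_p2 _ _))

theorem pair_mono {a b c d : ℕ} (h : a ≤ c) (h' : b ≤ d) : Nat.pair a b ≤ Nat.pair c d := by
  rcases h.lt_or_eq with h | rfl
  · rcases h'.lt_or_eq with h' | rfl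
    · exact ((Nat.pair_lt_pair_left _ h).trans (Nat.pair_lt_pair_right _ h')).le
    · exact (Nat.pair_lt_pair_left _ h).le
  · rcases h'.lt_or_eq with h' | rfl
    · exact (Nat.pair_lt_pair_right _ h').le
    · exact le_rfl

theorem pair_lt {a b c d : ℕ} (h : a < c) (h' : b < d) : Nat.pair a b < Nat.pair c d :=
  (Nat.pair_lt_pair_left _ h).trans (Nat.pair_lt_pair_right _ h')

theorem enc_gex_a (t : ℕ) (ys A c : ℕ) : Nat.pair 0 A ≤ Nat.pair t (Nat.pair ys (Nat.pair A c)) :=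
  pair_mono (Nat.zero_le _) ((le_p1 _ _).trans (le_p2 _ _))
theorem enc_gex_c (t : ℕ) (ys A c : ℕ) : c ≤ Nat.pair t (Nat.pair ys (Nat.pair A c)) :=
  ((le_p2 _ _).trans (le_p2 _ _)).trans (le_p2 _ _)

theorem fv_le (χ : GF ⟨ℕ, ar⟩) : ∀ x ∈ χ.fv, x ≤ encGF χ := by
  induction χ with
  | atom α => exact fun x hx => (vars_le α x hx).trans (le_p2 _ _)
  | not χ ih => exact fun x hx => (ih x hx).trans (le_p2 _ _)
  | and χ ξ h1 h2 =>
    intro x hx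
    rcases Finset.mem_union.1 hx with hx | hx
    · exact (h1 x hx).trans ((le_p1 _ _).trans (le_p2 _ _))
    · exact (h2 x hx).trans ((le_p2 _ _).trans (le_p2 _ _))
  | or χ ξ h1 h2 =>
    intro x hx
    rcases Finset.mem_union.1 hx with hx | hx
    · exact (h1 x hx).trans ((le_p1 _ _).trans (le_p2 _ _))
    · exact (h2 x hx).trans ((le_p2 _ _).trans (le_p2 _ _))
  | gex ys α χ h =>
    intro x hx
    rcases Finset.mem_union.1 (Finset.mem_filter.1 hx).1 with hx | hx
    · exact (vars_le α x hx).trans ((le_p2 _ _).trans (enc_gex_a _ _ _ _))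
    · exact (h x hx).trans (enc_gex_c _ _ _ _)
  | gall ys α χ h =>
    intro x hx
    rcases Finset.mem_union.1 (Finset.mem_filter.1 hx).1 with hx | hx
    · exact (vars_le α x hx).trans ((le_p2 _ _).trans (enc_gex_a _ _ _ _))
    · exact (h x hx).trans (enc_gex_c _ _ _ _)

theorem encAtom_inj : Function.Injective (encAtom : Atomic ⟨ℕ, ar⟩ → ℕ) := by
  intro α β h
  cases α <;> cases β <;> simp only [encAtom, Nat.pair_eq_pair] at h
  · obtain ⟨-, rfl, rfl⟩ := h; rfl
  · simp at h
  · simp at h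
  · obtain ⟨-, rfl, h⟩ := h
    have := List.ofFn_injective (Encodable.encode_injective h)
    rw [this]

theorem encGF_inj : Function.Injective (encGF : GF ⟨ℕ, ar⟩ → ℕ) := by
  intro χ
  induction χ with
  | atom α =>
    intro ξ h
    cases ξ <;> simp only [encGF, Nat.pair_eq_pair] at h
    · rw [encAtom_inj h.2]
    all_goals simp at h
  | not χ ih =>
    intro ξ h
    cases ξ <;> simp only [encGF, Nat.pair_eq_pair] at h
    case not => rw [ih h.2]
    all_goals simp at h
  | and χ χ' ih ih' =>
    intro ξ h
    cases ξ <;> simp only [encGF, Nat.pair_eq_pair] at h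
    case and => rw [ih h.2.1, ih' h.2.2]
    all_goals simp at h
  | or χ χ' ih ih' =>
    intro ξ h
    cases ξ <;> simp only [encGF, Nat.pair_eq_pair] at h
    case or => rw [ih h.2.1, ih' h.2.2]
    all_goals simp at h
  | gex ys α χ ih =>
    intro ξ h
    cases ξ <;> simp only [encGF, Nat.pair_eq_pair] at h
    case gex => rw [Encodable.encode_injective h.2.1, encAtom_inj h.2.2.1, ih h.2.2.2]
    all_goals simp at h
  | gall ys α χ ih =>
    intro ξ h
    cases ξ <;> simp only [encGF, Nat.pair_eq_pair] at h
    case gall => rw [Encodable.encode_injective h.2.1, encAtom_inj h.2.2.1, ih h.2.2.2]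
    all_goals simp at h

instance : Countable (GF ⟨ℕ, ar⟩) := encGF_inj.countable

theorem enc_eq01 : encGF (.atom (.eq 0 1) : GF ⟨ℕ, ar⟩) = 1 := by
  simp [encGF, encAtom]; decide

end Num
end GFI


namespace GFI
namespace Num

def Rn (N : ℕ) : ℕ := N ^ N
def Kn (N : ℕ) : ℕ := 2 ^ (2 ^ (N * N ^ N))
def Gn (N : ℕ) : ℕ := 2 ^ (Nat.pair (N + Kn N) (Rn N))
def On (N : ℕ) : ℕ := 2 ^ (Nat.pair N N)

def V (T c r : ℕ) : Prop := bit T (Nat.pair c r)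

def inL (L1 L2 c : ℕ) : Prop := bit L1 c ∨ bit L2 c

/-- atom code of a relational atom with symbol R -/
def isRel (c R : ℕ) : Prop := f1 c = 0 ∧ f1 (f2 c) = 1 ∧ f1 (f2 (f2 c)) = R
def ratoms (N L R : ℕ) : Prop := ∃ c < N, bit L c ∧ isRel c R
def tau (N L1 L2 R : ℕ) : Prop := ratoms N L1 R ∧ ratoms N L2 R
def args (c : ℕ) : ℕ := f2 (f2 (f2 c))

def qys (c : ℕ) : ℕ := f1 (f2 c)
def qA (c : ℕ) : ℕ := f1 (f2 (f2 c))
def qat (c : ℕ) : ℕ := Nat.pair 0 (qA c)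
def qch (c : ℕ) : ℕ := f2 (f2 (f2 c))

def isTwo (N r i j : ℕ) : Prop := dg N r 0 = i ∧ ∀ x < N, x ≠ 0 → dg N r x = j
def eqN (N T i j : ℕ) : Prop := ∃ r < Rn N, isTwo N r i j ∧ V T 1 r

def supp (N c x : ℕ) : Prop :=
  N ≤ c ∨ (f1 c = 0 ∧ avar x (f2 c)) ∨ (f1 c ≠ 0 ∧ avar x (qA c) ∧ ¬ lmem x (qys c))

def feat (N L1 L2 c : ℕ) : Prop :=
  N ≤ c ∨ (inL L1 L2 c ∧ (f1 c = 0 ∨ f1 c = 4 ∨ f1 c = 5))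

def oo (O i j : ℕ) : Prop := bit O (Nat.pair i j)

def compat (N L1 L2 T O T' : ℕ) : Prop :=
  ∀ c < N + Kn N, feat N L1 L2 c → ∀ r < Rn N, ∀ r' < Rn N,
    (∀ x < N, supp N c x → oo O (dg N r x) (dg N r' x)) → (V T c r ↔ V T' c r')

def isCmp (N m ρ l : ℕ) : Prop := ∀ x < N, dg N m x = dg N ρ (dg N l x)
def isId (N m : ℕ) : Prop := ∀ x < N, dg N m x = x

def col (N T k ρ : ℕ) : Prop := V T (N + k) ρ

def simC (N T ρ T' ρ' : ℕ) : Prop :=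
  ∀ k < Kn N, ∀ l < Rn N, ∀ m < Rn N, ∀ m' < Rn N, isCmp N m ρ l → isCmp N m' ρ' l →
    (col N T k m ↔ col N T' k m')
def simE (N T ρ T' ρ' : ℕ) : Prop :=
  ∀ i < N, ∀ j < N, (eqN N T (dg N ρ i) (dg N ρ j) ↔ eqN N T' (dg N ρ' i) (dg N ρ' j))
def simR (N L1 L2 T ρ T' ρ' : ℕ) : Prop :=
  ∀ c < N, inL L1 L2 c → isRel c (qA c) → tau N L1 L2 (qA c) →
    ∀ l < Rn N, ∀ m < Rn N, ∀ m' < Rn N, isCmp N m ρ l → isCmp N m' ρ' l →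
    (V T c m ↔ V T' c m')
def sim (N L1 L2 T ρ T' ρ' : ℕ) : Prop :=
  simC N T ρ T' ρ' ∧ simE N T ρ T' ρ' ∧ simR N L1 L2 T ρ T' ρ'

def clos (N L : ℕ) : Prop := ∀ c < N, bit L c →
  (f1 c = 1 → bit L (f2 c)) ∧
  ((f1 c = 2 ∨ f1 c = 3) → bit L (f1 (f2 c)) ∧ bit L (f2 (f2 c))) ∧
  ((f1 c = 4 ∨ f1 c = 5) → bit L (qat c) ∧ bit L (qch c))

def cRefl (N T : ℕ) : Prop := ∀ i < N, eqN N T i i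
def cEqa (N L1 L2 T : ℕ) : Prop := ∀ c < N, inL L1 L2 c → f1 c = 0 → f1 (f2 c) = 0 →
  ∀ r < Rn N, (V T c r ↔ eqN N T (dg N r (f1 (f2 (f2 c)))) (dg N r (f2 (f2 (f2 c)))))
def cCong (N L1 L2 T : ℕ) : Prop := ∃ O < On N,
  (∀ i < N, ∀ j < N, (oo O i j ↔ eqN N T i j)) ∧ compat N L1 L2 T O T
def cRel (N L1 L2 T : ℕ) : Prop := ∀ c < N, ∀ c' < N, inL L1 L2 c → inL L1 L2 c' →
  isRel c (qA c) → isRel c' (qA c) → ∀ r < Rn N, ∀ r' < Rn N,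
  (∀ k < llen (args c), eqN N T (dg N r (lget (args c) k)) (dg N r' (lget (args c') k))) →
  V T c r → V T c' r'
def cBool (N L1 L2 T : ℕ) : Prop := ∀ c < N, inL L1 L2 c → ∀ r < Rn N,
  (f1 c = 1 → (V T c r ↔ ¬ V T (f2 c) r)) ∧
  (f1 c = 2 → (V T c r ↔ (V T (f1 (f2 c)) r ∧ V T (f2 (f2 c)) r))) ∧
  (f1 c = 3 → (V T c r ↔ (V T (f1 (f2 c)) r ∨ V T (f2 (f2 c)) r))) ∧
  (f1 c = 4 → V T (qat c) r → V T (qch c) r → V T c r) ∧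
  (f1 c = 5 → V T c r → V T (qat c) r → V T (qch c) r)

/-- existence of a neighbour for a quantifier -/
def nb (N L1 L2 T T' c r r' : ℕ) : Prop := ∃ O < On N, compat N L1 L2 T O T' ∧
  (∀ x < N, avar x (qA c) → ¬ lmem x (qys c) → oo O (dg N r x) (dg N r' x)) ∧ V T' (qat c) r'

def cGex (N L1 L2 P T : ℕ) : Prop := ∀ c < N, inL L1 L2 c → f1 c = 4 → ∀ r < Rn N, V T c r →
  ∃ T' < Gn N, bit P T' ∧ ∃ r' < Rn N, nb N L1 L2 T T' c r r' ∧ V T' (qch c) r'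
def cGall (N L1 L2 P T : ℕ) : Prop := ∀ c < N, inL L1 L2 c → f1 c = 5 → ∀ r < Rn N, ¬ V T c r →
  ∃ T' < Gn N, bit P T' ∧ ∃ r' < Rn N, nb N L1 L2 T T' c r r' ∧ ¬ V T' (qch c) r'
def hasCol (N T ρ : ℕ) : Prop := ∃ k < Kn N, col N T k ρ
def cGrel (N L1 L2 T : ℕ) : Prop := ∀ c < N, inL L1 L2 c → isRel c (qA c) → tau N L1 L2 (qA c) →
  ∀ r < Rn N, ∀ ρ < Rn N, V T c r →
  (∀ m < N, ∃ k < llen (args c), dg N ρ m = dg N r (lget (args c) k)) → hasCol N T ρ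
def cGconst (N T : ℕ) : Prop := ∀ j < N, ∀ ρ < Rn N, (∀ x < N, dg N ρ x = j) → hasCol N T ρ
def cGsub (N T : ℕ) : Prop := ∀ k < Kn N, ∀ ρ < Rn N, col N T k ρ → ∀ l < Rn N, ∀ m < Rn N,
  isCmp N m ρ l → hasCol N T m
def cSim (N L1 L2 T T' : ℕ) : Prop := ∀ k < Kn N, ∀ ρ < Rn N, ∀ ρ' < Rn N,
  col N T k ρ → col N T' k ρ' → sim N L1 L2 T ρ T' ρ'
def colId (N T k : ℕ) : Prop := ∃ i < Rn N, isId N i ∧ col N T k i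
def cExt (N L1 L2 P T T1 : ℕ) : Prop := ∀ k1 < Kn N, ∀ k0 < Kn N, ∀ ρ < Rn N, ∀ ρ' < Rn N,
  ∀ l < Rn N, ∀ m < Rn N, col N T k1 ρ → isCmp N m ρ' l → col N T1 k1 m → col N T1 k0 ρ' →
  ∃ T2 < Gn N, bit P T2 ∧ ∃ O < On N, compat N L1 L2 T O T2 ∧
    (∀ x < N, oo O (dg N ρ x) (dg N l x)) ∧ colId N T2 k0
def cGlob (N L1 L2 P T T1 : ℕ) : Prop := ∀ k0 < Kn N, ∀ ρ' < Rn N, col N T1 k0 ρ' →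
  ∃ T2 < Gn N, bit P T2 ∧ ∃ O < On N, compat N L1 L2 T O T2 ∧ colId N T2 k0

def cUn (N L1 L2 P T : ℕ) : Prop := cRefl N T ∧ cEqa N L1 L2 T ∧ cCong N L1 L2 T ∧ cRel N L1 L2 T ∧
  cBool N L1 L2 T ∧ cGex N L1 L2 P T ∧ cGall N L1 L2 P T ∧ cGrel N L1 L2 T ∧ cGconst N T ∧ cGsub N T
def cBin (N L1 L2 P T T' : ℕ) : Prop :=
  cSim N L1 L2 T T' ∧ cExt N L1 L2 P T T' ∧ cGlob N L1 L2 P T T'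
def cRoot (N L1 L2 P a b : ℕ) : Prop := ∃ TA < Gn N, bit P TA ∧ ∃ TB < Gn N, bit P TB ∧
  ∃ i < Rn N, isId N i ∧ sim N L1 L2 TA i TB i ∧ V TA a i ∧ ¬ V TB b i

def cAll (N L1 L2 P a b : ℕ) : Prop :=
  (bit L1 1 ∧ bit L1 a ∧ bit L2 b ∧ clos N L1 ∧ clos N L2) ∧
  (∀ T < Gn N, bit P T → cUn N L1 L2 P T) ∧
  (∀ T < Gn N, bit P T → ∀ T' < Gn N, bit P T' → cBin N L1 L2 P T T') ∧ cRoot N L1 L2 P a b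

def NumCert (N a b : ℕ) : Prop := ∃ L1 < 2 ^ N, ∃ L2 < 2 ^ N, ∃ P < 2 ^ (Gn N), cAll N L1 L2 P a b

end Num
end GFI


namespace GFI
namespace Num
section
variable {α : Type} [Primcodable α]

theorem pr_imp {p q : α → Prop} (hp : PrimrecPred p) (hq : PrimrecPred q) :
    PrimrecPred fun a => p a → q a := by
  refine (hp.not.or hq).of_eq fun a => ?_
  tauto
theorem pr_iff {p q : α → Prop} (hp : PrimrecPred p) (hq : PrimrecPred q) :
    PrimrecPred fun a => p a ↔ q a := by
  refine ((pr_imp hp hq).and (pr_imp hq hp)).of_eq fun a => ?_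
  tauto
theorem pr_and {p q : α → Prop} (hp : PrimrecPred p) (hq : PrimrecPred q) :
    PrimrecPred fun a => p a ∧ q a := hp.and hq
theorem pr_or {p q : α → Prop} (hp : PrimrecPred p) (hq : PrimrecPred q) :
    PrimrecPred fun a => p a ∨ q a := hp.or hq
theorem pr_not {p : α → Prop} (hp : PrimrecPred p) :
    PrimrecPred fun a => ¬ p a := hp.not

theorem pr_ex {b : α → ℕ} {p : α → ℕ → Prop} (hb : Primrec b)
    (hp : PrimrecPred fun x : α × ℕ => p x.1 x.2) : PrimrecPred fun a => ∃ x < b a, p a x := by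
  have h : PrimrecRel (fun (x : ℕ) (a : α) => p a x) :=
    PrimrecPred.comp (f := fun y : ℕ × α => (y.2, y.1)) hp (Primrec.pair Primrec.snd Primrec.fst)
  have h2 := PrimrecRel.exists_mem_list h
  have h3 := h2.comp (f := fun a => List.range (b a)) (g := fun a => a) (Primrec.list_range.comp hb) Primrec.id
  refine h3.of_eq fun a => ?_
  simp
theorem pr_all {b : α → ℕ} {p : α → ℕ → Prop} (hb : Primrec b)
    (hp : PrimrecPred fun x : α × ℕ => p x.1 x.2) : PrimrecPred fun a => ∀ x < b a, p a x := by
  refine (pr_ex (p := fun a x => ¬ p a x) hb hp.not).not.of_eq fun a => ?_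
  push Not
  rfl

theorem pr_eq {f g : α → ℕ} (hf : Primrec f) (hg : Primrec g) : PrimrecPred fun a => f a = g a :=
  Primrec.eq.comp hf hg
theorem pr_ne {f g : α → ℕ} (hf : Primrec f) (hg : Primrec g) : PrimrecPred fun a => f a ≠ g a :=
  (pr_eq hf hg).not
theorem pr_le {f g : α → ℕ} (hf : Primrec f) (hg : Primrec g) : PrimrecPred fun a => f a ≤ g a :=
  Primrec.nat_le.comp hf hg

theorem pr_pow {f g : α → ℕ} (hf : Primrec f) (hg : Primrec g) : Primrec fun a => f a ^ g a := by
  have : Primrec₂ (fun a b : ℕ => a ^ b) := Primrec₂.unpaired'.1 Nat.Primrec.pow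
  exact this.comp hf hg
theorem pr_add {f g : α → ℕ} (hf : Primrec f) (hg : Primrec g) : Primrec fun a => f a + g a :=
  Primrec.nat_add.comp hf hg
theorem pr_mul {f g : α → ℕ} (hf : Primrec f) (hg : Primrec g) : Primrec fun a => f a * g a :=
  Primrec.nat_mul.comp hf hg
theorem pr_div {f g : α → ℕ} (hf : Primrec f) (hg : Primrec g) : Primrec fun a => f a / g a :=
  Primrec.nat_div.comp hf hg
theorem pr_mod {f g : α → ℕ} (hf : Primrec f) (hg : Primrec g) : Primrec fun a => f a % g a :=
  Primrec.nat_mod.comp hf hg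
theorem pr_pair {f g : α → ℕ} (hf : Primrec f) (hg : Primrec g) : Primrec fun a => Nat.pair (f a) (g a) :=
  Primrec₂.natPair.comp hf hg
theorem pr_f1 {f : α → ℕ} (hf : Primrec f) : Primrec fun a => f1 (f a) :=
  Primrec.fst.comp (Primrec.unpair.comp hf)
theorem pr_f2 {f : α → ℕ} (hf : Primrec f) : Primrec fun a => f2 (f a) :=
  Primrec.snd.comp (Primrec.unpair.comp hf)
theorem pr_lst : Primrec lst := Primrec.ofNat (List ℕ)
theorem pr_llen {f : α → ℕ} (hf : Primrec f) : Primrec fun a => llen (f a) :=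
  Primrec.list_length.comp (pr_lst.comp hf)
theorem pr_lget {f g : α → ℕ} (hf : Primrec f) (hg : Primrec g) : Primrec fun a => lget (f a) (g a) :=
  (Primrec.list_getD 0).comp (pr_lst.comp hf) hg
theorem pr_dg {f g h : α → ℕ} (hf : Primrec f) (hg : Primrec g) (hh : Primrec h) :
    Primrec fun a => dg (f a) (g a) (h a) :=
  pr_mod (pr_div hg (pr_pow hf hh)) hf
theorem pr_fst {β γ : Type} [Primcodable β] [Primcodable γ] {f : α → β × γ} (hf : Primrec f) :
    Primrec fun a => (f a).1 := Primrec.fst.comp hf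
theorem pr_snd {β γ : Type} [Primcodable β] [Primcodable γ] {f : α → β × γ} (hf : Primrec f) :
    Primrec fun a => (f a).2 := Primrec.snd.comp hf
theorem pr_id : Primrec fun a : α => a := Primrec.id
theorem pr_Rn {f : α → ℕ} (hf : Primrec f) : Primrec fun a => Rn (f a) := pr_pow hf hf
theorem pr_Kn {f : α → ℕ} (hf : Primrec f) : Primrec fun a => Kn (f a) :=
  pr_pow (Primrec.const 2) (pr_pow (Primrec.const 2) (pr_mul hf (pr_pow hf hf)))
theorem pr_Gn {f : α → ℕ} (hf : Primrec f) : Primrec fun a => Gn (f a) :=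
  pr_pow (Primrec.const 2) (pr_pair (pr_add hf (pr_Kn hf)) (pr_Rn hf))
theorem pr_On {f : α → ℕ} (hf : Primrec f) : Primrec fun a => On (f a) :=
  pr_pow (Primrec.const 2) (pr_pair hf hf)
theorem pr_args {f : α → ℕ} (hf : Primrec f) : Primrec fun a => args (f a) := pr_f2 (pr_f2 (pr_f2 hf))
theorem pr_qys {f : α → ℕ} (hf : Primrec f) : Primrec fun a => qys (f a) := pr_f1 (pr_f2 hf)
theorem pr_qA {f : α → ℕ} (hf : Primrec f) : Primrec fun a => qA (f a) := pr_f1 (pr_f2 (pr_f2 hf))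
theorem pr_qat {f : α → ℕ} (hf : Primrec f) : Primrec fun a => qat (f a) := pr_pair (Primrec.const 0) (pr_qA hf)
theorem pr_qch {f : α → ℕ} (hf : Primrec f) : Primrec fun a => qch (f a) := pr_f2 (pr_f2 (pr_f2 hf))

theorem pr_bit {f g : α → ℕ} (hf : Primrec f) (hg : Primrec g) : PrimrecPred fun a => bit (f a) (g a) :=
  pr_eq (pr_mod (pr_div hf (pr_pow (Primrec.const 2) hg)) (Primrec.const 2)) (Primrec.const 1)

end
end Num
end GFI


namespace GFI
namespace Num
variable {α : Type} [Primcodable α]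

attribute [local irreducible] Rn Kn Gn On args qys qA qat qch f1 f2 llen lget dg lmem avar V inL isRel ratoms tau isTwo eqN supp feat oo compat isCmp isId col simC simE simR sim clos cRefl cEqa cCong cRel cBool nb cGex cGall hasCol cGrel cGconst cGsub cSim colId cExt cGlob cUn cBin cRoot cAll bit

theorem pr_lmem {g1 g2 : α → ℕ} (h1 : Primrec g1) (h2 : Primrec g2) :
    PrimrecPred fun a => lmem (g1 a) (g2 a) := by
  unfold lmem
  with_reducible repeat' first | apply pr_ex | apply pr_eq | apply Primrec.const | apply pr_llen | apply pr_lget | apply h1.comp | apply h2.comp | apply pr_fst | apply pr_snd | apply pr_id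

theorem pr_avar {g1 g2 : α → ℕ} (h1 : Primrec g1) (h2 : Primrec g2) :
    PrimrecPred fun a => avar (g1 a) (g2 a) := by
  unfold avar
  with_reducible repeat' first | apply pr_ne | apply pr_and | apply pr_or | apply pr_lmem | apply pr_eq | apply Primrec.const | apply pr_f1 | apply pr_f2 | apply h1.comp | apply h2.comp | apply pr_id

theorem pr_V {g1 g2 g3 : α → ℕ} (h1 : Primrec g1) (h2 : Primrec g2) (h3 : Primrec g3) :
    PrimrecPred fun a => V (g1 a) (g2 a) (g3 a) := by
  unfold V
  with_reducible repeat' first | apply pr_bit | apply Primrec.const | apply pr_pair | apply h1.comp | apply h2.comp | apply h3.comp | apply pr_id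

theorem pr_inL {g1 g2 g3 : α → ℕ} (h1 : Primrec g1) (h2 : Primrec g2) (h3 : Primrec g3) :
    PrimrecPred fun a => inL (g1 a) (g2 a) (g3 a) := by
  unfold inL
  with_reducible repeat' first | apply pr_or | apply pr_bit | apply Primrec.const | apply h1.comp | apply h2.comp | apply h3.comp | apply pr_id

theorem pr_isRel {g1 g2 : α → ℕ} (h1 : Primrec g1) (h2 : Primrec g2) :
    PrimrecPred fun a => isRel (g1 a) (g2 a) := by
  unfold isRel
  with_reducible repeat' first | apply pr_and | apply pr_eq | apply Primrec.const | apply pr_f1 | apply pr_f2 | apply h1.comp | apply h2.comp | apply pr_id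

theorem pr_ratoms {g1 g2 g3 : α → ℕ} (h1 : Primrec g1) (h2 : Primrec g2) (h3 : Primrec g3) :
    PrimrecPred fun a => ratoms (g1 a) (g2 a) (g3 a) := by
  unfold ratoms
  with_reducible repeat' first | apply pr_ex | apply pr_and | apply pr_isRel | apply pr_bit | apply Primrec.const | apply h1.comp | apply h2.comp | apply h3.comp | apply pr_fst | apply pr_snd | apply pr_id

theorem pr_tau {g1 g2 g3 g4 : α → ℕ} (h1 : Primrec g1) (h2 : Primrec g2) (h3 : Primrec g3) (h4 : Primrec g4) :
    PrimrecPred fun a => tau (g1 a) (g2 a) (g3 a) (g4 a) := by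
  unfold tau
  with_reducible repeat' first | apply pr_and | apply pr_ratoms | apply Primrec.const | apply h1.comp | apply h2.comp | apply h3.comp | apply h4.comp | apply pr_id

theorem pr_isTwo {g1 g2 g3 g4 : α → ℕ} (h1 : Primrec g1) (h2 : Primrec g2) (h3 : Primrec g3) (h4 : Primrec g4) :
    PrimrecPred fun a => isTwo (g1 a) (g2 a) (g3 a) (g4 a) := by
  unfold isTwo
  with_reducible repeat' first | apply pr_all | apply pr_ne | apply pr_imp | apply pr_and | apply pr_eq | apply Primrec.const | apply pr_dg | apply h1.comp | apply h2.comp | apply h3.comp | apply h4.comp | apply pr_fst | apply pr_snd | apply pr_id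

theorem pr_eqN {g1 g2 g3 g4 : α → ℕ} (h1 : Primrec g1) (h2 : Primrec g2) (h3 : Primrec g3) (h4 : Primrec g4) :
    PrimrecPred fun a => eqN (g1 a) (g2 a) (g3 a) (g4 a) := by
  unfold eqN
  with_reducible repeat' first | apply pr_ex | apply pr_and | apply pr_V | apply pr_isTwo | apply Primrec.const | apply pr_Rn | apply h1.comp | apply h2.comp | apply h3.comp | apply h4.comp | apply pr_fst | apply pr_snd | apply pr_id

theorem pr_supp {g1 g2 g3 : α → ℕ} (h1 : Primrec g1) (h2 : Primrec g2) (h3 : Primrec g3) :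
    PrimrecPred fun a => supp (g1 a) (g2 a) (g3 a) := by
  unfold supp
  with_reducible repeat' first | apply pr_not | apply pr_ne | apply pr_and | apply pr_or | apply pr_le | apply pr_lmem | apply pr_avar | apply pr_eq | apply Primrec.const | apply pr_qys | apply pr_qA | apply pr_f1 | apply pr_f2 | apply h1.comp | apply h2.comp | apply h3.comp | apply pr_id

theorem pr_feat {g1 g2 g3 g4 : α → ℕ} (h1 : Primrec g1) (h2 : Primrec g2) (h3 : Primrec g3) (h4 : Primrec g4) :
    PrimrecPred fun a => feat (g1 a) (g2 a) (g3 a) (g4 a) := by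
  unfold feat
  with_reducible repeat' first | apply pr_and | apply pr_or | apply pr_le | apply pr_inL | apply pr_eq | apply Primrec.const | apply pr_f1 | apply h1.comp | apply h2.comp | apply h3.comp | apply h4.comp | apply pr_id

theorem pr_oo {g1 g2 g3 : α → ℕ} (h1 : Primrec g1) (h2 : Primrec g2) (h3 : Primrec g3) :
    PrimrecPred fun a => oo (g1 a) (g2 a) (g3 a) := by
  unfold oo
  with_reducible repeat' first | apply pr_bit | apply Primrec.const | apply pr_pair | apply h1.comp | apply h2.comp | apply h3.comp | apply pr_id

theorem pr_compat {g1 g2 g3 g4 g5 g6 : α → ℕ} (h1 : Primrec g1) (h2 : Primrec g2) (h3 : Primrec g3) (h4 : Primrec g4) (h5 : Primrec g5) (h6 : Primrec g6) :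
    PrimrecPred fun a => compat (g1 a) (g2 a) (g3 a) (g4 a) (g5 a) (g6 a) := by
  unfold compat
  with_reducible repeat' first | apply pr_all | apply pr_imp | apply pr_iff | apply pr_V | apply pr_supp | apply pr_feat | apply pr_oo | apply Primrec.const | apply pr_Rn | apply pr_Kn | apply pr_dg | apply pr_add | apply h1.comp | apply h2.comp | apply h3.comp | apply h4.comp | apply h5.comp | apply h6.comp | apply pr_fst | apply pr_snd | apply pr_id

theorem pr_isCmp {g1 g2 g3 g4 : α → ℕ} (h1 : Primrec g1) (h2 : Primrec g2) (h3 : Primrec g3) (h4 : Primrec g4) :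
    PrimrecPred fun a => isCmp (g1 a) (g2 a) (g3 a) (g4 a) := by
  unfold isCmp
  with_reducible repeat' first | apply pr_all | apply pr_eq | apply Primrec.const | apply pr_dg | apply h1.comp | apply h2.comp | apply h3.comp | apply h4.comp | apply pr_fst | apply pr_snd | apply pr_id

theorem pr_isId {g1 g2 : α → ℕ} (h1 : Primrec g1) (h2 : Primrec g2) :
    PrimrecPred fun a => isId (g1 a) (g2 a) := by
  unfold isId
  with_reducible repeat' first | apply pr_all | apply pr_eq | apply Primrec.const | apply pr_dg | apply h1.comp | apply h2.comp | apply pr_fst | apply pr_snd | apply pr_id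

theorem pr_col {g1 g2 g3 g4 : α → ℕ} (h1 : Primrec g1) (h2 : Primrec g2) (h3 : Primrec g3) (h4 : Primrec g4) :
    PrimrecPred fun a => col (g1 a) (g2 a) (g3 a) (g4 a) := by
  unfold col
  with_reducible repeat' first | apply pr_V | apply Primrec.const | apply pr_add | apply h1.comp | apply h2.comp | apply h3.comp | apply h4.comp | apply pr_id

theorem pr_simC {g1 g2 g3 g4 g5 : α → ℕ} (h1 : Primrec g1) (h2 : Primrec g2) (h3 : Primrec g3) (h4 : Primrec g4) (h5 : Primrec g5) :
    PrimrecPred fun a => simC (g1 a) (g2 a) (g3 a) (g4 a) (g5 a) := by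
  unfold simC
  with_reducible repeat' first | apply pr_all | apply pr_imp | apply pr_iff | apply pr_isCmp | apply pr_col | apply Primrec.const | apply pr_Rn | apply pr_Kn | apply h1.comp | apply h2.comp | apply h3.comp | apply h4.comp | apply h5.comp | apply pr_fst | apply pr_snd | apply pr_id

theorem pr_simE {g1 g2 g3 g4 g5 : α → ℕ} (h1 : Primrec g1) (h2 : Primrec g2) (h3 : Primrec g3) (h4 : Primrec g4) (h5 : Primrec g5) :
    PrimrecPred fun a => simE (g1 a) (g2 a) (g3 a) (g4 a) (g5 a) := by
  unfold simE
  with_reducible repeat' first | apply pr_all | apply pr_iff | apply pr_eqN | apply Primrec.const | apply pr_dg | apply h1.comp | apply h2.comp | apply h3.comp | apply h4.comp | apply h5.comp | apply pr_fst | apply pr_snd | apply pr_id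

theorem pr_simR {g1 g2 g3 g4 g5 g6 g7 : α → ℕ} (h1 : Primrec g1) (h2 : Primrec g2) (h3 : Primrec g3) (h4 : Primrec g4) (h5 : Primrec g5) (h6 : Primrec g6) (h7 : Primrec g7) :
    PrimrecPred fun a => simR (g1 a) (g2 a) (g3 a) (g4 a) (g5 a) (g6 a) (g7 a) := by
  unfold simR
  with_reducible repeat' first | apply pr_all | apply pr_imp | apply pr_iff | apply pr_V | apply pr_inL | apply pr_isRel | apply pr_tau | apply pr_isCmp | apply Primrec.const | apply pr_Rn | apply pr_qA | apply h1.comp | apply h2.comp | apply h3.comp | apply h4.comp | apply h5.comp | apply h6.comp | apply h7.comp | apply pr_fst | apply pr_snd | apply pr_id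

theorem pr_sim {g1 g2 g3 g4 g5 g6 g7 : α → ℕ} (h1 : Primrec g1) (h2 : Primrec g2) (h3 : Primrec g3) (h4 : Primrec g4) (h5 : Primrec g5) (h6 : Primrec g6) (h7 : Primrec g7) :
    PrimrecPred fun a => sim (g1 a) (g2 a) (g3 a) (g4 a) (g5 a) (g6 a) (g7 a) := by
  unfold sim
  with_reducible repeat' first | apply pr_and | apply pr_simC | apply pr_simE | apply pr_simR | apply Primrec.const | apply h1.comp | apply h2.comp | apply h3.comp | apply h4.comp | apply h5.comp | apply h6.comp | apply h7.comp | apply pr_id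

theorem pr_clos {g1 g2 : α → ℕ} (h1 : Primrec g1) (h2 : Primrec g2) :
    PrimrecPred fun a => clos (g1 a) (g2 a) := by
  unfold clos
  with_reducible repeat' first | apply pr_all | apply pr_imp | apply pr_and | apply pr_or | apply pr_bit | apply pr_eq | apply Primrec.const | apply pr_qat | apply pr_qch | apply pr_f1 | apply pr_f2 | apply h1.comp | apply h2.comp | apply pr_fst | apply pr_snd | apply pr_id

theorem pr_cRefl {g1 g2 : α → ℕ} (h1 : Primrec g1) (h2 : Primrec g2) :
    PrimrecPred fun a => cRefl (g1 a) (g2 a) := by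
  unfold cRefl
  with_reducible repeat' first | apply pr_all | apply pr_eqN | apply Primrec.const | apply h1.comp | apply h2.comp | apply pr_fst | apply pr_snd | apply pr_id

theorem pr_cEqa {g1 g2 g3 g4 : α → ℕ} (h1 : Primrec g1) (h2 : Primrec g2) (h3 : Primrec g3) (h4 : Primrec g4) :
    PrimrecPred fun a => cEqa (g1 a) (g2 a) (g3 a) (g4 a) := by
  unfold cEqa
  with_reducible repeat' first | apply pr_all | apply pr_imp | apply pr_iff | apply pr_V | apply pr_inL | apply pr_eqN | apply pr_eq | apply Primrec.const | apply pr_Rn | apply pr_f1 | apply pr_f2 | apply pr_dg | apply h1.comp | apply h2.comp | apply h3.comp | apply h4.comp | apply pr_fst | apply pr_snd | apply pr_id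

theorem pr_cCong {g1 g2 g3 g4 : α → ℕ} (h1 : Primrec g1) (h2 : Primrec g2) (h3 : Primrec g3) (h4 : Primrec g4) :
    PrimrecPred fun a => cCong (g1 a) (g2 a) (g3 a) (g4 a) := by
  unfold cCong
  with_reducible repeat' first | apply pr_all | apply pr_ex | apply pr_iff | apply pr_and | apply pr_eqN | apply pr_oo | apply pr_compat | apply Primrec.const | apply pr_On | apply h1.comp | apply h2.comp | apply h3.comp | apply h4.comp | apply pr_fst | apply pr_snd | apply pr_id

theorem pr_cRel {g1 g2 g3 g4 : α → ℕ} (h1 : Primrec g1) (h2 : Primrec g2) (h3 : Primrec g3) (h4 : Primrec g4) :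
    PrimrecPred fun a => cRel (g1 a) (g2 a) (g3 a) (g4 a) := by
  unfold cRel
  with_reducible repeat' first | apply pr_all | apply pr_imp | apply pr_V | apply pr_inL | apply pr_isRel | apply pr_eqN | apply Primrec.const | apply pr_Rn | apply pr_args | apply pr_qA | apply pr_llen | apply pr_lget | apply pr_dg | apply h1.comp | apply h2.comp | apply h3.comp | apply h4.comp | apply pr_fst | apply pr_snd | apply pr_id

theorem pr_cBool {g1 g2 g3 g4 : α → ℕ} (h1 : Primrec g1) (h2 : Primrec g2) (h3 : Primrec g3) (h4 : Primrec g4) :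
    PrimrecPred fun a => cBool (g1 a) (g2 a) (g3 a) (g4 a) := by
  unfold cBool
  with_reducible repeat' first | apply pr_all | apply pr_not | apply pr_imp | apply pr_iff | apply pr_and | apply pr_or | apply pr_V | apply pr_inL | apply pr_eq | apply Primrec.const | apply pr_Rn | apply pr_qat | apply pr_qch | apply pr_f1 | apply pr_f2 | apply h1.comp | apply h2.comp | apply h3.comp | apply h4.comp | apply pr_fst | apply pr_snd | apply pr_id

theorem pr_nb {g1 g2 g3 g4 g5 g6 g7 g8 : α → ℕ} (h1 : Primrec g1) (h2 : Primrec g2) (h3 : Primrec g3) (h4 : Primrec g4) (h5 : Primrec g5) (h6 : Primrec g6) (h7 : Primrec g7) (h8 : Primrec g8) :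
    PrimrecPred fun a => nb (g1 a) (g2 a) (g3 a) (g4 a) (g5 a) (g6 a) (g7 a) (g8 a) := by
  unfold nb
  with_reducible repeat' first | apply pr_all | apply pr_ex | apply pr_not | apply pr_imp | apply pr_and | apply pr_lmem | apply pr_avar | apply pr_V | apply pr_oo | apply pr_compat | apply Primrec.const | apply pr_On | apply pr_qys | apply pr_qA | apply pr_qat | apply pr_dg | apply h1.comp | apply h2.comp | apply h3.comp | apply h4.comp | apply h5.comp | apply h6.comp | apply h7.comp | apply h8.comp | apply pr_fst | apply pr_snd | apply pr_id

theorem pr_cGex {g1 g2 g3 g4 g5 : α → ℕ} (h1 : Primrec g1) (h2 : Primrec g2) (h3 : Primrec g3) (h4 : Primrec g4) (h5 : Primrec g5) :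
    PrimrecPred fun a => cGex (g1 a) (g2 a) (g3 a) (g4 a) (g5 a) := by
  unfold cGex
  with_reducible repeat' first | apply pr_all | apply pr_ex | apply pr_imp | apply pr_and | apply pr_V | apply pr_inL | apply pr_nb | apply pr_bit | apply pr_eq | apply Primrec.const | apply pr_Rn | apply pr_Gn | apply pr_qch | apply pr_f1 | apply h1.comp | apply h2.comp | apply h3.comp | apply h4.comp | apply h5.comp | apply pr_fst | apply pr_snd | apply pr_id

theorem pr_cGall {g1 g2 g3 g4 g5 : α → ℕ} (h1 : Primrec g1) (h2 : Primrec g2) (h3 : Primrec g3) (h4 : Primrec g4) (h5 : Primrec g5) :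
    PrimrecPred fun a => cGall (g1 a) (g2 a) (g3 a) (g4 a) (g5 a) := by
  unfold cGall
  with_reducible repeat' first | apply pr_all | apply pr_ex | apply pr_not | apply pr_imp | apply pr_and | apply pr_V | apply pr_inL | apply pr_nb | apply pr_bit | apply pr_eq | apply Primrec.const | apply pr_Rn | apply pr_Gn | apply pr_qch | apply pr_f1 | apply h1.comp | apply h2.comp | apply h3.comp | apply h4.comp | apply h5.comp | apply pr_fst | apply pr_snd | apply pr_id

theorem pr_hasCol {g1 g2 g3 : α → ℕ} (h1 : Primrec g1) (h2 : Primrec g2) (h3 : Primrec g3) :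
    PrimrecPred fun a => hasCol (g1 a) (g2 a) (g3 a) := by
  unfold hasCol
  with_reducible repeat' first | apply pr_ex | apply pr_col | apply Primrec.const | apply pr_Kn | apply h1.comp | apply h2.comp | apply h3.comp | apply pr_fst | apply pr_snd | apply pr_id

theorem pr_cGrel {g1 g2 g3 g4 : α → ℕ} (h1 : Primrec g1) (h2 : Primrec g2) (h3 : Primrec g3) (h4 : Primrec g4) :
    PrimrecPred fun a => cGrel (g1 a) (g2 a) (g3 a) (g4 a) := by
  unfold cGrel
  with_reducible repeat' first | apply pr_all | apply pr_ex | apply pr_imp | apply pr_V | apply pr_inL | apply pr_isRel | apply pr_tau | apply pr_hasCol | apply pr_eq | apply Primrec.const | apply pr_Rn | apply pr_args | apply pr_qA | apply pr_llen | apply pr_lget | apply pr_dg | apply h1.comp | apply h2.comp | apply h3.comp | apply h4.comp | apply pr_fst | apply pr_snd | apply pr_id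

theorem pr_cGconst {g1 g2 : α → ℕ} (h1 : Primrec g1) (h2 : Primrec g2) :
    PrimrecPred fun a => cGconst (g1 a) (g2 a) := by
  unfold cGconst
  with_reducible repeat' first | apply pr_all | apply pr_imp | apply pr_hasCol | apply pr_eq | apply Primrec.const | apply pr_Rn | apply pr_dg | apply h1.comp | apply h2.comp | apply pr_fst | apply pr_snd | apply pr_id

theorem pr_cGsub {g1 g2 : α → ℕ} (h1 : Primrec g1) (h2 : Primrec g2) :
    PrimrecPred fun a => cGsub (g1 a) (g2 a) := by
  unfold cGsub
  with_reducible repeat' first | apply pr_all | apply pr_imp | apply pr_isCmp | apply pr_col | apply pr_hasCol | apply Primrec.const | apply pr_Rn | apply pr_Kn | apply h1.comp | apply h2.comp | apply pr_fst | apply pr_snd | apply pr_id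

theorem pr_cSim {g1 g2 g3 g4 g5 : α → ℕ} (h1 : Primrec g1) (h2 : Primrec g2) (h3 : Primrec g3) (h4 : Primrec g4) (h5 : Primrec g5) :
    PrimrecPred fun a => cSim (g1 a) (g2 a) (g3 a) (g4 a) (g5 a) := by
  unfold cSim
  with_reducible repeat' first | apply pr_all | apply pr_imp | apply pr_col | apply pr_sim | apply Primrec.const | apply pr_Rn | apply pr_Kn | apply h1.comp | apply h2.comp | apply h3.comp | apply h4.comp | apply h5.comp | apply pr_fst | apply pr_snd | apply pr_id

theorem pr_colId {g1 g2 g3 : α → ℕ} (h1 : Primrec g1) (h2 : Primrec g2) (h3 : Primrec g3) :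
    PrimrecPred fun a => colId (g1 a) (g2 a) (g3 a) := by
  unfold colId
  with_reducible repeat' first | apply pr_ex | apply pr_and | apply pr_isId | apply pr_col | apply Primrec.const | apply pr_Rn | apply h1.comp | apply h2.comp | apply h3.comp | apply pr_fst | apply pr_snd | apply pr_id

theorem pr_cExt {g1 g2 g3 g4 g5 g6 : α → ℕ} (h1 : Primrec g1) (h2 : Primrec g2) (h3 : Primrec g3) (h4 : Primrec g4) (h5 : Primrec g5) (h6 : Primrec g6) :
    PrimrecPred fun a => cExt (g1 a) (g2 a) (g3 a) (g4 a) (g5 a) (g6 a) := by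
  unfold cExt
  with_reducible repeat' first | apply pr_all | apply pr_ex | apply pr_imp | apply pr_and | apply pr_oo | apply pr_compat | apply pr_isCmp | apply pr_col | apply pr_colId | apply pr_bit | apply Primrec.const | apply pr_Rn | apply pr_Kn | apply pr_Gn | apply pr_On | apply pr_dg | apply h1.comp | apply h2.comp | apply h3.comp | apply h4.comp | apply h5.comp | apply h6.comp | apply pr_fst | apply pr_snd | apply pr_id

theorem pr_cGlob {g1 g2 g3 g4 g5 g6 : α → ℕ} (h1 : Primrec g1) (h2 : Primrec g2) (h3 : Primrec g3) (h4 : Primrec g4) (h5 : Primrec g5) (h6 : Primrec g6) :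
    PrimrecPred fun a => cGlob (g1 a) (g2 a) (g3 a) (g4 a) (g5 a) (g6 a) := by
  unfold cGlob
  with_reducible repeat' first | apply pr_all | apply pr_ex | apply pr_imp | apply pr_and | apply pr_compat | apply pr_col | apply pr_colId | apply pr_bit | apply Primrec.const | apply pr_Rn | apply pr_Kn | apply pr_Gn | apply pr_On | apply h1.comp | apply h2.comp | apply h3.comp | apply h4.comp | apply h5.comp | apply h6.comp | apply pr_fst | apply pr_snd | apply pr_id

theorem pr_cUn {g1 g2 g3 g4 g5 : α → ℕ} (h1 : Primrec g1) (h2 : Primrec g2) (h3 : Primrec g3) (h4 : Primrec g4) (h5 : Primrec g5) :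
    PrimrecPred fun a => cUn (g1 a) (g2 a) (g3 a) (g4 a) (g5 a) := by
  unfold cUn
  with_reducible repeat' first | apply pr_and | apply pr_cRefl | apply pr_cEqa | apply pr_cCong | apply pr_cRel | apply pr_cBool | apply pr_cGex | apply pr_cGall | apply pr_cGrel | apply pr_cGconst | apply pr_cGsub | apply Primrec.const | apply h1.comp | apply h2.comp | apply h3.comp | apply h4.comp | apply h5.comp | apply pr_id

theorem pr_cBin {g1 g2 g3 g4 g5 g6 : α → ℕ} (h1 : Primrec g1) (h2 : Primrec g2) (h3 : Primrec g3) (h4 : Primrec g4) (h5 : Primrec g5) (h6 : Primrec g6) :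
    PrimrecPred fun a => cBin (g1 a) (g2 a) (g3 a) (g4 a) (g5 a) (g6 a) := by
  unfold cBin
  with_reducible repeat' first | apply pr_and | apply pr_cSim | apply pr_cExt | apply pr_cGlob | apply Primrec.const | apply h1.comp | apply h2.comp | apply h3.comp | apply h4.comp | apply h5.comp | apply h6.comp | apply pr_id

theorem pr_cRoot {g1 g2 g3 g4 g5 g6 : α → ℕ} (h1 : Primrec g1) (h2 : Primrec g2) (h3 : Primrec g3) (h4 : Primrec g4) (h5 : Primrec g5) (h6 : Primrec g6) :
    PrimrecPred fun a => cRoot (g1 a) (g2 a) (g3 a) (g4 a) (g5 a) (g6 a) := by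
  unfold cRoot
  with_reducible repeat' first | apply pr_ex | apply pr_not | apply pr_and | apply pr_V | apply pr_isId | apply pr_sim | apply pr_bit | apply Primrec.const | apply pr_Rn | apply pr_Gn | apply h1.comp | apply h2.comp | apply h3.comp | apply h4.comp | apply h5.comp | apply h6.comp | apply pr_fst | apply pr_snd | apply pr_id

theorem pr_cAll {g1 g2 g3 g4 g5 g6 : α → ℕ} (h1 : Primrec g1) (h2 : Primrec g2) (h3 : Primrec g3) (h4 : Primrec g4) (h5 : Primrec g5) (h6 : Primrec g6) :
    PrimrecPred fun a => cAll (g1 a) (g2 a) (g3 a) (g4 a) (g5 a) (g6 a) := by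
  unfold cAll
  with_reducible repeat' first | apply pr_all | apply pr_imp | apply pr_and | apply pr_clos | apply pr_cUn | apply pr_cBin | apply pr_cRoot | apply pr_bit | apply Primrec.const | apply pr_Gn | apply h1.comp | apply h2.comp | apply h3.comp | apply h4.comp | apply h5.comp | apply h6.comp | apply pr_fst | apply pr_snd | apply pr_id

end Num
end GFI


namespace GFI
namespace Num
open CData
variable {ar : ℕ → ℕ}

theorem Rn_eq (N : ℕ) : Rn N = N ^ N := rfl

theorem qat_gex (t ys : ℕ) (α : Atomic ⟨ℕ, ar⟩) (c : ℕ) :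
    qat (Nat.pair t (Nat.pair ys (Nat.pair (encAtom α) c))) = encGF (GF.atom α) := by
  simp [qat, qA, encGF]
theorem qch_gex (t ys A c : ℕ) : qch (Nat.pair t (Nat.pair ys (Nat.pair A c))) = c := by simp [qch]
theorem qA_gex (t ys A c : ℕ) : qA (Nat.pair t (Nat.pair ys (Nat.pair A c))) = A := by simp [qA]
theorem qys_gex (t ys c : ℕ) : qys (Nat.pair t (Nat.pair ys c)) = ys := by simp [qys]

theorem supp_iff {N : ℕ} (χ : GF ⟨ℕ, ar⟩) (hw : χ.WellGuarded) (hb : isBase χ) (hN : encGF χ < N)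
    (x : ℕ) : supp N (encGF χ) x ↔ x ∈ χ.fv := by
  have hN' : ¬ N ≤ encGF χ := by omega
  unfold supp
  rw [or_iff_right hN']
  cases χ with
  | atom α => simp [encGF, avar_iff, GF.fv]
  | not _ => exact hb.elim
  | and _ _ => exact hb.elim
  | or _ _ => exact hb.elim
  | gex ys α χ =>
    have : α.vars ∪ χ.fv = α.vars := Finset.union_eq_left.2 hw.1
    simp [encGF, qA, qys, avar_iff, GF.fv, lmem_iff, lst_enc, this]
  | gall ys α χ =>
    have : α.vars ∪ χ.fv = α.vars := Finset.union_eq_left.2 hw.1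
    simp [encGF, qA, qys, avar_iff, GF.fv, lmem_iff, lst_enc, this]

theorem isRel_enc (R : ℕ) (ℓ : Fin (ar R) → ℕ) :
    isRel (encGF (.atom (.rel R ℓ) : GF ⟨ℕ, ar⟩)) R := by simp [isRel, encGF, encAtom]
theorem qA_rel (R : ℕ) (ℓ : Fin (ar R) → ℕ) :
    qA (encGF (.atom (.rel R ℓ) : GF ⟨ℕ, ar⟩)) = R := by simp [qA, encGF, encAtom]
theorem args_rel (R : ℕ) (ℓ : Fin (ar R) → ℕ) :
    args (encGF (.atom (.rel R ℓ) : GF ⟨ℕ, ar⟩)) = Encodable.encode (List.ofFn ℓ) := by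
  simp [args, encGF, encAtom]

theorem isTwo_idx {N : ℕ} [NeZero N] (i j : Fin N) : isTwo N (idx (two i j)) i j := by
  have hp : 0 < N := Nat.pos_of_ne_zero (NeZero.ne N)
  refine ⟨?_, fun x hx h0 => ?_⟩
  · rw [dg_idx _ _ hp]; simp [two]
  · rw [dg_idx _ _ hx]; simp [two, h0]

theorem eqN_iff {N : ℕ} [NeZero N] (T : ℕ) (i j : Fin N) : eqN N T i j ↔ V T 1 (idx (two i j)) := by
  constructor
  · rintro ⟨r, hr, ⟨h0, h1⟩, hV⟩
    have : r = idx (two i j) := by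
      refine dg_inj hr (idx_lt _) fun x hx => ?_
      rw [dg_idx _ _ hx]
      by_cases h : x = 0
      · subst h; simpa [two] using h0
      · simpa [two, h] using h1 x hx h
    rw [← this]; exact hV
  · exact fun h => ⟨_, idx_lt _, isTwo_idx i j, h⟩

theorem isCmp_idx {N : ℕ} [NeZero N] (ρ l : ℕ → Fin N) : isCmp N (idx (cmp ρ l)) (idx ρ) (idx l) := by
  intro x hx
  rw [dg_idx _ _ hx, dg_idx l _ hx, dg_idx _ _ (l x).2]; rfl

theorem isId_eq {N : ℕ} [NeZero N] {i : ℕ} (hi : i < Rn N) (h : isId N i) : i = idx (idA : ℕ → Fin N) := by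
  refine dg_inj hi (idx_lt _) fun x hx => ?_
  rw [dg_idx _ _ hx, h x hx]
  simp [idA, Nat.mod_eq_of_lt hx]

theorem isId_idx {N : ℕ} [NeZero N] : isId N (idx (idA : ℕ → Fin N)) := by
  intro x hx
  rw [dg_idx _ _ hx]
  simp [idA, Nat.mod_eq_of_lt hx]

section
variable (ar) in
def numC (N : ℕ) (L1 L2 P : ℕ) [NeZero N] :
    CData ⟨ℕ, ar⟩ N {T : ℕ // T < Gn N ∧ bit P T} (Fin (Kn N)) where
  val T f l := match f with
    | .inl χ => V T.1 (encGF χ) (idx l)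
    | .inr k => V T.1 (N + k) (idx l)
  L := {χ | encGF χ < N ∧ inL L1 L2 (encGF χ) ∧ χ.WellGuarded}
  τ := {R | tau N L1 L2 R}

variable {N L1 L2 P a b : ℕ} [NeZero N]

theorem numC_EqV (T) (i j : Fin N) : (numC ar N L1 L2 P).EqV T i j ↔ eqN N T.1 i j := by
  rw [eqN_iff]
  show V T.1 (encGF _) _ ↔ _
  rw [enc_eq01]

theorem numC_compat {T T' : {T : ℕ // T < Gn N ∧ bit P T}} {O : ℕ} (h : compat N L1 L2 T.1 O T'.1) :
    (numC ar N L1 L2 P).Compat T (fun i j => oo O i j) T' := by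
  intro f hf l l' hl
  cases f with
  | inl χ =>
    obtain ⟨⟨h1, h2, h3⟩, hb⟩ := hf
    refine h (encGF χ) (by omega) (Or.inr ⟨h2, ?_⟩) _ (idx_lt l) _ (idx_lt l') ?_
    · cases χ with
      | atom α => simp [encGF]
      | gex ys α χ => simp [encGF]
      | gall ys α χ => simp [encGF]
      | not _ => exact hb.elim
      | and _ _ => exact hb.elim
      | or _ _ => exact hb.elim
    · intro x hx hs
      rw [dg_idx _ _ hx, dg_idx _ _ hx]
      exact hl x ((supp_iff χ h3 hb h1 x).1 hs)
  | inr k =>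
    refine h (N + k) (by omega) (Or.inl (by omega)) _ (idx_lt l) _ (idx_lt l') ?_
    intro x hx _
    rw [dg_idx _ _ hx, dg_idx _ _ hx]
    exact hl x hx

theorem numC_sim {T T' : {T : ℕ // T < Gn N ∧ bit P T}} {ρ ρ' : ℕ → Fin N}
    (h : sim N L1 L2 T.1 (idx ρ) T'.1 (idx ρ')) : (numC ar N L1 L2 P).Sim T ρ T' ρ' := by
  obtain ⟨h1, h2, h3⟩ := h
  constructor
  · intro k l
    exact h1 k k.2 _ (idx_lt l) _ (idx_lt _) _ (idx_lt _) (isCmp_idx _ _) (isCmp_idx _ _)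
  · intro i j
    rw [numC_EqV, numC_EqV]
    have := h2 i i.2 j j.2
    rwa [dg_idx _ _ i.2, dg_idx _ _ j.2, dg_idx _ _ i.2, dg_idx _ _ j.2] at this
  · intro R hR ℓ hℓ l
    exact h3 _ hℓ.1 hℓ.2.1 (by rw [qA_rel]; exact isRel_enc R ℓ) (by rw [qA_rel]; exact hR) _ (idx_lt l)
      _ (idx_lt _) _ (idx_lt _) (isCmp_idx _ _) (isCmp_idx _ _)

theorem clos_inL (h1 : clos N L1) (h2 : clos N L2) {c : ℕ} (hc : c < N) (h : inL L1 L2 c) :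
    (f1 c = 1 → inL L1 L2 (f2 c)) ∧
    ((f1 c = 2 ∨ f1 c = 3) → inL L1 L2 (f1 (f2 c)) ∧ inL L1 L2 (f2 (f2 c))) ∧
    ((f1 c = 4 ∨ f1 c = 5) → inL L1 L2 (qat c) ∧ inL L1 L2 (qch c)) := by
  rcases h with h | h
  · obtain ⟨a, b, d⟩ := h1 c hc h
    exact ⟨fun e => .inl (a e), fun e => ⟨.inl (b e).1, .inl (b e).2⟩, fun e => ⟨.inl (d e).1, .inl (d e).2⟩⟩
  · obtain ⟨a, b, d⟩ := h2 c hc h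
    exact ⟨fun e => .inr (a e), fun e => ⟨.inr (b e).1, .inr (b e).2⟩, fun e => ⟨.inr (d e).1, .inr (d e).2⟩⟩

theorem numC_closed (h : cAll N L1 L2 P a b) (hN : 1 < N) : ClosedL (numC ar N L1 L2 P).L N := by
  obtain ⟨⟨e1, -, -, c1, c2⟩, -⟩ := h
  have hc : ∀ c < N, _ := fun c hc => clos_inL (c := c) c1 c2 hc
  constructor
  · refine ⟨by rw [enc_eq01]; exact hN, by rw [enc_eq01]; exact Or.inl e1, trivial⟩
  · exact fun χ h => h.2.2
  · rintro χ ⟨h1, h2, h3⟩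
    refine ⟨lt_of_le_of_lt (le_p2 _ _) h1, ?_, h3⟩
    simpa [encGF] using (hc _ h1 h2).1 (by simp [encGF])
  · rintro χ ξ ⟨h1, h2, h3⟩
    have := (hc _ h1 h2).2.1 (by simp [encGF])
    simp only [encGF, f2_pair, f1_pair] at this
    exact ⟨⟨lt_of_le_of_lt ((le_p1 _ _).trans (le_p2 _ _)) h1, this.1, h3.1⟩,
      ⟨lt_of_le_of_lt ((le_p2 _ _).trans (le_p2 _ _)) h1, this.2, h3.2⟩⟩
  · rintro χ ξ ⟨h1, h2, h3⟩
    have := (hc _ h1 h2).2.1 (by simp [encGF])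
    simp only [encGF, f2_pair, f1_pair] at this
    exact ⟨⟨lt_of_le_of_lt ((le_p1 _ _).trans (le_p2 _ _)) h1, this.1, h3.1⟩,
      ⟨lt_of_le_of_lt ((le_p2 _ _).trans (le_p2 _ _)) h1, this.2, h3.2⟩⟩
  · rintro ys α χ ⟨h1, h2, h3⟩
    have := (hc _ h1 h2).2.2 (by simp [encGF])
    rw [encGF, qat_gex, qch_gex] at this
    exact ⟨⟨lt_of_le_of_lt (enc_gex_a _ _ _ _) h1, this.1, trivial⟩,
      ⟨lt_of_le_of_lt (enc_gex_c _ _ _ _) h1, this.2, h3.2⟩⟩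
  · rintro ys α χ ⟨h1, h2, h3⟩
    have := (hc _ h1 h2).2.2 (by simp [encGF])
    rw [encGF, qat_gex, qch_gex] at this
    exact ⟨⟨lt_of_le_of_lt (enc_gex_a _ _ _ _) h1, this.1, trivial⟩,
      ⟨lt_of_le_of_lt (enc_gex_c _ _ _ _) h1, this.2, h3.2⟩⟩
  · exact fun χ h x hx => lt_of_le_of_lt (fv_le χ x hx) h.1

theorem nb_abs {T T' : {T : ℕ // T < Gn N ∧ bit P T}} {t : ℕ} (ys : List ℕ) (α : Atomic ⟨ℕ, ar⟩)
    (χ : GF ⟨ℕ, ar⟩) (hα : encAtom α < N) (l : ℕ → Fin N) (r' : ℕ) (hr' : r' < Rn N)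
    (h : nb N L1 L2 T.1 T'.1 (Nat.pair t (Nat.pair (Encodable.encode ys) (Nat.pair (encAtom α) (encGF χ))))
      (idx l) r') :
    ∃ O, (numC ar N L1 L2 P).Compat T O T' ∧ (∀ x ∈ α.vars, x ∉ ys → O (l x) (la N r' x)) ∧
      (numC ar N L1 L2 P).val T' (.inl (.atom α)) (la N r') := by
  obtain ⟨O, -, h1, h2, h3⟩ := h
  refine ⟨fun i j => oo O i j, numC_compat h1, fun x hx hy => ?_, ?_⟩
  · have hxN : x < N := lt_of_le_of_lt (vars_le α x hx) hα
    have := h2 x hxN (by rw [qA_gex, avar_iff]; exact hx) (by rw [qys_gex, lmem_iff, lst_enc]; exact hy)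
    rw [dg_idx _ _ hxN] at this
    exact this
  · rw [qat_gex] at h3
    show V _ _ _
    rw [idx_la hr']
    exact h3

theorem numC_cert (h : cAll N L1 L2 P a b) (hN : 1 < N) : (numC ar N L1 L2 P).Cert := by
  have hcl := numC_closed (ar := ar) h hN
  obtain ⟨-, hU, hB, -⟩ := h
  have hU := fun T : {T : ℕ // T < Gn N ∧ bit P T} => hU T.1 T.2.1 T.2.2
  have hB := fun T T' : {T : ℕ // T < Gn N ∧ bit P T} => hB T.1 T.2.1 T.2.2 T'.1 T'.2.1 T'.2.2
  have hbool : ∀ (T : {T : ℕ // T < Gn N ∧ bit P T}) (χ : GF ⟨ℕ, ar⟩) (l : ℕ → Fin N),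
      χ ∈ (numC ar N L1 L2 P).L → _ := fun T χ l hχ =>
        (hU T).2.2.2.2.1 (encGF χ) hχ.1 hχ.2.1 (idx l) (idx_lt l)
  constructor
  case cl => exact hcl
  case refl => exact fun T i => (numC_EqV T i i).2 ((hU T).1 i i.2)
  case eqa =>
    intro T x y l hL
    have hx : x < N := hcl.fvw _ hL x (by simp [GF.fv, Atomic.vars])
    have hy : y < N := hcl.fvw _ hL y (by simp [GF.fv, Atomic.vars])
    have := (hU T).2.1 _ hL.1 hL.2.1 (by simp [encGF]) (by simp [encGF, encAtom]) (idx l) (idx_lt l)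
    rw [numC_EqV]
    refine this.trans ?_
    simp only [encGF, encAtom, f1_pair, f2_pair]
    rw [dg_idx _ _ hx, dg_idx _ _ hy]
  case cong =>
    intro T
    obtain ⟨O, -, h1, h2⟩ := (hU T).2.2.1
    have := numC_compat (ar := ar) h2
    convert this using 3 with i j
    rw [numC_EqV]
    exact (h1 i i.2 j j.2).symm
  case rel =>
    intro T R ℓ ℓ' l l' h1 h2 he hv
    refine (hU T).2.2.2.1 _ h1.1 _ h2.1 h1.2.1 h2.2.1 (by rw [qA_rel]; exact isRel_enc R ℓ)
      (by rw [qA_rel]; exact isRel_enc R ℓ') _ (idx_lt l) _ (idx_lt l') ?_ hv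
    rw [args_rel, args_rel, llen_ofFn]
    intro k hk
    rw [lget_ofFn _ k hk, lget_ofFn _ k hk]
    have a1 : ℓ ⟨k, hk⟩ < N := hcl.fvw _ h1 _ (by simp [GF.fv, Atomic.vars])
    have a2 : ℓ' ⟨k, hk⟩ < N := hcl.fvw _ h2 _ (by simp [GF.fv, Atomic.vars])
    rw [dg_idx _ _ a1, dg_idx _ _ a2]
    exact (numC_EqV _ _ _).1 (he ⟨k, hk⟩)
  case not' =>
    intro T χ l hL
    have := (hbool T _ l hL).1 (by simp [encGF])
    simp only [encGF, f2_pair] at this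
    exact this
  case and' =>
    intro T χ ξ l hL
    have := (hbool T _ l hL).2.1 (by simp [encGF])
    simp only [encGF, f2_pair, f1_pair] at this
    exact this
  case or' =>
    intro T χ ξ l hL
    have := (hbool T _ l hL).2.2.1 (by simp [encGF])
    simp only [encGF, f2_pair, f1_pair] at this
    exact this
  case gexi =>
    intro T ys α χ l hL
    have := (hbool T _ l hL).2.2.2.1 (by simp [encGF])
    rw [encGF, qat_gex, qch_gex] at this
    exact this
  case galle =>
    intro T ys α χ l hL
    have := (hbool T _ l hL).2.2.2.2 (by simp [encGF])
    rw [encGF, qat_gex, qch_gex] at this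
    exact this
  case gexw =>
    intro T ys α χ l hL hv
    obtain ⟨T', hT, hP, r', hr', h1, h2⟩ := (hU T).2.2.2.2.2.1 _ hL.1 hL.2.1 (by simp [encGF]) _ (idx_lt l) hv
    obtain ⟨O, a1, a2, a3⟩ := nb_abs (T := T) (T' := ⟨T', hT, hP⟩) (ar := ar) ys α χ
      (lt_of_le_of_lt ((le_p2 _ _).trans (enc_gex_a _ _ _ _)) hL.1) l r' hr' h1
    rw [encGF, qch_gex] at h2
    refine ⟨_, O, _, a1, a2, a3, ?_⟩
    show V _ _ _
    rw [idx_la hr']; exact h2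
  case gallw =>
    intro T ys α χ l hL hv
    obtain ⟨T', hT, hP, r', hr', h1, h2⟩ := (hU T).2.2.2.2.2.2.1 _ hL.1 hL.2.1 (by simp [encGF]) _ (idx_lt l) hv
    obtain ⟨O, a1, a2, a3⟩ := nb_abs (T := T) (T' := ⟨T', hT, hP⟩) (ar := ar) ys α χ
      (lt_of_le_of_lt ((le_p2 _ _).trans (enc_gex_a _ _ _ _)) hL.1) l r' hr' h1
    rw [encGF, qch_gex] at h2
    refine ⟨_, O, _, a1, a2, a3, ?_⟩
    show ¬ V _ _ _
    rw [idx_la hr']; exact h2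
  case grel =>
    intro T R hR ℓ l ρ hL hv hρ
    obtain ⟨k, hk, h⟩ := (hU T).2.2.2.2.2.2.2.1 _ hL.1 hL.2.1 (by rw [qA_rel]; exact isRel_enc R ℓ)
      (by rw [qA_rel]; exact hR) _ (idx_lt l) _ (idx_lt ρ) hv (by
        intro m hm
        obtain ⟨k, hk⟩ := hρ m hm
        have a1 : ℓ k < N := hcl.fvw _ hL _ (by simp [GF.fv, Atomic.vars])
        rw [args_rel, llen_ofFn]
        refine ⟨k, k.2, ?_⟩
        rw [lget_ofFn _ _ k.2, dg_idx _ _ hm, dg_idx _ _ a1, hk])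
    exact ⟨⟨k, hk⟩, h⟩
  case gconst =>
    intro T j
    obtain ⟨k, hk, h⟩ := (hU T).2.2.2.2.2.2.2.2.1 j j.2 (idx (fun _ => j)) (idx_lt _)
      (fun x hx => by rw [dg_idx _ _ hx])
    exact ⟨⟨k, hk⟩, h⟩
  case gsub =>
    intro T k ρ hc l
    obtain ⟨k, hk, h⟩ := (hU T).2.2.2.2.2.2.2.2.2 k k.2 _ (idx_lt ρ) hc _ (idx_lt l) _ (idx_lt _) (isCmp_idx ρ l)
    exact ⟨⟨k, hk⟩, h⟩
  case sim =>
    intro T T' k ρ ρ' h1 h2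
    exact numC_sim ((hB T T').1 k k.2 _ (idx_lt _) _ (idx_lt _) h1 h2)
  case ext =>
    intro T T1 k1 k0 ρ ρ' l h1 h2 h3
    obtain ⟨T2, hT, hP, O, -, b1, b2, i, hi, b3, b4⟩ := (hB T T1).2.1 k1 k1.2 k0 k0.2 _ (idx_lt _) _ (idx_lt _) _ (idx_lt l) _
      (idx_lt _) h1 (isCmp_idx ρ' l) h2 h3
    refine ⟨⟨T2, hT, hP⟩, _, numC_compat b1, fun m hm => ?_, ?_⟩
    · have := b2 m hm
      rwa [dg_idx _ _ hm, dg_idx _ _ hm] at this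
    · rw [isId_eq hi b3] at b4; exact b4
  case glob =>
    intro T T1 k0 ρ' h1
    obtain ⟨T2, hT, hP, O, -, b1, i, hi, b3, b4⟩ := (hB T T1).2.2 k0 k0.2 _ (idx_lt _) h1
    refine ⟨⟨T2, hT, hP⟩, _, numC_compat b1, ?_⟩
    rw [isId_eq hi b3] at b4; exact b4

theorem ratoms_of_sig {L : ℕ} (hc : clos N L) (R : ℕ) (χ : GF ⟨ℕ, ar⟩) : encGF χ < N → bit L (encGF χ) →
    R ∈ χ.sig → ratoms N L R := by
  have hat : ∀ α : Atomic ⟨ℕ, ar⟩, encGF (GF.atom α) < N → bit L (encGF (GF.atom α)) → R ∈ α.sig →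
      ratoms N L R := by
    intro α h1 h2 h3
    cases α with
    | eq i j => exact h3.elim
    | rel R' t =>
      obtain rfl : R = R' := h3
      exact ⟨_, h1, h2, isRel_enc _ _⟩
  induction χ with
  | atom α => exact hat α
  | not χ ih =>
    intro h1 h2 h3
    have := (hc _ h1 h2).1 (by simp [encGF])
    simp only [encGF, f2_pair] at this
    exact ih (lt_of_le_of_lt (le_p2 _ _) h1) this h3
  | and χ ξ ih1 ih2 =>
    intro h1 h2 h3
    have := (hc _ h1 h2).2.1 (by simp [encGF])
    simp only [encGF, f2_pair, f1_pair] at this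
    rcases h3 with h3 | h3
    · exact ih1 (lt_of_le_of_lt ((le_p1 _ _).trans (le_p2 _ _)) h1) this.1 h3
    · exact ih2 (lt_of_le_of_lt ((le_p2 _ _).trans (le_p2 _ _)) h1) this.2 h3
  | or χ ξ ih1 ih2 =>
    intro h1 h2 h3
    have := (hc _ h1 h2).2.1 (by simp [encGF])
    simp only [encGF, f2_pair, f1_pair] at this
    rcases h3 with h3 | h3
    · exact ih1 (lt_of_le_of_lt ((le_p1 _ _).trans (le_p2 _ _)) h1) this.1 h3
    · exact ih2 (lt_of_le_of_lt ((le_p2 _ _).trans (le_p2 _ _)) h1) this.2 h3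
  | gex ys α χ ih =>
    intro h1 h2 h3
    have := (hc _ h1 h2).2.2 (by simp [encGF])
    rw [encGF, qat_gex, qch_gex] at this
    rcases h3 with h3 | h3
    · exact hat α (lt_of_le_of_lt (enc_gex_a _ _ _ _) h1) this.1 h3
    · exact ih (lt_of_le_of_lt (enc_gex_c _ _ _ _) h1) this.2 h3
  | gall ys α χ ih =>
    intro h1 h2 h3
    have := (hc _ h1 h2).2.2 (by simp [encGF])
    rw [encGF, qat_gex, qch_gex] at this
    rcases h3 with h3 | h3
    · exact hat α (lt_of_le_of_lt (enc_gex_a _ _ _ _) h1) this.1 h3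
    · exact ih (lt_of_le_of_lt (enc_gex_c _ _ _ _) h1) this.2 h3

theorem num_sound (φ ψ : GF ⟨ℕ, ar⟩) (hφ : φ.WellGuarded) (hψ : ψ.WellGuarded) (hN : 1 < N)
    (h1 : encGF φ < N) (h2 : encGF ψ < N) (h : NumCert N (encGF φ) (encGF ψ)) (n : ℕ) :
    ¬ HasGFInterpolant n φ ψ := by
  obtain ⟨L1, -, L2, -, P, -, h⟩ := h
  obtain ⟨⟨_, e1, e2, c1, c2⟩, -, -, TA, hA, hPA, TB, hB, hPB, i, hi, hid, hs, hv, hv'⟩ := id h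
  rw [isId_eq hi hid] at hs hv hv'
  refine no_interpolant (C := numC ar N L1 L2 P) (numC_cert h hN) ⟨TA, hA, hPA⟩ ⟨TB, hB, hPB⟩ (numC_sim hs) φ ψ
    ⟨h1, Or.inl e1, hφ⟩ ⟨h2, Or.inr e2, hψ⟩ hv hv' ?_ n
  rintro R ⟨a, b⟩
  exact ⟨ratoms_of_sig c1 R φ h1 e1 a, ratoms_of_sig c2 R ψ h2 e2 b⟩

end
end Num
end GFI


namespace GFI
namespace Num
open CData
variable {ar : ℕ → ℕ}

inductive Sb (φ : GF ⟨ℕ, ar⟩) : GF ⟨ℕ, ar⟩ → Prop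
  | self : Sb φ φ
  | not (χ) : Sb φ (.not χ) → Sb φ χ
  | and1 (χ ξ) : Sb φ (.and χ ξ) → Sb φ χ
  | and2 (χ ξ) : Sb φ (.and χ ξ) → Sb φ ξ
  | or1 (χ ξ) : Sb φ (.or χ ξ) → Sb φ χ
  | or2 (χ ξ) : Sb φ (.or χ ξ) → Sb φ ξ
  | gex1 (ys α χ) : Sb φ (.gex ys α χ) → Sb φ (.atom α)
  | gex2 (ys α χ) : Sb φ (.gex ys α χ) → Sb φ χ
  | gall1 (ys α χ) : Sb φ (.gall ys α χ) → Sb φ (.atom α)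
  | gall2 (ys α χ) : Sb φ (.gall ys α χ) → Sb φ χ

theorem Sb.prop {φ χ : GF ⟨ℕ, ar⟩} (hw : φ.WellGuarded) (h : Sb φ χ) :
    χ.WellGuarded ∧ encGF χ ≤ encGF φ ∧ χ.sig ⊆ φ.sig := by
  induction h with
  | self => exact ⟨hw, le_rfl, subset_rfl⟩
  | not χ _ ih => exact ⟨ih.1, (le_p2 _ _).trans ih.2.1, ih.2.2⟩
  | and1 χ ξ _ ih =>
    exact ⟨ih.1.1, ((le_p1 _ _).trans (le_p2 _ _)).trans ih.2.1, Set.subset_union_left.trans ih.2.2⟩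
  | and2 χ ξ _ ih =>
    exact ⟨ih.1.2, ((le_p2 _ _).trans (le_p2 _ _)).trans ih.2.1, Set.subset_union_right.trans ih.2.2⟩
  | or1 χ ξ _ ih =>
    exact ⟨ih.1.1, ((le_p1 _ _).trans (le_p2 _ _)).trans ih.2.1, Set.subset_union_left.trans ih.2.2⟩
  | or2 χ ξ _ ih =>
    exact ⟨ih.1.2, ((le_p2 _ _).trans (le_p2 _ _)).trans ih.2.1, Set.subset_union_right.trans ih.2.2⟩
  | gex1 ys α χ _ ih =>
    exact ⟨trivial, (enc_gex_a _ _ _ _).trans ih.2.1, Set.subset_union_left.trans ih.2.2⟩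
  | gex2 ys α χ _ ih =>
    exact ⟨ih.1.2, (enc_gex_c _ _ _ _).trans ih.2.1, Set.subset_union_right.trans ih.2.2⟩
  | gall1 ys α χ _ ih =>
    exact ⟨trivial, (enc_gex_a _ _ _ _).trans ih.2.1, Set.subset_union_left.trans ih.2.2⟩
  | gall2 ys α χ _ ih =>
    exact ⟨ih.1.2, (enc_gex_c _ _ _ _).trans ih.2.1, Set.subset_union_right.trans ih.2.2⟩

/-- subformulas together with the equality atom -/
def SL (φ : GF ⟨ℕ, ar⟩) : Set (GF ⟨ℕ, ar⟩) := {χ | Sb φ χ ∨ χ = .atom (.eq 0 1)}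

theorem SL_prop {φ χ : GF ⟨ℕ, ar⟩} {N : ℕ} (hw : φ.WellGuarded) (hN : 1 < N) (hφ : encGF φ < N)
    (h : χ ∈ SL φ) : χ.WellGuarded ∧ encGF χ < N ∧ χ.sig ⊆ φ.sig := by
  rcases h with h | rfl
  · obtain ⟨a, b, c⟩ := h.prop hw
    exact ⟨a, lt_of_le_of_lt b hφ, c⟩
  · exact ⟨trivial, by rw [enc_eq01]; exact hN, by simp [GF.sig, Atomic.sig]⟩

/-- closure conditions of a set of formulas -/
structure Clo (L : Set (GF ⟨ℕ, ar⟩)) : Prop where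
  not' : ∀ χ, GF.not χ ∈ L → χ ∈ L
  and' : ∀ χ ξ, GF.and χ ξ ∈ L → χ ∈ L ∧ ξ ∈ L
  or' : ∀ χ ξ, GF.or χ ξ ∈ L → χ ∈ L ∧ ξ ∈ L
  gex' : ∀ ys α χ, GF.gex ys α χ ∈ L → GF.atom α ∈ L ∧ χ ∈ L
  gall' : ∀ ys α χ, GF.gall ys α χ ∈ L → GF.atom α ∈ L ∧ χ ∈ L

theorem SL_clo (φ : GF ⟨ℕ, ar⟩) : Clo (SL φ) := by
  constructor
  · rintro χ (h | h)
    · exact .inl (.not _ h)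
    · cases h
  · rintro χ ξ (h | h)
    · exact ⟨.inl (.and1 _ _ h), .inl (.and2 _ _ h)⟩
    · cases h
  · rintro χ ξ (h | h)
    · exact ⟨.inl (.or1 _ _ h), .inl (.or2 _ _ h)⟩
    · cases h
  · rintro ys α χ (h | h)
    · exact ⟨.inl (.gex1 _ _ _ h), .inl (.gex2 _ _ _ h)⟩
    · cases h
  · rintro ys α χ (h | h)
    · exact ⟨.inl (.gall1 _ _ _ h), .inl (.gall2 _ _ _ h)⟩
    · cases h

theorem Clo.union {L L' : Set (GF ⟨ℕ, ar⟩)} (h : Clo L) (h' : Clo L') : Clo (L ∪ L') := by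
  constructor
  · rintro χ (a | a)
    · exact .inl (h.not' _ a)
    · exact .inr (h'.not' _ a)
  · rintro χ ξ (a | a)
    · exact ⟨.inl (h.and' _ _ a).1, .inl (h.and' _ _ a).2⟩
    · exact ⟨.inr (h'.and' _ _ a).1, .inr (h'.and' _ _ a).2⟩
  · rintro χ ξ (a | a)
    · exact ⟨.inl (h.or' _ _ a).1, .inl (h.or' _ _ a).2⟩
    · exact ⟨.inr (h'.or' _ _ a).1, .inr (h'.or' _ _ a).2⟩
  · rintro ys α χ (a | a)
    · exact ⟨.inl (h.gex' _ _ _ a).1, .inl (h.gex' _ _ _ a).2⟩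
    · exact ⟨.inr (h'.gex' _ _ _ a).1, .inr (h'.gex' _ _ _ a).2⟩
  · rintro ys α χ (a | a)
    · exact ⟨.inl (h.gall' _ _ _ a).1, .inl (h.gall' _ _ _ a).2⟩
    · exact ⟨.inr (h'.gall' _ _ _ a).1, .inr (h'.gall' _ _ _ a).2⟩

theorem SL_closed {φ ψ : GF ⟨ℕ, ar⟩} {N : ℕ} (hφ : φ.WellGuarded) (hψ : ψ.WellGuarded) (hN : 1 < N)
    (h1 : encGF φ < N) (h2 : encGF ψ < N) : ClosedL (SL φ ∪ SL ψ) N := by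
  have hc := (SL_clo φ).union (SL_clo ψ)
  have hp : ∀ χ ∈ SL φ ∪ SL ψ, χ.WellGuarded ∧ encGF χ < N := by
    rintro χ (h | h)
    · exact ⟨(SL_prop hφ hN h1 h).1, (SL_prop hφ hN h1 h).2.1⟩
    · exact ⟨(SL_prop hψ hN h2 h).1, (SL_prop hψ hN h2 h).2.1⟩
  exact ⟨.inl (.inr rfl), fun χ h => (hp χ h).1, hc.1, hc.2, hc.3, hc.4, hc.5,
    fun χ h x hx => lt_of_le_of_lt (fv_le χ x hx) (hp χ h).2⟩

theorem exists_iota (N : ℕ) (L : Set (GF ⟨ℕ, ar⟩)) (hL : ∀ χ ∈ L, encGF χ < N) :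
    ∃ ι : Set (Sem.TTp L N) → Fin (Kn N), Function.Injective ι := by
  classical
  let e : L × (Fin N → Fin N) → Fin N × (Fin N → Fin N) := fun p => (⟨encGF p.1.1, hL _ p.1.2⟩, p.2)
  have he : Function.Injective e := by
    rintro ⟨⟨χ, h⟩, f⟩ ⟨⟨χ', h'⟩, f'⟩ hh
    simp only [e, Prod.mk.injEq, Fin.mk.injEq] at hh
    obtain ⟨a, rfl⟩ := hh
    cases encGF_inj a
    rfl
  have hc : Fintype.card (Set (Set (Fin N × (Fin N → Fin N)))) = Kn N := by
    simp [Kn, Fintype.card_set, Fintype.card_prod]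
  refine ⟨fun k => Fintype.equivFinOfCardEq hc (Set.image (Set.image e) k), ?_⟩
  exact (Equiv.injective _).comp (Set.image_injective.2 (Set.image_injective.2 he))

end Num
end GFI


namespace GFI
namespace Num
open CData
variable {ar : ℕ → ℕ}

theorem isRel_dec {χ : GF ⟨ℕ, ar⟩} {R : ℕ} (h : isRel (encGF χ) R) :
    ∃ ℓ : Fin (ar R) → ℕ, χ = .atom (.rel R ℓ) := by
  obtain ⟨h1, h2, h3⟩ := h
  cases χ with
  | atom α =>
    cases α with
    | eq i j => simp [encGF, encAtom] at h2
    | rel R' ℓ =>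
      simp only [encGF, encAtom, f1_pair, f2_pair] at h3
      subst h3
      exact ⟨ℓ, rfl⟩
  | not _ => simp [encGF] at h1
  | and _ _ => simp [encGF] at h1
  | or _ _ => simp [encGF] at h1
  | gex _ _ _ => simp [encGF] at h1
  | gall _ _ _ => simp [encGF] at h1

theorem ratoms_dec {N L : ℕ} {LA : Set (GF ⟨ℕ, ar⟩)} (b : ∀ c < N, (bit L c ↔ ∃ χ ∈ LA, encGF χ = c))
    {R : ℕ} (h : ratoms N L R) : ∃ ℓ : Fin (ar R) → ℕ, GF.atom (.rel R ℓ) ∈ LA := by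
  obtain ⟨c, hc, hb, hr⟩ := h
  obtain ⟨χ, hχ, rfl⟩ := (b c hc).1 hb
  obtain ⟨ℓ, rfl⟩ := isRel_dec hr
  exact ⟨ℓ, hχ⟩

theorem clos_of {N L : ℕ} {LA : Set (GF ⟨ℕ, ar⟩)} (hc : Clo LA)
    (b : ∀ c < N, (bit L c ↔ ∃ χ ∈ LA, encGF χ = c)) (hlt : ∀ χ ∈ LA, encGF χ < N) : clos N L := by
  intro c hcN hb
  obtain ⟨χ, hχ, rfl⟩ := (b c hcN).1 hb
  have key : ∀ χ ∈ LA, bit L (encGF χ) := fun χ h => (b _ (hlt χ h)).2 ⟨χ, h, rfl⟩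
  cases χ with
  | atom α => simp [encGF]
  | not χ => simpa [encGF] using key _ (hc.not' _ hχ)
  | and χ ξ => simpa [encGF] using ⟨key _ (hc.and' _ _ hχ).1, key _ (hc.and' _ _ hχ).2⟩
  | or χ ξ => simpa [encGF] using ⟨key _ (hc.or' _ _ hχ).1, key _ (hc.or' _ _ hχ).2⟩
  | gex ys α χ =>
    rw [encGF, qat_gex, qch_gex]
    simpa using ⟨key _ (hc.gex' _ _ _ hχ).1, key _ (hc.gex' _ _ _ hχ).2⟩
  | gall ys α χ =>
    rw [encGF, qat_gex, qch_gex]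
    simpa using ⟨key _ (hc.gall' _ _ _ hχ).1, key _ (hc.gall' _ _ _ hχ).2⟩

section
variable {N : ℕ} [NeZero N] {Γ : Type} {κ : Type}

/-- a numerical coding of an abstract certificate -/
structure Setup (C : CData ⟨ℕ, ar⟩ N Γ κ) (LA LB : Set (GF ⟨ℕ, ar⟩)) (L1 L2 P : ℕ)
    (ι : κ → Fin (Kn N)) (t : Γ → ℕ) : Prop where
  cert : C.Cert
  hL : C.L = LA ∪ LB
  cA : Clo LA
  cB : Clo LB
  lt : ∀ χ ∈ C.L, encGF χ < N
  inj : Function.Injective ι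
  cl : ∀ T χ l l', χ ∈ C.L → (∀ x ∈ χ.fv, l x = l' x) → (C.val T (.inl χ) l ↔ C.val T (.inl χ) l')
  cr : ∀ T k l l', (∀ x < N, l x = l' x) → (C.val T (.inr k) l ↔ C.val T (.inr k) l')
  b1 : ∀ c < N, (bit L1 c ↔ ∃ χ ∈ LA, encGF χ = c)
  b2 : ∀ c < N, (bit L2 c ↔ ∃ χ ∈ LB, encGF χ = c)
  v1 : ∀ T χ l, χ ∈ C.L → (V (t T) (encGF χ) (idx l) ↔ C.val T (.inl χ) l)
  v2 : ∀ T k l, k < Kn N → (V (t T) (N + k) (idx l) ↔ ∃ k', ι k' = k ∧ C.val T (.inr k') l)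
  tlt : ∀ T, t T < Gn N
  hP : ∀ T', T' < Gn N → (bit P T' ↔ ∃ T, t T = T')
  hτ : ∀ R, (∃ ℓ, GF.atom (.rel R ℓ) ∈ LA) → (∃ ℓ, GF.atom (.rel R ℓ) ∈ LB) → R ∈ C.τ

theorem surj {r : ℕ} (h : r < Rn N) : ∃ l : ℕ → Fin N, r = idx l := ⟨la N r, (idx_la h).symm⟩

theorem isCmp_dec {m ρ l : ℕ → Fin N} (h : isCmp N (idx m) (idx ρ) (idx l)) :
    ∀ x < N, m x = cmp ρ l x := by
  intro x hx
  have := h x hx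
  rw [dg_idx _ _ hx, dg_idx l _ hx, dg_idx _ _ (l x).2] at this
  exact Fin.ext this

theorem real_O (O : Fin N → Fin N → Prop) : ∃ O' < On N, ∀ i j : Fin N, oo O' i j ↔ O i j := by
  obtain ⟨O', h, h'⟩ := bit_real (Nat.pair N N) (fun q => ∃ i j : Fin N, q = Nat.pair i j ∧ O i j)
  refine ⟨O', h, fun i j => (h' _ (pair_lt i.2 j.2)).trans ⟨?_, fun h => ⟨i, j, rfl, h⟩⟩⟩
  rintro ⟨i', j', e, h⟩
  obtain ⟨e1, e2⟩ := Nat.pair_eq_pair.1 e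
  cases Fin.ext e1
  cases Fin.ext e2
  exact h

namespace Setup
variable {C : CData ⟨ℕ, ar⟩ N Γ κ} {LA LB : Set (GF ⟨ℕ, ar⟩)} {L1 L2 P : ℕ}
    {ι : κ → Fin (Kn N)} {t : Γ → ℕ} (S : Setup C LA LB L1 L2 P ι t)
include S

theorem dec {c : ℕ} (hc : c < N) (h : inL L1 L2 c) : ∃ χ ∈ C.L, encGF χ = c := by
  rw [S.hL]
  rcases h with h | h
  · obtain ⟨χ, a, b⟩ := (S.b1 c hc).1 h
    exact ⟨χ, .inl a, b⟩
  · obtain ⟨χ, a, b⟩ := (S.b2 c hc).1 h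
    exact ⟨χ, .inr a, b⟩

theorem tau_dec {R : ℕ} (h : tau N L1 L2 R) : R ∈ C.τ :=
  S.hτ R (ratoms_dec S.b1 h.1) (ratoms_dec S.b2 h.2)

theorem eqv (T : Γ) (i j : Fin N) : eqN N (t T) i j ↔ C.EqV T i j := by
  rw [eqN_iff, ← enc_eq01 (ar := ar), S.v1 _ _ _ S.cert.cl.eq01]; rfl

theorem colk (T : Γ) (k : κ) (l : ℕ → Fin N) : col N (t T) (ι k) (idx l) ↔ C.col T k l := by
  refine (S.v2 T _ l (ι k).2).trans ⟨?_, fun h => ⟨k, rfl, h⟩⟩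
  rintro ⟨k', e, h⟩
  cases S.inj (Fin.ext e)
  exact h

theorem cold {T : Γ} {k : ℕ} {l : ℕ → Fin N} (hk : k < Kn N) (h : col N (t T) k (idx l)) :
    ∃ k', ι k' = k ∧ C.col T k' l := (S.v2 T _ l hk).1 h

theorem has {T : Γ} {l : ℕ → Fin N} (h : ∃ k, C.col T k l) : hasCol N (t T) (idx l) := by
  obtain ⟨k, h⟩ := h
  exact ⟨ι k, (ι k).2, (S.colk T k l).2 h⟩

theorem colId_of {T : Γ} {k : κ} (h : C.col T k idA) : colId N (t T) (ι k) :=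
  ⟨_, idx_lt _, isId_idx, (S.colk T k _).2 h⟩

theorem compat_of {T T' : Γ} {O : Fin N → Fin N → Prop} {O' : ℕ} (hO : ∀ i j : Fin N, oo O' i j ↔ O i j)
    (h : C.Compat T O T') : compat N L1 L2 (t T) O' (t T') := by
  intro c hc hf r hr r' hr' hs
  obtain ⟨l, rfl⟩ := surj hr
  obtain ⟨l', rfl⟩ := surj hr'
  by_cases hcN : N ≤ c
  · obtain ⟨k, rfl⟩ := Nat.exists_eq_add_of_le hcN
    rw [S.v2 _ _ _ (by omega), S.v2 _ _ _ (by omega)]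
    refine exists_congr fun k' => and_congr_right fun _ => ?_
    refine h (.inr k') trivial l l' fun x hx => ?_
    have := hs x hx (.inl hcN)
    rw [dg_idx _ _ hx, dg_idx _ _ hx] at this
    exact (hO _ _).1 this
  · rcases hf with hf | ⟨hi, ht⟩
    · exact (hcN hf).elim
    obtain ⟨χ, hχ, rfl⟩ := S.dec (by omega) hi
    have hb : isBase χ := by
      cases χ <;> first | trivial | (simp [encGF] at ht)
    rw [S.v1 _ _ _ hχ, S.v1 _ _ _ hχ]
    refine h (.inl χ) ⟨hχ, hb⟩ l l' fun x hx => ?_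
    have hxN := S.cert.cl.fvw χ hχ x hx
    have := hs x hxN ((supp_iff χ (S.cert.cl.wg χ hχ) hb (S.lt χ hχ) x).2 hx)
    rw [dg_idx _ _ hxN, dg_idx _ _ hxN] at this
    exact (hO _ _).1 this

theorem sim_of {T T' : Γ} {ρ ρ' : ℕ → Fin N} (h : C.Sim T ρ T' ρ') :
    sim N L1 L2 (t T) (idx ρ) (t T') (idx ρ') := by
  refine ⟨?_, ?_, ?_⟩
  · intro k hk l hl m hm m' hm' c1 c2
    obtain ⟨l, rfl⟩ := surj hl
    obtain ⟨m, rfl⟩ := surj hm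
    obtain ⟨m', rfl⟩ := surj hm'
    refine (S.v2 _ _ _ hk).trans (Iff.trans ?_ (S.v2 _ _ _ hk).symm)
    refine exists_congr fun k' => and_congr_right fun _ => ?_
    rw [S.cr _ _ _ _ (isCmp_dec c1), S.cr _ _ _ _ (isCmp_dec c2)]
    exact h.col k' l
  · intro i hi j hj
    rw [dg_idx _ _ hi, dg_idx _ _ hi, dg_idx _ _ hj, dg_idx _ _ hj, S.eqv, S.eqv]
    exact h.eq ⟨i, hi⟩ ⟨j, hj⟩
  · intro c hc hi hr hτ l hl m hm m' hm' c1 c2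
    obtain ⟨l, rfl⟩ := surj hl
    obtain ⟨m, rfl⟩ := surj hm
    obtain ⟨m', rfl⟩ := surj hm'
    obtain ⟨χ, hχ, rfl⟩ := S.dec hc hi
    obtain ⟨ℓ, e⟩ := isRel_dec hr
    generalize qA (encGF χ) = R at *
    subst e
    rw [S.v1 _ _ _ hχ, S.v1 _ _ _ hχ,
      S.cl _ _ _ _ hχ fun x hx => isCmp_dec c1 x (S.cert.cl.fvw _ hχ x hx),
      S.cl _ _ _ _ hχ fun x hx => isCmp_dec c2 x (S.cert.cl.fvw _ hχ x hx)]
    exact h.rel _ (S.tau_dec hτ) ℓ hχ l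

theorem nb_of {T T' : Γ} {O : Fin N → Fin N → Prop} {l l' : ℕ → Fin N} (q : ℕ) (ys : List ℕ)
    (α : Atomic ⟨ℕ, ar⟩) (χ : GF ⟨ℕ, ar⟩) (hα : GF.atom α ∈ C.L) (h1 : C.Compat T O T')
    (h2 : ∀ x ∈ α.vars, x ∉ ys → O (l x) (l' x)) (h3 : C.val T' (.inl (.atom α)) l') :
    nb N L1 L2 (t T) (t T') (Nat.pair q (Nat.pair (Encodable.encode ys) (Nat.pair (encAtom α) (encGF χ))))
      (idx l) (idx l') := by
  obtain ⟨O', hl, hO⟩ := real_O O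
  refine ⟨O', hl, S.compat_of hO h1, fun x hx a b => ?_, ?_⟩
  · rw [qA_gex, avar_iff] at a
    rw [qys_gex, lmem_iff, lst_enc] at b
    rw [dg_idx _ _ hx, dg_idx _ _ hx]
    exact (hO _ _).2 (h2 x a b)
  · rw [qat_gex]; exact (S.v1 _ _ _ hα).2 h3

theorem bitP (T : Γ) : bit P (t T) := (S.hP _ (S.tlt T)).2 ⟨T, rfl⟩

theorem un (T : Γ) : cUn N L1 L2 P (t T) := by
  have H := S.cert
  refine ⟨?_, ?_, ?_, ?_, ?_, ?_, ?_, ?_, ?_, ?_⟩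
  · exact fun i hi => (S.eqv T ⟨i, hi⟩ ⟨i, hi⟩).2 (H.refl T _)
  · intro c hc hi h0 h1 r hr
    obtain ⟨l, rfl⟩ := surj hr
    obtain ⟨χ, hχ, rfl⟩ := S.dec hc hi
    cases χ with
    | atom α =>
      cases α with
      | rel R ℓ => simp [encGF, encAtom] at h1
      | eq x y =>
        have hx : x < N := H.cl.fvw _ hχ x (by simp [GF.fv, Atomic.vars])
        have hy : y < N := H.cl.fvw _ hχ y (by simp [GF.fv, Atomic.vars])
        rw [S.v1 _ _ _ hχ, H.eqa T x y l hχ]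
        simp only [encGF, encAtom, f1_pair, f2_pair]
        rw [dg_idx _ _ hx, dg_idx _ _ hy, S.eqv]
    | not _ => simp [encGF] at h0
    | and _ _ => simp [encGF] at h0
    | or _ _ => simp [encGF] at h0
    | gex _ _ _ => simp [encGF] at h0
    | gall _ _ _ => simp [encGF] at h0
  · obtain ⟨O', hl, hO⟩ := real_O (C.EqV T)
    exact ⟨O', hl, fun i hi j hj => (hO ⟨i, hi⟩ ⟨j, hj⟩).trans (S.eqv T ⟨i, hi⟩ ⟨j, hj⟩).symm,
      S.compat_of hO (H.cong T)⟩
  · intro c hc c' hc' hi hi' hR hR' r hr r' hr' he hv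
    obtain ⟨l, rfl⟩ := surj hr
    obtain ⟨l', rfl⟩ := surj hr'
    obtain ⟨χ, hχ, rfl⟩ := S.dec hc hi
    obtain ⟨χ', hχ', rfl⟩ := S.dec hc' hi'
    obtain ⟨ℓ, e⟩ := isRel_dec hR
    obtain ⟨ℓ', e'⟩ := isRel_dec hR'
    generalize qA (encGF χ) = R at *
    subst e e'
    rw [S.v1 _ _ _ hχ] at hv
    rw [S.v1 _ _ _ hχ']
    refine H.rel T R ℓ ℓ' l l' hχ hχ' (fun k => ?_) hv
    have := he k (by rw [args_rel, llen_ofFn]; exact k.2)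
    rw [args_rel, args_rel, lget_ofFn _ k k.2, lget_ofFn _ k k.2] at this
    have a1 : ℓ k < N := H.cl.fvw _ hχ _ (by simp [GF.fv, Atomic.vars])
    have a2 : ℓ' k < N := H.cl.fvw _ hχ' _ (by simp [GF.fv, Atomic.vars])
    rw [dg_idx _ _ a1, dg_idx _ _ a2, S.eqv] at this
    exact this
  · intro c hc hi r hr
    obtain ⟨l, rfl⟩ := surj hr
    obtain ⟨χ, hχ, rfl⟩ := S.dec hc hi
    rw [S.v1 _ _ _ hχ]
    cases χ with
    | atom α => simp [encGF]
    | not χ =>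
      have a := H.cl.not' _ hχ
      simpa [encGF, S.v1 _ _ _ a] using H.not' T χ l hχ
    | and χ ξ =>
      obtain ⟨a, b⟩ := H.cl.and' _ _ hχ
      simpa [encGF, S.v1 _ _ _ a, S.v1 _ _ _ b] using H.and' T χ ξ l hχ
    | or χ ξ =>
      obtain ⟨a, b⟩ := H.cl.or' _ _ hχ
      simpa [encGF, S.v1 _ _ _ a, S.v1 _ _ _ b] using H.or' T χ ξ l hχ
    | gex ys α χ =>
      obtain ⟨a, b⟩ := H.cl.gex' _ _ _ hχ
      rw [encGF, qat_gex, qch_gex, S.v1 _ _ _ a, S.v1 _ _ _ b]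
      simpa using H.gexi T ys α χ l hχ
    | gall ys α χ =>
      obtain ⟨a, b⟩ := H.cl.gall' _ _ _ hχ
      rw [encGF, qat_gex, qch_gex, S.v1 _ _ _ a, S.v1 _ _ _ b]
      simpa using H.galle T ys α χ l hχ
  · intro c hc hi h4 r hr hv
    obtain ⟨l, rfl⟩ := surj hr
    obtain ⟨χ, hχ, rfl⟩ := S.dec hc hi
    rw [S.v1 _ _ _ hχ] at hv
    cases χ with
    | gex ys α χ =>
      obtain ⟨a, b⟩ := H.cl.gex' _ _ _ hχ
      obtain ⟨T', O, l', e1, e2, e3, e4⟩ := H.gexw T ys α χ l hχ hv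
      refine ⟨t T', S.tlt _, S.bitP _, idx l', idx_lt _, S.nb_of 4 ys α χ a e1 e2 e3, ?_⟩
      rw [encGF, qch_gex, S.v1 _ _ _ b]
      exact e4
    | atom _ => simp [encGF] at h4
    | not _ => simp [encGF] at h4
    | and _ _ => simp [encGF] at h4
    | or _ _ => simp [encGF] at h4
    | gall _ _ _ => simp [encGF] at h4
  · intro c hc hi h4 r hr hv
    obtain ⟨l, rfl⟩ := surj hr
    obtain ⟨χ, hχ, rfl⟩ := S.dec hc hi
    rw [S.v1 _ _ _ hχ] at hv
    cases χ with
    | gall ys α χ =>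
      obtain ⟨a, b⟩ := H.cl.gall' _ _ _ hχ
      obtain ⟨T', O, l', e1, e2, e3, e4⟩ := H.gallw T ys α χ l hχ hv
      refine ⟨t T', S.tlt _, S.bitP _, idx l', idx_lt _, S.nb_of 5 ys α χ a e1 e2 e3, ?_⟩
      rw [encGF, qch_gex, S.v1 _ _ _ b]
      exact e4
    | atom _ => simp [encGF] at h4
    | not _ => simp [encGF] at h4
    | and _ _ => simp [encGF] at h4
    | or _ _ => simp [encGF] at h4
    | gex _ _ _ => simp [encGF] at h4
  · intro c hc hi hR hτ r hr ρ hρ hv hm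
    obtain ⟨l, rfl⟩ := surj hr
    obtain ⟨ρ, rfl⟩ := surj hρ
    obtain ⟨χ, hχ, rfl⟩ := S.dec hc hi
    obtain ⟨ℓ, e⟩ := isRel_dec hR
    generalize qA (encGF χ) = R at *
    subst e
    rw [S.v1 _ _ _ hχ] at hv
    refine S.has (H.grel T R (S.tau_dec hτ) ℓ l ρ hχ hv fun m hmN => ?_)
    obtain ⟨k, hk, h⟩ := hm m hmN
    rw [args_rel, llen_ofFn] at hk
    have a1 : ℓ ⟨k, hk⟩ < N := H.cl.fvw _ hχ _ (by simp [GF.fv, Atomic.vars])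
    rw [args_rel, lget_ofFn _ k hk, dg_idx _ _ hmN, dg_idx _ _ a1] at h
    exact ⟨⟨k, hk⟩, Fin.ext h⟩
  · intro j hj ρ hρ h
    obtain ⟨ρ, rfl⟩ := surj hρ
    obtain ⟨k, hk⟩ := H.gconst T ⟨j, hj⟩
    refine S.has ⟨k, (S.cr _ _ _ _ fun x hx => ?_).1 hk⟩
    have := h x hx
    rw [dg_idx _ _ hx] at this
    exact Fin.ext this.symm
  · intro k hk ρ hρ hc l hl m hm hcm
    obtain ⟨ρ, rfl⟩ := surj hρ
    obtain ⟨l, rfl⟩ := surj hl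
    obtain ⟨m, rfl⟩ := surj hm
    obtain ⟨k', -, hk'⟩ := S.cold hk hc
    obtain ⟨k2, h2⟩ := H.gsub T k' ρ hk' l
    exact S.has ⟨k2, (S.cr _ _ _ _ (isCmp_dec hcm)).2 h2⟩

theorem bin (T T' : Γ) : cBin N L1 L2 P (t T) (t T') := by
  have H := S.cert
  refine ⟨?_, ?_, ?_⟩
  · intro k hk ρ hρ ρ' hρ' h1 h2
    obtain ⟨ρ, rfl⟩ := surj hρ
    obtain ⟨ρ', rfl⟩ := surj hρ'
    obtain ⟨k1, rfl, g1⟩ := S.cold hk h1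
    rw [S.colk] at h2
    exact S.sim_of (H.sim _ _ _ _ _ g1 h2)
  · intro k1 hk1 k0 hk0 ρ hρ ρ' hρ' l hl m hm h1 hc h2 h3
    obtain ⟨ρ, rfl⟩ := surj hρ
    obtain ⟨ρ', rfl⟩ := surj hρ'
    obtain ⟨l, rfl⟩ := surj hl
    obtain ⟨m, rfl⟩ := surj hm
    obtain ⟨k1, rfl, g1⟩ := S.cold hk1 h1
    obtain ⟨k0, rfl, g3⟩ := S.cold hk0 h3
    rw [S.colk] at h2
    obtain ⟨T2, O, e1, e2, e3⟩ := H.ext T T' k1 k0 ρ ρ' l g1 ((S.cr _ _ _ _ (isCmp_dec hc)).1 h2) g3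
    obtain ⟨O', hl, hO⟩ := real_O O
    refine ⟨t T2, S.tlt _, S.bitP _, O', hl, S.compat_of hO e1, fun x hx => ?_, S.colId_of e3⟩
    rw [dg_idx _ _ hx, dg_idx _ _ hx]
    exact (hO _ _).2 (e2 x hx)
  · intro k0 hk0 ρ' hρ' h1
    obtain ⟨ρ', rfl⟩ := surj hρ'
    obtain ⟨k0, rfl, g1⟩ := S.cold hk0 h1
    obtain ⟨T2, O, e1, e3⟩ := H.glob T T' k0 ρ' g1
    obtain ⟨O', hl, hO⟩ := real_O O
    exact ⟨t T2, S.tlt _, S.bitP _, O', hl, S.compat_of hO e1, S.colId_of e3⟩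

theorem all {φ ψ : GF ⟨ℕ, ar⟩} (hφ : φ ∈ LA) (hψ : ψ ∈ LB) (h01 : GF.atom (.eq 0 1) ∈ LA)
    (TA TB : Γ) (hs : C.Sim TA idA TB idA)
    (hv : C.val TA (.inl φ) idA) (hv' : ¬ C.val TB (.inl ψ) idA) :
    cAll N L1 L2 P (encGF φ) (encGF ψ) := by
  have hA : ∀ χ ∈ LA, encGF χ < N := fun χ h => S.lt χ (by rw [S.hL]; exact .inl h)
  have hB : ∀ χ ∈ LB, encGF χ < N := fun χ h => S.lt χ (by rw [S.hL]; exact .inr h)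
  refine ⟨⟨?_, (S.b1 _ (hA _ hφ)).2 ⟨_, hφ, rfl⟩, (S.b2 _ (hB _ hψ)).2 ⟨_, hψ, rfl⟩,
    clos_of S.cA S.b1 hA, clos_of S.cB S.b2 hB⟩, ?_, ?_, ?_⟩
  · have := (S.b1 _ (hA _ h01)).2 ⟨_, h01, rfl⟩
    rwa [enc_eq01] at this
  · intro T hT hb
    obtain ⟨T, rfl⟩ := (S.hP T hT).1 hb
    exact S.un T
  · intro T hT hb T' hT' hb'
    obtain ⟨T, rfl⟩ := (S.hP T hT).1 hb
    obtain ⟨T', rfl⟩ := (S.hP T' hT').1 hb'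
    exact S.bin T T'
  · refine ⟨t TA, S.tlt _, S.bitP _, t TB, S.tlt _, S.bitP _, idx idA, idx_lt _, isId_idx, S.sim_of hs, ?_, ?_⟩
    · exact (S.v1 _ _ _ (by rw [S.hL]; exact .inl hφ)).2 hv
    · exact fun h => hv' ((S.v1 _ _ _ (by rw [S.hL]; exact .inr hψ)).1 h)

end Setup

theorem table (C : CData ⟨ℕ, ar⟩ N Γ κ) (hcl : ClosedL C.L N) (lt : ∀ χ ∈ C.L, encGF χ < N)
    (ι : κ → Fin (Kn N))
    (cl : ∀ T χ l l', χ ∈ C.L → (∀ x ∈ χ.fv, l x = l' x) → (C.val T (.inl χ) l ↔ C.val T (.inl χ) l'))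
    (cr : ∀ T k l l', (∀ x < N, l x = l' x) → (C.val T (.inr k) l ↔ C.val T (.inr k) l')) (T : Γ) :
    ∃ t < Gn N, (∀ χ l, χ ∈ C.L → (V t (encGF χ) (idx l) ↔ C.val T (.inl χ) l)) ∧
      ∀ k l, k < Kn N → (V t (N + k) (idx l) ↔ ∃ k', ι k' = k ∧ C.val T (.inr k') l) := by
  obtain ⟨t, ht, h⟩ := bit_real (Nat.pair (N + Kn N) (Rn N)) (fun i =>
    (∃ χ ∈ C.L, encGF χ = f1 i ∧ C.val T (.inl χ) (la N (f2 i))) ∨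
    (∃ k, f1 i = N + ι k ∧ C.val T (.inr k) (la N (f2 i))))
  refine ⟨t, ht, fun χ l hχ => ?_, fun k l hk => ?_⟩
  · have hlt := lt χ hχ
    refine (h _ (pair_lt (by omega) (idx_lt l))).trans ?_
    simp only [f1_pair, f2_pair]
    constructor
    · rintro (⟨χ', h', e, hv⟩ | ⟨k, e, -⟩)
      · cases encGF_inj e
        exact (cl _ _ _ _ hχ fun x hx => la_idx l x (hcl.fvw _ hχ x hx)).1 hv
      · omega
    · exact fun hv => .inl ⟨χ, hχ, rfl, (cl _ _ _ _ hχ fun x hx => la_idx l x (hcl.fvw _ hχ x hx)).2 hv⟩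
  · refine (h _ (pair_lt (by omega) (idx_lt l))).trans ?_
    simp only [f1_pair, f2_pair]
    constructor
    · rintro (⟨χ', h', e, hv⟩ | ⟨k', e, hv⟩)
      · have := lt χ' h'
        omega
      · exact ⟨k', by omega, (cr _ _ _ _ fun x hx => la_idx l x hx).1 hv⟩
    · rintro ⟨k', e, hv⟩
      exact .inr ⟨k', by omega, (cr _ _ _ _ fun x hx => la_idx l x hx).2 hv⟩

end

theorem num_complete {N : ℕ} [NeZero N] (φ ψ : GF ⟨ℕ, ar⟩) (hφ : φ.WellGuarded) (hψ : ψ.WellGuarded) (hN : 1 < N)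
    (h1 : encGF φ < N) (h2 : encGF ψ < N) (n : ℕ) (f1 : φ.fv ⊆ Finset.range n) (f2 : ψ.fv ⊆ Finset.range n)
    (h : ¬ HasGFInterpolant n φ ψ) : NumCert N (encGF φ) (encGF ψ) := by
  have hcl := SL_closed hφ hψ hN h1 h2
  have hφL : φ ∈ SL φ := .inl .self
  have hψL : ψ ∈ SL ψ := .inl .self
  obtain ⟨S, TA, TB, hC, hs, hv, hv'⟩ := Sem.root_exists n φ ψ f1 f2 hcl (.inl hφL) (.inr hψL) h
  have hlt : ∀ χ ∈ SL φ ∪ SL ψ, encGF χ < N := by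
    rintro χ (h | h)
    · exact (SL_prop hφ hN h1 h).2.1
    · exact (SL_prop hψ hN h2 h).2.1
  obtain ⟨ι, hι⟩ := exists_iota N (SL φ ∪ SL ψ) hlt
  have cl : ∀ T χ l l', χ ∈ SL φ ∪ SL ψ → (∀ x ∈ χ.fv, l x = l' x) →
      ((Sem.semC N S (φ.sig ∩ ψ.sig) (SL φ ∪ SL ψ)).val T (.inl χ) l ↔
        (Sem.semC N S (φ.sig ∩ ψ.sig) (SL φ ∪ SL ψ)).val T (.inl χ) l') :=
    fun T χ l l' _ h => by
      have := Sem.sv_congr T χ l l' h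
      exact this
  have cr : ∀ T k l l', (∀ x < N, l x = l' x) →
      ((Sem.semC N S (φ.sig ∩ ψ.sig) (SL φ ∪ SL ψ)).val T (.inr k) l ↔
        (Sem.semC N S (φ.sig ∩ ψ.sig) (SL φ ∪ SL ψ)).val T (.inr k) l') :=
    fun T k l l' h => by
      have := Sem.col_congr (τ := φ.sig ∩ ψ.sig) (L := SL φ ∪ SL ψ) T k l l' h
      exact this
  obtain ⟨L1, hL1, b1⟩ := bit_real N (fun c => ∃ χ ∈ SL φ, encGF χ = c)
  obtain ⟨L2, hL2, b2⟩ := bit_real N (fun c => ∃ χ ∈ SL ψ, encGF χ = c)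
  choose t ht v1 v2 using table (Sem.semC N S (φ.sig ∩ ψ.sig) (SL φ ∪ SL ψ)) hcl hlt ι cl cr
  obtain ⟨P, hP, hP'⟩ := bit_real (Gn N) (fun T' => ∃ T, t T = T')
  have ST : Setup (Sem.semC N S (φ.sig ∩ ψ.sig) (SL φ ∪ SL ψ)) (SL φ) (SL ψ) L1 L2 P ι t := by
    refine ⟨hC, rfl, SL_clo φ, SL_clo ψ, hlt, hι, cl, cr, b1, b2, v1, v2, ht, hP', ?_⟩
    rintro R ⟨ℓ, a⟩ ⟨ℓ', b⟩
    exact ⟨(SL_prop hφ hN h1 a).2.2 (Set.mem_singleton R), (SL_prop hψ hN h2 b).2.2 (Set.mem_singleton R)⟩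
  exact ⟨L1, hL1, L2, hL2, P, hP, ST.all hφL hψL (.inr rfl) TA TB hs hv hv'⟩

end Num
end GFI


namespace GFI
namespace Num

theorem pr_NumCert {g1 g2 g3 : ℕ → ℕ} (h1 : Primrec g1) (h2 : Primrec g2) (h3 : Primrec g3) :
    PrimrecPred fun a => NumCert (g1 a) (g2 a) (g3 a) := by
  unfold NumCert
  have e1 := h1.comp (pr_fst (pr_id (α := ℕ × ℕ)))
  refine pr_ex (pr_pow (Primrec.const 2) h1) ?_
  refine pr_ex (pr_pow (Primrec.const 2) (h1.comp (pr_fst pr_id))) ?_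
  refine pr_ex (pr_pow (Primrec.const 2) (pr_Gn (h1.comp (pr_fst (pr_fst pr_id))))) ?_
  exact pr_cAll (h1.comp (pr_fst (pr_fst (pr_fst pr_id)))) (pr_snd (pr_fst (pr_fst pr_id)))
    (pr_snd (pr_fst pr_id)) (pr_snd pr_id) (h2.comp (pr_fst (pr_fst (pr_fst pr_id))))
    (h3.comp (pr_fst (pr_fst (pr_fst pr_id))))

theorem decider : ∃ f : ℕ → Bool, Computable f ∧ ∀ n a b : ℕ,
    (f (Nat.pair n (Nat.pair a b)) = true ↔ ¬ NumCert (a + b + 2) a b) := by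
  have ha : Primrec fun x : ℕ => f1 (f2 x) := pr_f1 (pr_f2 pr_id)
  have hb : Primrec fun x : ℕ => f2 (f2 x) := pr_f2 (pr_f2 pr_id)
  have h := pr_not (pr_NumCert (pr_add (pr_add ha hb) (Primrec.const 2)) ha hb)
  obtain ⟨inst, h⟩ := h
  refine ⟨_, h.to_comp, fun n a b => ?_⟩
  simp

end Num
end GFI

/-- GF-interpolant existence is decidable: over any computable
relational signature there is a computable (total) function deciding, given
(codes of) GF-formulas `φ(x)` and `ψ(x)`, whether there exists a GF-formula
`θ(x)` with `sig θ ⊆ sig φ ∩ sig ψ`, `φ ⊨ θ` and `θ ⊨ ψ`. -/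
theorem gf_interpolant_existence_decidable (ar : ℕ → ℕ) (har : Computable ar) :
    ∃ f : ℕ → Bool, Computable f ∧
      ∀ (n : ℕ) (φ ψ : GF ⟨ℕ, ar⟩), φ.WellGuarded → ψ.WellGuarded →
        φ.fv ⊆ Finset.range n → ψ.fv ⊆ Finset.range n → φ.fv = ψ.fv →
        (f (Nat.pair n (Nat.pair (encGF φ) (encGF ψ))) = true ↔
          HasGFInterpolant n φ ψ) := by
  obtain ⟨f, hf, h⟩ := GFI.Num.decider
  refine ⟨f, hf, fun n φ ψ hφ hψ f1 f2 _ => ?_⟩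
  rw [h]
  constructor
  · intro hn
    by_contra hi
    exact hn (GFI.Num.num_complete φ ψ hφ hψ (by omega) (by omega) (by omega) n f1 f2 hi)
  · intro hi hn
    exact GFI.Num.num_sound φ ψ hφ hψ (by omega) (by omega) (by omega) hn n hi
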